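/- Let K be an algebraically closed field, S = K[X_0,…,X_n] the standard graded polynomial ring, and < a monomial order on S with X_0 > X_1 > ⋯ > X_n. Let I ⊆ S be a homogeneous ideal such that in_<(I) = I_Δ is the Stanley–Reisner ideal of a 1-dimensional simplicial complex (graph) Δ on vertex set {0,…,n} in which every i ∈ {0,…,n} is a vertex. If X = V(I) ⊆ P^n is a connected projective curve that is nonsingular, then Δ is a tree. -/

import Mathlib

open MvPolynomial

/-- The leading exponent (multidegree) of a multivariate polynomial with respect to a
monomial order: the maximum of its support. (It is `0` for the zero polynomial.) -/
noncomputable def MonomialOrder.mdeg {σ : Type*} (m : MonomialOrder σ) {R : Type*}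
    [CommSemiring R] (f : MvPolynomial σ R) : σ →₀ ℕ :=
  m.toSyn.symm (f.support.sup fun e => m.toSyn e)

/-- The initial ideal of an ideal `I` with respect to a monomial order. -/
noncomputable def initialIdeal {σ : Type*} {K : Type*} [Field K] (m : MonomialOrder σ)
    (I : Ideal (MvPolynomial σ K)) : Ideal (MvPolynomial σ K) :=
  Ideal.span {g | ∃ f ∈ I, f ≠ 0 ∧ g = monomial (m.mdeg f) (1 : K)}

/-- A monomial order on `X_0, …, X_n` satisfies `X_0 > X_1 > ⋯ > X_n`. -/
def MonomialOrder.Descending {n : ℕ} (m : MonomialOrder (Fin (n + 1))) : Prop :=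
  ∀ i j : Fin (n + 1), i < j →
    m.toSyn (Finsupp.single j 1) < m.toSyn (Finsupp.single i 1)

/-- An ideal is homogeneous (w.r.t. the standard grading) iff it contains all homogeneous
components of its elements. -/
def IsHomog {σ : Type*} {K : Type*} [Field K] (I : Ideal (MvPolynomial σ K)) : Prop :=
  ∀ f ∈ I, ∀ d : ℕ, homogeneousComponent d f ∈ I

/-- An abstract simplicial complex on the vertex set `{0, …, n}`. -/
structure SComplex (n : ℕ) where
  faces : Set (Finset (Fin (n + 1)))
  down_closed : ∀ {s t : Finset (Fin (n + 1))}, s ∈ faces → t ⊆ s → t ∈ faces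

/-- A simplicial complex is 1-dimensional (a graph) if all faces have at most 2 vertices and
some face has exactly 2 vertices. -/
def SComplex.IsGraph {n : ℕ} (Δ : SComplex n) : Prop :=
  (∀ s ∈ Δ.faces, s.card ≤ 2) ∧ ∃ s ∈ Δ.faces, s.card = 2

/-- The Stanley–Reisner ideal of a simplicial complex: generated by the squarefree monomials
`X_σ = ∏_{i ∈ σ} X_i` for the non-faces `σ`. -/
noncomputable def SComplex.srIdeal {n : ℕ} (K : Type*) [Field K] (Δ : SComplex n) :
    Ideal (MvPolynomial (Fin (n + 1)) K) :=
  Ideal.span {g | ∃ s : Finset (Fin (n + 1)), s ∉ Δ.faces ∧ g = ∏ i ∈ s, X i}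

/-- The simple graph underlying a 1-dimensional simplicial complex. -/
def SComplex.graph {n : ℕ} (Δ : SComplex n) : SimpleGraph (Fin (n + 1)) :=
  SimpleGraph.fromRel fun i j => ({i, j} : Finset (Fin (n + 1))) ∈ Δ.faces

/-- The (vector representatives of the) points of the projective variety `V(I) ⊆ ℙⁿ`. -/
def projZeros {n : ℕ} {K : Type*} [Field K] (I : Ideal (MvPolynomial (Fin (n + 1)) K)) :
    Set (Fin (n + 1) → K) :=
  {x | x ≠ 0 ∧ ∀ f ∈ I, eval x f = 0}

/-- The rank at the point `x` of the Jacobian matrix of the ideal `I`, i.e. the dimension of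
the span of the gradients at `x` of all elements of `I`. -/
noncomputable def jacobianRank {n : ℕ} {K : Type*} [Field K]
    (I : Ideal (MvPolynomial (Fin (n + 1)) K)) (x : Fin (n + 1) → K) : ℕ :=
  Module.finrank K
    (Submodule.span K {v : Fin (n + 1) → K | ∃ f ∈ I, v = fun i => eval x (pderiv i f)})

/-- The projective variety `V(I)` is connected: it is nonempty and cannot be written as the
union of two disjoint nonempty closed subsets (cut out by homogeneous ideals). -/
def IsConnectedProjVariety {n : ℕ} {K : Type*} [Field K]
    (I : Ideal (MvPolynomial (Fin (n + 1)) K)) : Prop :=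
  (projZeros I).Nonempty ∧
    ∀ J₁ J₂ : Ideal (MvPolynomial (Fin (n + 1)) K), IsHomog J₁ → IsHomog J₂ →
      projZeros I ⊆ projZeros J₁ ∪ projZeros J₂ →
      projZeros I ∩ (projZeros J₁ ∩ projZeros J₂) = ∅ →
      projZeros I ⊆ projZeros J₁ ∨ projZeros I ⊆ projZeros J₂


lemma gordan_aux {ι : Type*} [Fintype ι] [DecidableEq ι] (Pos : (ι → ℚ) → Prop)
    (hadd : ∀ a b, Pos a → Pos b → Pos (a + b))
    (hsmul : ∀ (c : ℚ) a, 0 < c → Pos a → Pos (c • a)) (h0 : ¬ Pos 0) (T : Finset ι) :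
    ∀ D : Finset (ι → ℚ), (∀ d ∈ D, Pos d ∧ ∀ j ∉ T, d j = 0) →
      ∃ w : ι → ℚ, ∀ d ∈ D, 0 < ∑ j, w j * d j := by
  induction T using Finset.induction_on with
  | empty =>
    intro D hD
    refine ⟨0, fun d hd => ?_⟩
    obtain ⟨h1, h2⟩ := hD d hd
    have : d = 0 := by ext j; simpa using h2 j
    exact absurd (this ▸ h1) h0
  | insert N T hN ih =>
    intro D hD
    obtain ⟨w', hw'⟩ := ih (D.filter (fun d => d N = 0) ∪
      ((D.filter (fun d => 0 < d N)) ×ˢ (D.filter (fun d => d N < 0))).image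
        (fun pq => (pq.1 N) • pq.2 + (-(pq.2 N)) • pq.1)) (by
      intro d hd
      rw [Finset.mem_union] at hd
      rcases hd with hd | hd
      · rw [Finset.mem_filter] at hd
        refine ⟨(hD d hd.1).1, fun j hj => ?_⟩
        by_cases hjN : j = N
        · rw [hjN, hd.2]
        · exact (hD d hd.1).2 j (by simp [hjN, hj])
      · rw [Finset.mem_image] at hd
        obtain ⟨⟨p, q⟩, hpq, rfl⟩ := hd
        simp only [Finset.mem_product, Finset.mem_filter] at hpq
        obtain ⟨⟨hp, hp0⟩, hq, hq0⟩ := hpq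
        refine ⟨hadd _ _ (hsmul _ _ hp0 (hD q hq).1) (hsmul _ _ (by simpa using hq0) (hD p hp).1),
          fun j hj => ?_⟩
        by_cases hjN : j = N
        · subst hjN; simp; ring
        · have h1 := (hD p hp).2 j (by simp [hjN, hj])
          have h2 := (hD q hq).2 j (by simp [hjN, hj])
          simp [h1, h2])
    set w0 : ι → ℚ := Function.update w' N 0 with hw0
    have key : ∀ (t : ℚ) (d : ι → ℚ), ∑ j, (Function.update w' N t) j * d j
        = t * d N + ∑ j, w0 j * d j := by
      intro t d
      rw [← Finset.add_sum_erase _ _ (Finset.mem_univ N),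
        ← Finset.add_sum_erase _ (fun j => w0 j * d j) (Finset.mem_univ N)]
      simp only [hw0, Function.update_self, zero_mul, zero_add]
      congr 1
      apply Finset.sum_congr rfl
      intro j hj
      have : j ≠ N := Finset.ne_of_mem_erase hj
      simp [Function.update_of_ne this]
    obtain ⟨t, ht1, ht2⟩ := Order.exists_between_finsets
      ((D.filter (fun d => 0 < d N)).image (fun p => -(∑ j, w0 j * p j) / p N))
      ((D.filter (fun d => d N < 0)).image (fun q => (∑ j, w0 j * q j) / (- q N))) (by
        intro x hx y hy
        rw [Finset.mem_image] at hx hy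
        obtain ⟨p, hp, rfl⟩ := hx
        obtain ⟨q, hq, rfl⟩ := hy
        have h := hw' ((p N) • q + (-(q N)) • p) (by
          rw [Finset.mem_union]; right
          rw [Finset.mem_image]
          exact ⟨(p, q), by simp only [Finset.mem_product]; exact ⟨hp, hq⟩, rfl⟩)
        have e := key (w' N) ((p N) • q + (-(q N)) • p)
        rw [Function.update_eq_self] at e
        rw [e] at h
        simp only [Finset.mem_filter] at hp hq
        have e2 : ∑ j, w0 j * ((p N) • q + (-(q N)) • p) j = p N * ∑ j, w0 j * q j
            + (- q N) * ∑ j, w0 j * p j := by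
          rw [Finset.mul_sum, Finset.mul_sum, ← Finset.sum_add_distrib]
          apply Finset.sum_congr rfl
          intro j _
          simp; ring
        rw [e2] at h
        simp only [Pi.add_apply, Pi.smul_apply, smul_eq_mul] at h
        rw [div_lt_div_iff₀ hp.2 (by linarith [hq.2])]
        nlinarith [h])
    refine ⟨Function.update w' N t, fun d hd => ?_⟩
    rw [key]
    rcases lt_trichotomy (d N) 0 with h | h | h
    · have := ht2 _ (Finset.mem_image_of_mem _ (Finset.mem_filter.2 ⟨hd, h⟩))
      rw [lt_div_iff₀ (by linarith)] at this
      linarith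
    · have := hw' d (Finset.mem_union_left _ (Finset.mem_filter.2 ⟨hd, h⟩))
      have e := key (w' N) d
      rw [Function.update_eq_self] at e
      rw [e] at this
      rw [h] at this ⊢
      linarith
    · have := ht1 _ (Finset.mem_image_of_mem _ (Finset.mem_filter.2 ⟨hd, h⟩))
      rw [div_lt_iff₀ h] at this
      linarith

/-- integer weight refining finitely many strict comparisons -/
lemma exists_weight {n : ℕ} (m : MonomialOrder (Fin (n + 1)))
    (P : Finset ((Fin (n+1) →₀ ℕ) × (Fin (n+1) →₀ ℕ)))
    (hP : ∀ p ∈ P, m.toSyn p.2 < m.toSyn p.1) :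
    ∃ w : Fin (n+1) → ℤ, ∀ p ∈ P, ∑ j, w j * (p.2 j : ℤ) < ∑ j, w j * (p.1 j : ℤ) := by
  obtain ⟨w, hw⟩ := gordan_aux (ι := Fin (n+1))
    (fun d => ∃ c : ℕ, 0 < c ∧ ∃ u v : Fin (n+1) →₀ ℕ, m.toSyn v < m.toSyn u ∧
      ∀ j, (c : ℚ) * d j = (u j : ℚ) - (v j : ℚ)) (by
        rintro a b ⟨c, hc, u, v, h, e⟩ ⟨c', hc', u', v', h', e'⟩
        refine ⟨c * c', by positivity, c' • u + c • u', c' • v + c • v', ?_, ?_⟩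
        · simp only [map_add, map_nsmul]
          have h1 : c' • m.toSyn v < c' • m.toSyn u := nsmul_lt_nsmul_right hc'.ne' h
          have h2 : c • m.toSyn v' < c • m.toSyn u' := nsmul_lt_nsmul_right hc.ne' h'
          exact add_lt_add h1 h2
        · intro j
          simp only [Pi.add_apply, Finsupp.add_apply, Finsupp.smul_apply, smul_eq_mul]
          push_cast
          linear_combination (c' : ℚ) * e j + (c : ℚ) * e' j) (by
        rintro r a hr ⟨c, hc, u, v, h, e⟩
        have hnum : 0 < r.num.toNat := by
          have := Rat.num_pos.2 hr
          omega
        refine ⟨r.den * c, by have := r.den_pos; positivity, r.num.toNat • u, r.num.toNat • v, ?_, ?_⟩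
        · simp only [map_nsmul]
          exact nsmul_lt_nsmul_right hnum.ne' h
        · intro j
          have h1 : (r.den : ℚ) * r = (r.num.toNat : ℚ) := by
            have h2 : ((r.num.toNat : ℤ) : ℚ) = (r.num : ℚ) := by
              rw [Int.toNat_of_nonneg (Rat.num_pos.2 hr).le]
            rw [Rat.den_mul_eq_num]
            rw [← h2, Int.cast_natCast]
          simp only [Pi.smul_apply, Finsupp.smul_apply, smul_eq_mul]
          push_cast
          linear_combination (c : ℚ) * a j * h1 + (r.num.toNat : ℚ) * e j) (by
        rintro ⟨c, hc, u, v, h, e⟩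
        have : u = v := by
          ext j
          have := e j
          simp at this
          have h3 : (u j : ℚ) = v j := by linarith
          exact_mod_cast h3
        rw [this] at h
        exact lt_irrefl _ h) Finset.univ
    (P.image (fun p j => (p.1 j : ℚ) - (p.2 j : ℚ))) (by
      intro d hd
      rw [Finset.mem_image] at hd
      obtain ⟨p, hp, rfl⟩ := hd
      exact ⟨⟨1, one_pos, p.1, p.2, hP p hp, by simp⟩, by simp⟩)
  set N : ℕ := ∏ j, (w j).den with hN
  have hNpos : 0 < N := Finset.prod_pos fun j _ => (w j).den_pos
  have hz : ∀ j, ∃ z : ℤ, (z : ℚ) = N * w j := by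
    intro j
    obtain ⟨k, hk⟩ := Finset.dvd_prod_of_mem (fun j => (w j).den) (Finset.mem_univ j)
    refine ⟨k * (w j).num, ?_⟩
    rw [hN, hk]
    push_cast
    rw [← Rat.den_mul_eq_num (w j)]
    ring
  choose z hz using hz
  refine ⟨z, fun p hp => ?_⟩
  have := hw _ (Finset.mem_image_of_mem _ hp)
  have h2 : (0:ℚ) < N * ∑ j, w j * ((p.1 j : ℚ) - (p.2 j : ℚ)) := by positivity
  have h3 : (((∑ j, z j * (p.1 j : ℤ)) - ∑ j, z j * (p.2 j : ℤ) : ℤ) : ℚ)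
      = N * ∑ j, w j * ((p.1 j : ℚ) - (p.2 j : ℚ)) := by
    push_cast
    rw [Finset.mul_sum, ← Finset.sum_sub_distrib]
    apply Finset.sum_congr rfl
    intro j _
    rw [hz]; ring
  rw [← h3] at h2
  have : 0 < (∑ j, z j * (p.1 j : ℤ)) - ∑ j, z j * (p.2 j : ℤ) := by exact_mod_cast h2
  linarith


/-- Abstract consequences of the Groebner basis hypothesis. -/
structure Good {K : Type*} [Field K] {n : ℕ} (I : Ideal (MvPolynomial (Fin (n + 1)) K))
    (F : Set (Finset (Fin (n + 1)))) (w : Fin (n + 1) → ℕ) : Prop where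
  hom : IsHomog I
  down : ∀ s t : Finset (Fin (n + 1)), s ∈ F → t ⊆ s → t ∈ F
  card2 : ∀ s ∈ F, s.card ≤ 2
  vert : ∀ i : Fin (n + 1), ({i} : Finset (Fin (n + 1))) ∈ F
  anti : StrictAnti w
  last : w (Fin.last n) = 0
  nf : ∀ u : Fin (n + 1) →₀ ℕ, u.support ∉ F → ∃ G ∈ restrictSupport K
    {u' : Fin (n + 1) →₀ ℕ | u'.support ∈ F ∧ u'.degree = u.degree ∧
      Finsupp.weight w u' < Finsupp.weight w u}, monomial u 1 - G ∈ I
  indep : ∀ G ∈ I, G ∈ restrictSupport K {u : Fin (n + 1) →₀ ℕ | u.support ∈ F} → G = 0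

lemma reduce_of_monomials {K σ : Type*} [Field K] (I : Ideal (MvPolynomial σ K))
    (A B : Set (σ →₀ ℕ)) (h : ∀ u ∈ A, ∃ G ∈ restrictSupport K B, monomial u 1 - G ∈ I)
    (P : MvPolynomial σ K) (hP : P ∈ restrictSupport K A) :
    ∃ G ∈ restrictSupport K B, P - G ∈ I := by
  rw [mem_restrictSupport_iff] at hP
  have : ∀ u ∈ P.support, ∃ G ∈ restrictSupport K B, monomial u (coeff u P) - G ∈ I := by
    intro u hu
    obtain ⟨G, hG, h1⟩ := h u (hP hu)
    refine ⟨C (coeff u P) * G, ?_, ?_⟩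
    · rw [C_mul']
      exact Submodule.smul_mem _ _ hG
    · have := I.mul_mem_left (C (coeff u P)) h1
      rwa [mul_sub, C_mul_monomial, mul_one] at this
  choose! G hG h1 using this
  refine ⟨∑ u ∈ P.support, G u, Submodule.sum_mem _ hG, ?_⟩
  have e : P - ∑ u ∈ P.support, G u = ∑ u ∈ P.support, (monomial u (coeff u P) - G u) := by
    rw [Finset.sum_sub_distrib, ← P.as_sum]
  rw [e]
  exact Ideal.sum_mem _ h1

noncomputable def indF {n : ℕ} (s : Finset (Fin (n+1))) : Fin (n+1) →₀ ℕ :=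
  ∑ i ∈ s, Finsupp.single i 1

lemma indF_apply {n : ℕ} (s : Finset (Fin (n+1))) (i : Fin (n+1)) :
    indF s i = if i ∈ s then 1 else 0 := by
  classical
  simp [indF, Finsupp.finsetSum_apply, Finsupp.single_apply]

lemma indF_le {n : ℕ} (s : Finset (Fin (n+1))) (u : Fin (n+1) →₀ ℕ) :
    indF s ≤ u ↔ s ⊆ u.support := by
  constructor
  · intro h i hi
    have := h i
    rw [indF_apply, if_pos hi] at this
    rw [Finsupp.mem_support_iff]; omega
  · intro h i
    rw [indF_apply]
    split_ifs with hi
    · have := Finsupp.mem_support_iff.1 (h hi); omega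
    · omega

lemma indF_support {n : ℕ} (s : Finset (Fin (n+1))) : (indF s).support = s := by
  ext i
  simp [indF_apply]

lemma prod_X_eq {K : Type*} [Field K] {n : ℕ} (s : Finset (Fin (n+1))) :
    (∏ i ∈ s, X i : MvPolynomial (Fin (n+1)) K) = monomial (indF s) 1 := by
  rw [indF, monomial_sum_one]
  rfl

section
variable {K : Type*} [Field K] {n : ℕ}
    (m : MonomialOrder (Fin (n + 1))) (Δ : SComplex n)
    (I : Ideal (MvPolynomial (Fin (n + 1)) K))

lemma srIdeal_eq : Δ.srIdeal K = Ideal.span ((fun s => monomial s (1 : K)) '' (indF '' Δ.facesᶜ)) := by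
  rw [SComplex.srIdeal]
  congr 1
  ext g
  constructor
  · rintro ⟨s, hs, rfl⟩
    exact ⟨indF s, ⟨s, hs, rfl⟩, (prod_X_eq s).symm⟩
  · rintro ⟨_, ⟨s, hs, rfl⟩, rfl⟩
    exact ⟨s, hs, (prod_X_eq s).symm⟩

lemma initialIdeal_eq : initialIdeal m I =
    Ideal.span ((fun s => monomial s (1 : K)) '' {u | ∃ f ∈ I, f ≠ 0 ∧ u = m.degree f}) := by
  rw [initialIdeal]
  congr 1
  ext g
  constructor
  · rintro ⟨f, hf, h0, rfl⟩
    exact ⟨_, ⟨f, hf, h0, rfl⟩, rfl⟩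
  · rintro ⟨_, ⟨f, hf, h0, rfl⟩, rfl⟩
    exact ⟨f, hf, h0, rfl⟩

variable {m Δ I} (hin : initialIdeal m I = Δ.srIdeal K)
include hin

lemma degree_nonface (f : MvPolynomial (Fin (n + 1)) K) (hf : f ∈ I) (h0 : f ≠ 0) :
    (m.degree f).support ∉ Δ.faces := by
  have h1 : monomial (m.degree f) (1:K) ∈ initialIdeal m I := Ideal.subset_span ⟨f, hf, h0, rfl⟩
  rw [hin, srIdeal_eq, mem_ideal_span_monomial_image] at h1
  obtain ⟨_, ⟨s, hs, rfl⟩, h2⟩ := h1 (m.degree f) (by classical simp [support_monomial])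
  rw [indF_le] at h2
  exact fun h3 => hs (Δ.down_closed h3 h2)

lemma exists_fs (hI : IsHomog I) (s : Finset (Fin (n+1))) (hs : s ∉ Δ.faces) :
    ∃ f ∈ I, coeff (indF s) f = 1 ∧ ∀ u ∈ f.support, u ≠ indF s →
      m.toSyn u < m.toSyn (indF s) ∧ u.degree = (indF s).degree := by
  have h1 : monomial (indF s) (1:K) ∈ initialIdeal m I := by
    rw [hin]; exact Ideal.subset_span ⟨s, hs, (prod_X_eq s).symm⟩
  rw [initialIdeal_eq, mem_ideal_span_monomial_image] at h1
  obtain ⟨_, ⟨f, hf, h0, rfl⟩, h2⟩ := h1 (indF s) (by classical simp [support_monomial])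
  have hlc : m.leadingCoeff f ≠ 0 := m.leadingCoeff_ne_zero_iff.2 h0
  set g := monomial (indF s - m.degree f) (m.leadingCoeff f)⁻¹ * f with hg
  have hm0 : monomial (indF s - m.degree f) (m.leadingCoeff f)⁻¹ ≠ 0 := by simp [hlc]
  have hdm : m.degree (monomial (indF s - m.degree f) (m.leadingCoeff f)⁻¹)
      = indF s - m.degree f := by
    classical
    rw [m.degree_monomial, if_neg (inv_ne_zero hlc)]
  have hdg : m.degree g = indF s := by
    rw [hg, m.degree_mul hm0 h0, hdm]
    exact tsub_add_cancel_of_le h2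
  have hc : coeff (indF s) g = 1 := by
    have : m.leadingCoeff g = 1 := by
      rw [hg, m.leadingCoeff_mul, m.leadingCoeff_monomial, inv_mul_cancel₀ hlc]
    rw [← hdg]; exact this
  refine ⟨homogeneousComponent (indF s).degree g, hI _ (I.mul_mem_left _ hf) _, ?_, ?_⟩
  · rw [coeff_homogeneousComponent, if_pos rfl, hc]
  · intro u hu hne
    rw [mem_support_iff, coeff_homogeneousComponent] at hu
    split_ifs at hu with h3
    · refine ⟨lt_of_le_of_ne ?_ ?_, h3⟩
      · rw [← hdg]; exact m.le_degree (mem_support_iff.2 hu)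
      · simpa using hne
    · exact absurd rfl hu

omit [Field K] hin in
lemma weight_cast (z : Fin (n+1) → ℤ) (c : ℤ) (w : Fin (n+1) → ℕ) (h : ∀ j, (w j : ℤ) = z j - c)
    (u : Fin (n+1) →₀ ℕ) : ((Finsupp.weight w u : ℕ) : ℤ) = ∑ j, z j * (u j : ℤ) - c * (u.degree : ℤ) := by
  rw [Finsupp.weight_eq_sum, Finsupp.degree_eq_sum]
  push_cast
  rw [Finset.mul_sum, ← Finset.sum_sub_distrib]
  apply Finset.sum_congr rfl
  intro j _
  simp only [smul_eq_mul]
  push_cast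
  rw [h]; ring

theorem exists_good (hm : m.Descending) (hgraph : Δ.IsGraph)
    (hvert : ∀ i : Fin (n + 1), ({i} : Finset (Fin (n + 1))) ∈ Δ.faces) (hI : IsHomog I) :
    ∃ w, Good I Δ.faces w := by
  classical
  have := fun s hs => exists_fs hin hI s hs
  choose! f hfI hf1 hf2 using this
  obtain ⟨z, hz⟩ := exists_weight m
    ((Finset.univ.filter (fun s => s ∉ Δ.faces)).biUnion (fun s => ((f s).support.erase (indF s)).image
      (fun u => (indF s, u))) ∪ ((Finset.univ : Finset (Fin (n+1) × Fin (n+1))).filter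
      (fun p => p.1 < p.2)).image (fun p => (Finsupp.single p.1 1, Finsupp.single p.2 1))) (by
    intro p hp
    rw [Finset.mem_union, Finset.mem_biUnion, Finset.mem_image] at hp
    rcases hp with ⟨s, hs, hp⟩ | ⟨p, hp, rfl⟩
    · rw [Finset.mem_image] at hp
      obtain ⟨u, hu, rfl⟩ := hp
      rw [Finset.mem_erase] at hu
      exact (hf2 s (by simpa using hs) u hu.2 hu.1).1
    · exact hm _ _ (by simpa using hp))
  have hz1 : ∀ s, s ∉ Δ.faces → ∀ u ∈ (f s).support, u ≠ indF s →
      ∑ j, z j * (u j : ℤ) < ∑ j, z j * (indF s j : ℤ) := by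
    intro s hs u hu hne
    refine hz (indF s, u) (Finset.mem_union_left _ ?_)
    rw [Finset.mem_biUnion]
    refine ⟨s, by simpa using hs, ?_⟩
    rw [Finset.mem_image]
    exact ⟨u, Finset.mem_erase.2 ⟨hne, hu⟩, rfl⟩
  have hz2 : ∀ i j, i < j → z j < z i := by
    intro i j hij
    have := hz (Finsupp.single i 1, Finsupp.single j 1) (Finset.mem_union_right _ (by
      rw [Finset.mem_image]
      exact ⟨(i, j), by simpa using hij, rfl⟩))
    simpa [Finsupp.single_apply] using this
  have hz3 : ∀ i, 0 ≤ z i - z (Fin.last n) := by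
    intro i
    rcases (Fin.le_last i).lt_or_eq with h | h
    · linarith [hz2 _ _ h]
    · simp [h]
  set w : Fin (n+1) → ℕ := fun i => (z i - z (Fin.last n)).toNat with hw
  have hwz : ∀ j, (w j : ℤ) = z j - z (Fin.last n) := fun j => Int.toNat_of_nonneg (hz3 j)
  refine ⟨w, hI, fun s t hs ht => Δ.down_closed hs ht, hgraph.1, hvert, ?_, by simp [hw], ?_, ?_⟩
  · intro i j hij
    have h1 := hz2 i j hij
    have h2 := hwz i
    have h3 := hwz j
    omega
  · suffices H : ∀ (N : ℕ) (u : Fin (n + 1) →₀ ℕ), Finsupp.weight w u < N → u.support ∉ Δ.faces →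
      ∃ G ∈ restrictSupport K
      {u' : Fin (n + 1) →₀ ℕ | u'.support ∈ Δ.faces ∧ u'.degree = u.degree ∧
      Finsupp.weight w u' < Finsupp.weight w u}, monomial u 1 - G ∈ I from
      fun u => H _ u (Nat.lt_succ_self _)
    intro N
    induction N with
    | zero => intro u hu; omega
    | succ N ih =>
      intro u hu hnf
      set s := u.support with hs
      have hsu : indF s ≤ u := (indF_le s u).2 le_rfl
      set v := u - indF s with hv
      have huv : v + indF s = u := tsub_add_cancel_of_le hsu
      -- the lower part
      set Q : MvPolynomial (Fin (n+1)) K := monomial u 1 - monomial v 1 * f s with hQ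
      have hQs : Q ∈ restrictSupport K {u' : Fin (n+1) →₀ ℕ | u'.degree = u.degree ∧
          Finsupp.weight w u' < Finsupp.weight w u} := by
        rw [mem_restrictSupport_iff]
        intro u' hu'
        rw [Finset.mem_coe, mem_support_iff, hQ, coeff_sub, coeff_monomial, coeff_monomial_mul'] at hu'
        by_cases hvu' : v ≤ u'
        · rw [if_pos hvu', one_mul] at hu'
          obtain ⟨t, rfl⟩ := exists_add_of_le hvu'
          rw [add_tsub_cancel_left] at hu'
          by_cases hts : t = indF s
          · rw [hts, huv, if_pos rfl, hf1 s hnf] at hu'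
            simp at hu'
          · have htu : u ≠ v + t := fun h => hts (by
              rw [← huv] at h; exact (add_left_cancel h).symm)
            rw [if_neg htu, zero_sub, neg_ne_zero] at hu'
            have h1 := hf2 s hnf t (mem_support_iff.2 hu') hts
            have h2 := hz1 s hnf t (mem_support_iff.2 hu') hts
            have h3 : Finsupp.weight w t < Finsupp.weight w (indF s) := by
              have e1 := weight_cast z _ w hwz t
              have e2 := weight_cast z _ w hwz (indF s)
              rw [h1.2] at e1
              have : ((Finsupp.weight w t : ℕ) : ℤ) < (Finsupp.weight w (indF s) : ℕ) := by
                rw [e1, e2]; linarith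
              exact_mod_cast this
            constructor
            · rw [← huv, map_add, map_add, h1.2]
            · rw [← huv, map_add, map_add]; omega
        · rw [if_neg hvu', sub_zero] at hu'
          have : u ≠ u' := fun h => hvu' (h ▸ tsub_le_self)
          rw [if_neg this] at hu'
          exact absurd rfl hu'
      obtain ⟨G, hG, hGI⟩ := reduce_of_monomials I _ {u' : Fin (n + 1) →₀ ℕ | u'.support ∈ Δ.faces ∧
        u'.degree = u.degree ∧ Finsupp.weight w u' < Finsupp.weight w u} (by
          rintro u' ⟨h1, h2⟩
          by_cases h3 : u'.support ∈ Δ.faces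
          · exact ⟨monomial u' 1, by
              rw [monomial_mem_restrictSupport]; exact Or.inl ⟨h3, h1, h2⟩, by simp⟩
          · obtain ⟨G, hG, hGI⟩ := ih u' (by omega) h3
            refine ⟨G, restrictSupport_mono _ ?_ hG, hGI⟩
            rintro u'' ⟨a, b, c⟩
            exact ⟨a, b.trans h1, c.trans h2⟩) Q hQs
      refine ⟨G, hG, ?_⟩
      have : monomial u 1 - G = (Q - G) + monomial v 1 * f s := by rw [hQ]; ring
      rw [this]
      exact I.add_mem hGI (I.mul_mem_left _ (hfI s hnf))
  · intro G hG hGs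
    by_contra h0
    rw [mem_restrictSupport_iff] at hGs
    exact degree_nonface hin G hG h0 (hGs (m.degree_mem_support h0))

end

section
variable {K : Type*} [Field K] {n : ℕ} {I : Ideal (MvPolynomial (Fin (n + 1)) K)}
    {F : Set (Finset (Fin (n + 1)))} {w : Fin (n + 1) → ℕ} (hG : Good I F w)
include hG

/-- Normal form with weight/degree control, for downward closed conditions. -/
lemma Good.red (A : Set (Fin (n+1) →₀ ℕ)) (hA : ∀ u ∈ A, ∀ u' : Fin (n+1) →₀ ℕ, u'.degree = u.degree →
    Finsupp.weight w u' < Finsupp.weight w u → u' ∈ A) (P : MvPolynomial (Fin (n+1)) K)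
    (hP : P ∈ restrictSupport K A) : ∃ G ∈ restrictSupport K {u | u ∈ A ∧ u.support ∈ F}, P - G ∈ I := by
  refine reduce_of_monomials I A _ ?_ P hP
  intro u hu
  by_cases h3 : u.support ∈ F
  · exact ⟨monomial u 1, by rw [monomial_mem_restrictSupport]; exact Or.inl ⟨hu, h3⟩, by simp⟩
  · obtain ⟨G, h1, h2⟩ := hG.nf u h3
    refine ⟨G, restrictSupport_mono _ ?_ h1, h2⟩
    rintro u'' ⟨a, b, c⟩
    exact ⟨hA u hu u'' b c, a⟩
end

section
variable {K : Type*} [Field K] {n : ℕ} {I : Ideal (MvPolynomial (Fin (n + 1)) K)}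
    {Δ : SComplex n} {m : MonomialOrder (Fin (n + 1))} {w : Fin (n + 1) → ℕ}

lemma radical_of_good (hG : Good I Δ.faces w) (hin : initialIdeal m I = Δ.srIdeal K) :
    I.IsRadical := by
  intro f hf
  obtain ⟨k, hk⟩ := hf
  obtain ⟨G, hGs, hGI⟩ := hG.red Set.univ (by simp) f (by simp [restrictSupport_univ])
  by_cases hG0 : G = 0
  · simpa [hG0] using hGI
  exfalso
  have h1 : G ^ k ∈ I := by
    have e : (f - G) ∣ f ^ k - G ^ k := sub_dvd_pow_sub_pow f G k
    have h2 : f ^ k - G ^ k ∈ I := Ideal.mem_of_dvd _ e hGI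
    have := I.sub_mem hk h2
    simpa using this
  have h2 := degree_nonface hin _ h1 (pow_ne_zero _ hG0)
  rw [m.degree_pow] at h2
  rw [mem_restrictSupport_iff] at hGs
  have h3 := (hGs (m.degree_mem_support hG0)).2
  apply h2
  apply hG.down _ _ h3
  intro i
  simp
end


lemma hom_eval {K σ B : Type*} [Field K] [CommRing B] [Algebra K B] (x : σ → K) (T : B) {k : ℕ}
    {P : MvPolynomial σ K} (hP : P.IsHomogeneous k) :
    aeval (fun m => algebraMap K B (x m) * T) P = algebraMap K B (eval x P) * T ^ k := by
  have h1 : ∀ u ∈ P.support, aeval (fun m => algebraMap K B (x m) * T) (monomial u (coeff u P))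
      = algebraMap K B (eval x (monomial u (coeff u P))) * T ^ k := by
    intro u hu
    have hk : u.degree = k := hP.degree_eq_sum_deg_support hu |>.symm
    rw [aeval_monomial, eval_monomial, map_mul, ← hk, Finsupp.degree_apply, ← Finset.prod_pow_eq_pow_sum, mul_assoc]
    congr 1
    simp only [Finsupp.prod, map_prod, map_pow, mul_pow, Finset.prod_mul_distrib]
  conv_lhs => rw [P.as_sum]
  conv_rhs => rw [P.as_sum]
  rw [map_sum, map_sum, map_sum, Finset.sum_mul]
  exact Finset.sum_congr rfl h1

lemma taylor2 {K σ B : Type*} [Field K] [Fintype σ] [CommRing B] [Algebra K B] (a ξ : σ → B) (J : Ideal B)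
    (hJ : ∀ m, ξ m ∈ J) (P : MvPolynomial σ K) :
    aeval (a + ξ) P - aeval a P - ∑ m, aeval a (pderiv m P) * ξ m ∈ J ^ 2 := by
  classical
  induction P using MvPolynomial.induction_on with
  | C c => simp
  | add p q hp hq =>
    have := (J ^ 2).add_mem hp hq
    convert this using 1
    simp only [map_add, add_mul, Finset.sum_add_distrib]
    ring
  | mul_X p l hp =>
    set E := aeval (a + ξ) p - aeval a p - ∑ m, aeval a (pderiv m p) * ξ m with hE
    have h2 : (∑ m, aeval a (pderiv m p) * ξ m) * ξ l ∈ J ^ 2 := by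
      rw [pow_two]
      exact Ideal.mul_mem_mul (Ideal.sum_mem _ fun m _ => J.mul_mem_left _ (hJ m)) (hJ l)
    have := (J ^ 2).add_mem ((J^2).mul_mem_right (a l + ξ l) hp) h2
    convert this using 1
    have e : ∑ m, aeval a (pderiv m (p * X l)) * ξ m = (∑ m, aeval a (pderiv m p) * ξ m) * a l + aeval a p * ξ l := by
      have : ∀ m, aeval a (pderiv m (p * X l)) * ξ m = aeval a (pderiv m p) * ξ m * a l +
          (if m = l then aeval a p * ξ l else 0) := by
        intro m
        rw [pderiv_mul, pderiv_X, map_add, map_mul, map_mul, aeval_X]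
        split_ifs with h
        · subst h; simp; ring
        · rw [Pi.single_eq_of_ne (Ne.symm h)]; simp; ring
      simp_rw [this, Finset.sum_add_distrib, Finset.sum_mul]
      simp
    rw [e, hE]
    simp only [map_mul, aeval_X, Pi.add_apply]
    ring

section
variable {K : Type*} [Field K] {n : ℕ} {I : Ideal (MvPolynomial (Fin (n + 1)) K)}

lemma eval_pderiv_sum (hI : IsHomog I) (x : Fin (n+1) → K)
    (v : Fin (n+1) → K)
    (hv : v ∈ Submodule.span K {v : Fin (n + 1) → K | ∃ f ∈ I, v = fun i => eval x (pderiv i f)}) :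
    v ∈ Submodule.span K {v : Fin (n + 1) → K | ∃ f ∈ I, (∃ k, f.IsHomogeneous k) ∧ v = fun i => eval x (pderiv i f)} := by
  revert v
  change Submodule.span K _ ≤ _
  rw [Submodule.span_le]
  rintro v ⟨f, hf, rfl⟩
  have : (fun i => eval x (pderiv i f)) = ∑ d ∈ Finset.range (f.totalDegree + 1),
      (fun i => eval x (pderiv i (homogeneousComponent d f))) := by
    conv_lhs => rw [← sum_homogeneousComponent f]
    ext i
    simp
  rw [this]
  refine Submodule.sum_mem _ fun d _ => Submodule.subset_span ⟨_, hI f hf d, ⟨d, homogeneousComponent_isHomogeneous _ _⟩, rfl⟩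

lemma exists_v (hI : IsHomog I) (x : Fin (n+1) → K) (hx : ∀ f ∈ I, eval x f = 0)
    (hr : jacobianRank I x = n - 1) (i : Fin (n+1)) (hi : x i ≠ 0) :
    ∃ v : Fin (n+1) → K, ∀ y : Fin (n+1) → K, ∃ c : K, y - c • v ∈
      Submodule.span K {v : Fin (n + 1) → K | ∃ f ∈ I, (∃ k, f.IsHomogeneous k) ∧ v = fun i => eval x (pderiv i f)} ⊔
        Submodule.span K {Pi.single i 1} := by
  classical
  set J := Submodule.span K {v : Fin (n + 1) → K | ∃ f ∈ I, (∃ k, f.IsHomogeneous k) ∧ v = fun i => eval x (pderiv i f)} with hJ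
  have hJ' : Submodule.span K {v : Fin (n + 1) → K | ∃ f ∈ I, v = fun i => eval x (pderiv i f)} ≤ J :=
    fun v hv => eval_pderiv_sum hI x v hv
  have h1 : n - 1 ≤ Module.finrank K J := by
    rw [← hr, jacobianRank]
    exact Submodule.finrank_mono hJ'
  have h2 : (Pi.single i 1 : Fin (n+1) → K) ∉ J := by
    intro h
    have : ∀ v ∈ J, ∑ m, x m * v m = 0 := by
      intro v hv
      induction hv using Submodule.span_induction with
      | mem v hv =>
        obtain ⟨f, hf, ⟨k, hk⟩, rfl⟩ := hv
        have := congrArg (eval x) hk.sum_X_mul_pderiv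
        simpa [hx f hf] using this
      | zero => simp
      | add a b _ _ ha hb => simp [mul_add, Finset.sum_add_distrib, ha, hb]
      | smul c a _ ha =>
        have : ∑ m, x m * (c • a) m = c * ∑ m, x m * a m := by
          rw [Finset.mul_sum]
          refine Finset.sum_congr rfl fun m _ => ?_
          simp; ring
        rw [this, ha, mul_zero]
    have h3 := this _ h
    simp [Pi.single_apply] at h3
    exact hi h3
  set M := J ⊔ Submodule.span K {(Pi.single i 1 : Fin (n+1) → K)} with hM
  have h3 : J < M := by
    refine lt_of_le_of_ne le_sup_left fun h => h2 ?_
    rw [h]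
    exact le_sup_right (a := J) (Submodule.mem_span_singleton_self _)
  have h4 := Submodule.finrank_lt_finrank_of_lt h3
  have h5 : Module.finrank K ((Fin (n+1) → K) ⧸ M) ≤ 1 := by
    have := Submodule.finrank_quotient_add_finrank M
    rw [Module.finrank_fin_fun] at this
    omega
  rw [finrank_le_one_iff] at h5
  obtain ⟨v, hv⟩ := h5
  obtain ⟨v, rfl⟩ := Submodule.Quotient.mk_surjective M v
  refine ⟨v, fun y => ?_⟩
  obtain ⟨c, hc⟩ := hv (Submodule.Quotient.mk y)
  refine ⟨c, ?_⟩
  rw [← Submodule.Quotient.mk_smul, eq_comm, Submodule.Quotient.eq] at hc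
  exact hc

lemma principal_of_rank {A : Type*} [CommRing A] [IsLocalRing A] [IsNoetherianRing A] [Algebra K A]
    (ρ : MvPolynomial (Fin (n + 1)) K →ₐ[K] A) (hρ : ∀ f ∈ I, ρ f = 0)
    (hI : IsHomog I) (x : Fin (n+1) → K) (hx : ∀ f ∈ I, eval x f = 0)
    (hr : jacobianRank I x = n - 1) (i : Fin (n+1)) (hi : x i ≠ 0)
    (hu : IsUnit (ρ (X i)))
    (hmax : IsLocalRing.maximalIdeal A = Ideal.span (Set.range fun m => ρ (C (x i) * X m - C (x m) * X i))) :
    (IsLocalRing.maximalIdeal A).IsPrincipal := by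
  obtain ⟨v, hv⟩ := exists_v hI x hx hr i hi
  set ξ : Fin (n+1) → A := fun m => ρ (C (x i) * X m - C (x m) * X i) with hξ
  set L : (Fin (n+1) → K) →ₗ[K] A := Fintype.linearCombination K ξ with hL
  set 𝔪 := IsLocalRing.maximalIdeal A with h𝔪
  have hξm : ∀ m, ξ m ∈ 𝔪 := fun m => by
    rw [hmax]; exact Ideal.subset_span ⟨m, rfl⟩
  have hLJ : ∀ y ∈ Submodule.span K {v : Fin (n + 1) → K | ∃ f ∈ I, (∃ k, f.IsHomogeneous k) ∧ v = fun i => eval x (pderiv i f)} ⊔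
        Submodule.span K {Pi.single i 1}, L y ∈ (𝔪 ^ 2).restrictScalars K := by
    suffices h : Submodule.span K {v : Fin (n + 1) → K | ∃ f ∈ I, (∃ k, f.IsHomogeneous k) ∧ v = fun i => eval x (pderiv i f)} ⊔
        Submodule.span K {Pi.single i 1} ≤ Submodule.comap L ((𝔪 ^ 2).restrictScalars K) from fun y hy => h hy
    rw [sup_le_iff, Submodule.span_le, Submodule.span_le]
    constructor
    · rintro y ⟨f, hf, ⟨k, hk⟩, rfl⟩
      change L _ ∈ 𝔪 ^ 2
      have h1 := taylor2 (fun m => algebraMap K A (x m) * ρ (X i)) ξ 𝔪 hξm f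
      have e1 : (fun m => algebraMap K A (x m) * ρ (X i)) + ξ = fun m => algebraMap K A (x i) * ρ (X m) := by
        ext m
        simp only [hξ, Pi.add_apply, map_sub, map_mul]
        rw [← algebraMap_eq, AlgHom.commutes, AlgHom.commutes]
        ring
      have e2 : aeval (fun m => algebraMap K A (x i) * ρ (X m)) f = 0 := by
        have e3 : (fun m => algebraMap K A (x i) * ρ (X m)) = fun m => ρ (C (x i) * X m) := by
          ext m
          rw [map_mul, ← algebraMap_eq, AlgHom.commutes]
        rw [e3, ← comp_aeval_apply]
        have e4 : aeval (fun m => C (x i) * X m : Fin (n+1) → MvPolynomial (Fin (n+1)) K) f = C (x i) ^ k * f := by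
          have h1 : ∀ u ∈ f.support, aeval (fun m => C (x i) * X m : Fin (n+1) → MvPolynomial (Fin (n+1)) K) (monomial u (coeff u f))
              = C (x i) ^ k * (monomial u (coeff u f)) := by
            intro u hu
            have hk : u.degree = k := hk.degree_eq_sum_deg_support hu |>.symm
            rw [aeval_monomial, ← hk, Finsupp.degree_apply, ← Finset.prod_pow_eq_pow_sum]
            simp only [Finsupp.prod, mul_pow, Finset.prod_mul_distrib]
            rw [monomial_eq, Finsupp.prod, algebraMap_eq]; ring
          conv_lhs => rw [f.as_sum]
          conv_rhs => rw [f.as_sum]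
          rw [map_sum, Finset.mul_sum]
          exact Finset.sum_congr rfl h1
        rw [e4, map_mul, hρ f hf, mul_zero]
      rw [e1, e2, hom_eval x _ hk, hx f hf, map_zero, zero_mul, sub_zero, zero_sub] at h1
      have e5 : ∑ m, aeval (fun m => algebraMap K A (x m) * ρ (X i)) (pderiv m f) * ξ m
          = ρ (X i) ^ (k-1) * L (fun i => eval x (pderiv i f)) := by
        rw [hL, Fintype.linearCombination_apply, Finset.mul_sum]
        refine Finset.sum_congr rfl fun m _ => ?_
        rw [hom_eval x _ hk.pderiv, Algebra.smul_def]
        ring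
      rw [e5, neg_mem_iff] at h1
      exact (Ideal.unit_mul_mem_iff_mem _ (hu.pow _)).1 h1
    · intro y hy
      rw [Set.mem_singleton_iff] at hy
      subst hy
      simp [hL, Fintype.linearCombination_apply_single, hξ]
  have hle : 𝔪 ≤ Ideal.span {L v} := by
    apply Submodule.le_of_le_smul_of_le_jacobson_bot (I := 𝔪) (IsNoetherian.noetherian _)
    · exact (IsLocalRing.jacobson_eq_maximalIdeal _ bot_ne_top).ge
    · conv_lhs => rw [hmax]
      rw [Ideal.span_le]
      rintro _ ⟨m, rfl⟩
      obtain ⟨c, hc⟩ := hv (Pi.single m 1)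
      have h1 := hLJ _ hc
      rw [Submodule.restrictScalars_mem, map_sub, map_smul, hL, Fintype.linearCombination_apply_single, one_smul, ← hL] at h1
      have : ξ m = c • L v + (ξ m - c • L v) := by ring
      change ξ m ∈ _
      rw [this]
      refine Submodule.add_mem_sup ?_ ?_
      · rw [Algebra.smul_def]
        exact Ideal.mul_mem_left _ _ (Ideal.mem_span_singleton_self _)
      · rw [smul_eq_mul, ← pow_two]; exact h1
  refine ⟨⟨L v, le_antisymm hle ?_⟩⟩
  rw [Submodule.span_singleton_le_iff_mem, hL, Fintype.linearCombination_apply]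
  refine Submodule.sum_mem _ fun m _ => ?_
  rw [Algebra.smul_def]
  exact Ideal.mul_mem_left _ _ (hξm m)
end

lemma isDomain_of_principal {A : Type*} [CommRing A] [IsLocalRing A] [IsNoetherianRing A] [IsReduced A]
    (h : (IsLocalRing.maximalIdeal A).IsPrincipal) : IsDomain A := by
  obtain ⟨⟨g, hg⟩⟩ := h
  have hg' : IsLocalRing.maximalIdeal A = Ideal.span {g} := hg
  have key : ∀ a : A, a ≠ 0 → ∃ (k : ℕ) (u : A), IsUnit u ∧ a = g ^ k * u := by
    intro a ha
    have hk : ⨅ k : ℕ, (IsLocalRing.maximalIdeal A) ^ k = ⊥ :=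
      Ideal.iInf_pow_eq_bot_of_isLocalRing _ (Ideal.IsPrime.ne_top inferInstance)
    have : ∃ k, a ∉ (IsLocalRing.maximalIdeal A) ^ k := by
      by_contra! hc
      apply ha
      rw [← Ideal.mem_bot, ← hk, Ideal.mem_iInf]
      exact hc
    classical
    have h1 := Nat.find_spec this
    set k := Nat.find this with hkdef
    rcases Nat.eq_zero_or_pos k with h0 | h0
    · rw [h0] at h1; simp at h1
    have h2 : a ∈ (IsLocalRing.maximalIdeal A) ^ (k-1) := by
      by_contra hc
      exact Nat.find_min this (show k - 1 < _ by omega) hc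
    rw [hg', Ideal.span_singleton_pow, Ideal.mem_span_singleton] at h2
    obtain ⟨u, hu⟩ := h2
    refine ⟨k-1, u, ?_, hu⟩
    by_contra hnu
    have h3 : u ∈ IsLocalRing.maximalIdeal A := (IsLocalRing.mem_maximalIdeal u).2 hnu
    apply h1
    have h4 : a ∈ (IsLocalRing.maximalIdeal A) ^ (k-1+1) := by
      rw [hu, pow_succ]
      refine Ideal.mul_mem_mul (Ideal.pow_mem_pow ?_ _) h3
      rw [hg']; exact Ideal.mem_span_singleton_self g
    rwa [Nat.sub_add_cancel h0] at h4
  have : NoZeroDivisors A := ⟨by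
    intro a b hab
    by_contra! hc
    obtain ⟨k, u, hu, ea⟩ := key a hc.1
    obtain ⟨l, v, hv, eb⟩ := key b hc.2
    have h1 : g ^ (k + l) = 0 := by
      have h2 : g ^ (k+l) * (u * v) = 0 := by
        rw [← hab, ea, eb]; ring
      exact ((hu.mul hv).mul_left_eq_zero).1 h2
    have h2 : g = 0 := eq_zero_of_pow_eq_zero h1
    rcases Nat.eq_zero_or_pos k with h0 | h0
    · rcases Nat.eq_zero_or_pos l with h0' | h0'
      · rw [h0, h0'] at h1
        simp at h1
      · apply hc.2
        rw [eb, h2, zero_pow h0'.ne', zero_mul]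
    · apply hc.1
      rw [ea, h2, zero_pow h0.ne', zero_mul]⟩
  exact NoZeroDivisors.to_isDomain A


section
variable {K : Type*} [Field K] {n : ℕ} {I : Ideal (MvPolynomial (Fin (n + 1)) K)}

/-- restriction to the line through `x`. -/
noncomputable def phiX (x : Fin (n+1) → K) : MvPolynomial (Fin (n + 1)) K →ₐ[K] Polynomial K :=
  aeval (fun l => algebraMap K (Polynomial K) (x l) * Polynomial.X)

lemma phiX_coeff (x : Fin (n+1) → K) (P : MvPolynomial (Fin (n + 1)) K) (d : ℕ) :
    (phiX x P).coeff d = eval x (homogeneousComponent d P) := by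
  have e : phiX x P = ∑ k ∈ Finset.range (P.totalDegree + 1),
      Polynomial.C (eval x (homogeneousComponent k P)) * Polynomial.X ^ k := by
    conv_lhs => rw [← sum_homogeneousComponent P]
    rw [map_sum]
    refine Finset.sum_congr rfl fun k _ => ?_
    exact hom_eval x _ (homogeneousComponent_isHomogeneous k P)
  rw [e, Polynomial.finsetSum_coeff]
  simp only [Polynomial.coeff_C_mul_X_pow]
  rw [Finset.sum_ite_eq]
  split_ifs with h
  · rfl
  · rw [homogeneousComponent_eq_zero _ _ (by simpa [Nat.lt_succ_iff] using h), map_zero]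

lemma phiX_zero_of_mem (hI : IsHomog I) (x : Fin (n+1) → K) (hx : ∀ f ∈ I, eval x f = 0)
    (f : MvPolynomial (Fin (n + 1)) K) (hf : f ∈ I) : phiX x f = 0 := by
  ext d
  rw [phiX_coeff, hx _ (hI f hf d), Polynomial.coeff_zero]

/-- factor through the quotient -/
noncomputable def phiXq (hI : IsHomog I) (x : Fin (n+1) → K) (hx : ∀ f ∈ I, eval x f = 0) :
    (MvPolynomial (Fin (n + 1)) K ⧸ I) →+* Polynomial K :=
  Ideal.Quotient.lift I (phiX x : MvPolynomial (Fin (n + 1)) K →+* Polynomial K)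
    (fun f hf => phiX_zero_of_mem hI x hx f hf)

lemma ker_phiX (x : Fin (n+1) → K) (i : Fin (n+1)) (hi : x i ≠ 0) (P : MvPolynomial (Fin (n + 1)) K)
    (hP : phiX x P = 0) : P ∈ Ideal.span (Set.range fun m =>
      (C (x i) * X m - C (x m) * X i : MvPolynomial (Fin (n + 1)) K)) := by
  set J := Ideal.span (Set.range fun m =>
      (C (x i) * X m - C (x m) * X i : MvPolynomial (Fin (n + 1)) K)) with hJ
  rw [← sum_homogeneousComponent P]
  refine Ideal.sum_mem _ fun k _ => ?_
  set Q := homogeneousComponent k P with hQ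
  have hQh : Q.IsHomogeneous k := homogeneousComponent_isHomogeneous k P
  have h0 : eval x Q = 0 := by rw [hQ, ← phiX_coeff, hP, Polynomial.coeff_zero]
  have e1 : aeval (fun m => C (x i) * X m : Fin (n+1) → MvPolynomial (Fin (n+1)) K) Q = C (x i) ^ k * Q := by
    have h1 : ∀ u ∈ Q.support, aeval (fun m => C (x i) * X m : Fin (n+1) → MvPolynomial (Fin (n+1)) K) (monomial u (coeff u Q))
        = C (x i) ^ k * (monomial u (coeff u Q)) := by
      intro u hu
      have hk : u.degree = k := hQh.degree_eq_sum_deg_support hu |>.symm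
      rw [aeval_monomial, ← hk, Finsupp.degree_apply, ← Finset.prod_pow_eq_pow_sum]
      simp only [Finsupp.prod, mul_pow, Finset.prod_mul_distrib]
      rw [monomial_eq, Finsupp.prod, algebraMap_eq]; ring
    conv_lhs => rw [Q.as_sum]
    conv_rhs => rw [Q.as_sum]
    rw [map_sum, Finset.mul_sum]
    exact Finset.sum_congr rfl h1
  have e2 := hom_eval x (X i : MvPolynomial (Fin (n+1)) K) hQh
  rw [h0, map_zero, zero_mul] at e2
  have e3 : aeval (fun m => C (x i) * X m : Fin (n+1) → MvPolynomial (Fin (n+1)) K) Q -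
    aeval (fun m => algebraMap K _ (x m) * X i : Fin (n+1) → MvPolynomial (Fin (n+1)) K) Q ∈ J := by
    rw [← Ideal.Quotient.mk_eq_mk_iff_sub_mem]
    have : ∀ f : Fin (n+1) → MvPolynomial (Fin (n+1)) K, Ideal.Quotient.mk J (aeval f Q) =
      aeval (fun m => Ideal.Quotient.mk J (f m)) Q := fun f => by
        rw [← Ideal.Quotient.mkₐ_eq_mk K, comp_aeval_apply]
    rw [this, this]
    congr 2
    ext m
    rw [Ideal.Quotient.mk_eq_mk_iff_sub_mem]
    exact Ideal.subset_span ⟨m, rfl⟩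
  rw [e1, e2, sub_zero, ← map_pow] at e3
  have := J.mul_mem_left (C ((x i)^k)⁻¹) e3
  rwa [← mul_assoc, ← map_mul, inv_mul_cancel₀ (pow_ne_zero _ hi), map_one, one_mul] at this

instance phiXq_prime (hI : IsHomog I) (x : Fin (n+1) → K) (hx : ∀ f ∈ I, eval x f = 0) :
    (RingHom.ker (phiXq hI x hx)).IsPrime := RingHom.ker_isPrime _

lemma local_principal (hI : IsHomog I) (x : Fin (n+1) → K) (hx0 : x ≠ 0) (hx : ∀ f ∈ I, eval x f = 0)
    (hr : jacobianRank I x = n - 1) (A : Type*) [CommRing A] [IsLocalRing A]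
    [Algebra (MvPolynomial (Fin (n + 1)) K ⧸ I) A] [Algebra K A]
    [IsScalarTower K (MvPolynomial (Fin (n + 1)) K ⧸ I) A]
    [IsLocalization.AtPrime A (RingHom.ker (phiXq hI x hx))] :
    (IsLocalRing.maximalIdeal A).IsPrincipal := by
  obtain ⟨i, hi⟩ := Function.ne_iff.1 hx0
  set p := RingHom.ker (phiXq hI x hx) with hp
  set ρ : MvPolynomial (Fin (n + 1)) K →ₐ[K] A :=
    (IsScalarTower.toAlgHom K (MvPolynomial (Fin (n + 1)) K ⧸ I) A).comp (Ideal.Quotient.mkₐ K I) with hρ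
  have hρ' : ∀ f, ρ f = algebraMap _ A (Ideal.Quotient.mk I f) := fun f => rfl
  have : IsNoetherianRing A := IsLocalization.isNoetherianRing p.primeCompl _ inferInstance
  refine principal_of_rank ρ ?_ hI x hx hr i hi ?_ ?_
  · intro f hf
    rw [hρ', Ideal.Quotient.eq_zero_iff_mem.2 hf, map_zero]
  · rw [hρ']
    refine IsLocalization.map_units A (⟨Ideal.Quotient.mk I (X i), ?_⟩ : p.primeCompl)
    intro h
    change phiX x (X i) = 0 at h
    simp [phiX] at h
    exact hi h
  · rw [← IsLocalization.AtPrime.map_eq_maximalIdeal p]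
    apply le_antisymm
    · rw [Ideal.map_le_iff_le_comap]
      intro r hr
      obtain ⟨P, rfl⟩ := Ideal.Quotient.mk_surjective r
      have h1 : phiX x P = 0 := hr
      have h2 := ker_phiX x i hi P h1
      have h3 := Ideal.mem_map_of_mem ρ h2
      rw [Ideal.map_span, ← Set.range_comp] at h3
      exact h3
    · rw [Ideal.span_le]
      rintro _ ⟨m, rfl⟩
      change ρ _ ∈ _
      rw [hρ']
      apply Ideal.mem_map_of_mem
      change phiX x _ = 0
      simp [phiX]
      ring

lemma local_dom_aux (hI : IsHomog I) (hrad : I.IsRadical) (x : Fin (n+1) → K) (hx0 : x ≠ 0)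
    (hx : ∀ f ∈ I, eval x f = 0) (hr : jacobianRank I x = n - 1)
    (A : Type*) [CommRing A] [IsLocalRing A]
    [Algebra (MvPolynomial (Fin (n + 1)) K ⧸ I) A] [Algebra K A]
    [IsScalarTower K (MvPolynomial (Fin (n + 1)) K ⧸ I) A]
    [IsLocalization.AtPrime A (RingHom.ker (phiXq hI x hx))]
    (a b : MvPolynomial (Fin (n + 1)) K) (hab : a * b ∈ I) :
    ∃ s, phiX x s ≠ 0 ∧ (s * a ∈ I ∨ s * b ∈ I) := by
  have h1 := local_principal hI x hx0 hx hr A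
  set p := RingHom.ker (phiXq hI x hx) with hp
  have : IsNoetherianRing A := IsLocalization.isNoetherianRing p.primeCompl _ inferInstance
  have : IsReduced (MvPolynomial (Fin (n + 1)) K ⧸ I) := (Ideal.isRadical_iff_quotient_reduced I).1 hrad
  have : IsReduced A := by
    constructor
    rintro a ⟨k, hk⟩
    obtain ⟨r, s, rfl⟩ := IsLocalization.exists_mk'_eq p.primeCompl a
    rw [← IsLocalization.mk'_pow, IsLocalization.mk'_eq_zero_iff] at hk
    obtain ⟨t, ht⟩ := hk
    rw [IsLocalization.mk'_eq_zero_iff]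
    refine ⟨t, ?_⟩
    have h5 : (t.1 * r) ^ (k+1) = 0 := by
      rw [mul_pow, pow_succ r, pow_succ t.1]
      linear_combination (t.1 ^ k * r) * ht
    exact pow_eq_zero_iff (by omega) |>.1 h5
  have := isDomain_of_principal h1
  have h2 : algebraMap _ A (Ideal.Quotient.mk I a) * algebraMap _ A (Ideal.Quotient.mk I b) = 0 := by
    rw [← map_mul, ← map_mul, Ideal.Quotient.eq_zero_iff_mem.2 hab, map_zero]
  have key : ∀ c, algebraMap _ A (Ideal.Quotient.mk I c) = 0 → ∃ s, phiX x s ≠ 0 ∧ s * c ∈ I := by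
    intro c hc
    rw [IsLocalization.map_eq_zero_iff p.primeCompl] at hc
    obtain ⟨⟨s, hs⟩, h3⟩ := hc
    obtain ⟨s, rfl⟩ := Ideal.Quotient.mk_surjective s
    refine ⟨s, hs, ?_⟩
    rw [← Ideal.Quotient.eq_zero_iff_mem, map_mul]
    exact h3
  rcases mul_eq_zero.1 h2 with h | h
  · obtain ⟨s, h3, h4⟩ := key a h
    exact ⟨s, h3, Or.inl h4⟩
  · obtain ⟨s, h3, h4⟩ := key b h
    exact ⟨s, h3, Or.inr h4⟩

lemma local_dom (hI : IsHomog I) (hrad : I.IsRadical) (x : Fin (n+1) → K) (hx0 : x ≠ 0)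
    (hx : ∀ f ∈ I, eval x f = 0) (hr : jacobianRank I x = n - 1)
    (a b : MvPolynomial (Fin (n + 1)) K) (hab : a * b ∈ I) :
    ∃ s, phiX x s ≠ 0 ∧ (s * a ∈ I ∨ s * b ∈ I) :=
  local_dom_aux hI hrad x hx0 hx hr (Localization.AtPrime (RingHom.ker (phiXq hI x hx))) a b hab

/-- colon ideal -/
def colonI (I : Ideal (MvPolynomial (Fin (n + 1)) K)) (A : Set (MvPolynomial (Fin (n + 1)) K)) :
    Ideal (MvPolynomial (Fin (n + 1)) K) where
  carrier := {s | ∀ r ∈ A, s * r ∈ I}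
  zero_mem' := by intro r _; simp
  add_mem' := by
    intro a b ha hb r hr
    rw [add_mul]; exact I.add_mem (ha r hr) (hb r hr)
  smul_mem' := by
    intro c a ha r hr
    rw [smul_eq_mul, mul_assoc]; exact I.mul_mem_left _ (ha r hr)

lemma hc_mul {P s : MvPolynomial (Fin (n + 1)) K} {e : ℕ} (hP : P.IsHomogeneous e) (d : ℕ) :
    homogeneousComponent (d + e) (s * P) = homogeneousComponent d s * P := by
  have e1 : s * P = ∑ k ∈ Finset.range (s.totalDegree + 1), homogeneousComponent k s * P := by
    rw [← Finset.sum_mul, sum_homogeneousComponent]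
  rw [e1, map_sum]
  have : ∀ k ∈ Finset.range (s.totalDegree + 1), homogeneousComponent (d + e) (homogeneousComponent k s * P)
      = if d = k then homogeneousComponent k s * P else 0 := by
    intro k _
    rw [homogeneousComponent_of_mem ((mem_homogeneousSubmodule (k + e) _).2 ((homogeneousComponent_isHomogeneous k s).mul hP))]
    simp
  rw [Finset.sum_congr rfl this, Finset.sum_ite_eq]
  split_ifs with h
  · rfl
  · rw [homogeneousComponent_eq_zero _ _ (by simpa [Nat.lt_succ_iff] using h), zero_mul]

lemma colonI_homog (hI : IsHomog I) (A : Set (MvPolynomial (Fin (n + 1)) K))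
    (hA : ∀ r ∈ A, ∀ e, homogeneousComponent e r ∈ A) : IsHomog (colonI I A) := by
  intro s hs d r hr
  rw [← sum_homogeneousComponent r, Finset.mul_sum]
  refine I.sum_mem fun e _ => ?_
  rw [← hc_mul (homogeneousComponent_isHomogeneous e r)]
  exact hI _ (hs _ (hA r hr e)) _

lemma mem_of_vanish [IsAlgClosed K] (hrad : I.IsRadical) (hne : (projZeros I).Nonempty)
    (J : Ideal (MvPolynomial (Fin (n + 1)) K)) (hJ : IsHomog J) (h : projZeros I ⊆ projZeros J) : J ≤ I := by
  intro s hs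
  rw [← sum_homogeneousComponent s]
  refine I.sum_mem fun d _ => ?_
  have h1 := hJ s hs d
  have h2 : homogeneousComponent d s ∈ I.radical := by
    rw [← vanishingIdeal_zeroLocus_eq_radical (K := K) I, mem_vanishingIdeal_iff]
    intro x hx
    change eval x _ = 0
    by_cases hx0 : x = 0
    · rcases Nat.eq_zero_or_pos d with rfl | hd
      · obtain ⟨y, hy⟩ := hne
        have h3 := (h hy).2 _ h1
        rw [homogeneousComponent_zero] at h3 ⊢
        simpa using h3
      · have h3 := hom_eval (fun _ => (1:K)) (0:K) (homogeneousComponent_isHomogeneous d s)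
        rw [zero_pow hd.ne', mul_zero] at h3
        rw [hx0]
        simp only [mul_zero] at h3
        exact h3
    · exact (h (⟨hx0, fun f hf => hx f hf⟩ : x ∈ projZeros I)).2 _ h1
  exact hrad h2

lemma exists_comp_ne (x : Fin (n+1) → K) (s : MvPolynomial (Fin (n + 1)) K) (h : phiX x s ≠ 0) :
    ∃ d, eval x (homogeneousComponent d s) ≠ 0 := by
  by_contra! hc
  apply h
  ext d
  rw [phiX_coeff, hc, Polynomial.coeff_zero]

attribute [local instance] MvPolynomial.gradedAlgebra in
theorem prime_of_smooth [IsAlgClosed K] (hI : IsHomog I) (hrad : I.IsRadical) (hconn : IsConnectedProjVariety I)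
    (hsmooth : ∀ x ∈ projZeros I, jacobianRank I x = n - 1) : I.IsPrime := by
  have hhom : I.IsHomogeneous (homogeneousSubmodule (Fin (n+1)) K) := by
    intro i r hr
    have := hI r hr i
    rwa [← decomposition.decompose'_apply] at this
  have hne := hconn.1
  refine hhom.isPrime_of_homogeneous_mem_or_mem ?_ ?_
  · rintro rfl
    obtain ⟨x, hx⟩ := hne
    have := hx.2 1 trivial
    simp at this
  · rintro a b ⟨e, he⟩ - hab
    have he : a.IsHomogeneous e := he
    set J1 := colonI I {0, a} with hJ1
    set J2 := colonI I (J1 : Set _) with hJ2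
    have hJ1h : IsHomog J1 := colonI_homog hI _ (by
      rintro r (rfl | hr) d
      · simp
      · rw [Set.mem_singleton_iff] at hr
        subst hr
        rw [homogeneousComponent_of_mem ((mem_homogeneousSubmodule e _).2 he)]
        split_ifs <;> simp)
    have hJ2h : IsHomog J2 := colonI_homog hI _ (fun r hr d => hJ1h r hr d)
    have h1 : ∀ r ∈ J1, r * a ∈ I := fun r hr => hr a (by simp)
    have h1' : ∀ r, r * a ∈ I → r ∈ J1 := by
      rintro r hr s (rfl | hs)
      · simp
      · rw [Set.mem_singleton_iff] at hs
        subst hs; exact hr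
    have hcov : projZeros I ⊆ projZeros J1 ∪ projZeros J2 := by
      intro x hx
      by_contra hc
      rw [Set.mem_union, not_or] at hc
      have hc1 : ∃ f ∈ J1, eval x f ≠ 0 := by
        by_contra! h; exact hc.1 ⟨hx.1, h⟩
      have hc2 : ∃ f ∈ J2, eval x f ≠ 0 := by
        by_contra! h; exact hc.2 ⟨hx.1, h⟩
      obtain ⟨s, hs, hs0⟩ := hc1
      obtain ⟨t, ht, ht0⟩ := hc2
      have := hx.2 _ (ht s hs)
      rw [map_mul] at this
      exact mul_ne_zero ht0 hs0 this
    have hdisj : projZeros I ∩ (projZeros J1 ∩ projZeros J2) = ∅ := by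
      rw [Set.eq_empty_iff_forall_notMem]
      rintro x ⟨hx, hx1, hx2⟩
      have hn1 : ∀ s, phiX x s ≠ 0 → s ∉ J1 := by
        intro s hs hsJ
        obtain ⟨d, hd⟩ := exists_comp_ne x s hs
        exact hd (hx1.2 _ (hJ1h s hsJ d))
      obtain ⟨T, hT⟩ := IsNoetherian.noetherian J1
      have hT' : ∀ r ∈ T, ∃ s, phiX x s ≠ 0 ∧ s * r ∈ I := by
        intro r hr
        have hrJ : r ∈ J1 := by rw [← hT]; exact Submodule.subset_span hr
        obtain ⟨s, hs, h | h⟩ := local_dom hI hrad x hx.1 hx.2 (hsmooth x hx) r a (h1 r hrJ)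
        · exact ⟨s, hs, h⟩
        · exact absurd (h1' s h) (hn1 s hs)
      choose! f hf1 hf2 using hT'
      have hs0 : phiX x (∏ r ∈ T, f r) ≠ 0 := by
        rw [map_prod]
        exact Finset.prod_ne_zero_iff.2 hf1
      have hsJ : (∏ r ∈ T, f r) ∈ J2 := by
        intro r hr
        rw [hJ1, SetLike.mem_coe, ← hJ1, ← hT] at hr
        induction hr using Submodule.span_induction with
        | mem r hr =>
          obtain ⟨c, hc⟩ := Finset.dvd_prod_of_mem f hr
          rw [hc, mul_right_comm]
          exact I.mul_mem_right _ (hf2 r hr)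
        | zero => simp
        | add a b _ _ ha hb => rw [mul_add]; exact I.add_mem ha hb
        | smul c a _ ha => rw [smul_eq_mul, mul_left_comm]; exact I.mul_mem_left _ ha
      obtain ⟨d, hd⟩ := exists_comp_ne x _ hs0
      exact hd (hx2.2 _ (hJ2h _ hsJ d))
    rcases hconn.2 J1 J2 hJ1h hJ2h hcov hdisj with h | h
    · right
      exact mem_of_vanish hrad hne J1 hJ1h h (h1' b (by rwa [mul_comm]))
    · left
      refine mem_of_vanish hrad hne J2 hJ2h h ?_
      intro r hr
      rw [mul_comm]
      exact h1 r hr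

lemma local_int_aux [I.IsPrime] {L : Type*} [Field L] [Algebra (MvPolynomial (Fin (n + 1)) K ⧸ I) L]
    [IsFractionRing (MvPolynomial (Fin (n + 1)) K ⧸ I) L]
    (hI : IsHomog I) (x : Fin (n+1) → K) (hx0 : x ≠ 0)
    (hx : ∀ f ∈ I, eval x f = 0) (hr : jacobianRank I x = n - 1)
    (A : Type*) [CommRing A] [IsLocalRing A]
    [Algebra (MvPolynomial (Fin (n + 1)) K ⧸ I) A] [Algebra K A]
    [IsScalarTower K (MvPolynomial (Fin (n + 1)) K ⧸ I) A]
    [IsLocalization.AtPrime A (RingHom.ker (phiXq hI x hx))] (η : L)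
    (hη : IsIntegral (MvPolynomial (Fin (n + 1)) K ⧸ I) η) :
    ∃ s t : MvPolynomial (Fin (n + 1)) K, phiX x s ≠ 0 ∧
      algebraMap _ L (Ideal.Quotient.mk I s) * η = algebraMap _ L (Ideal.Quotient.mk I t) := by
  have h1 := local_principal hI x hx0 hx hr A
  set p := RingHom.ker (phiXq hI x hx) with hp
  have : IsNoetherianRing A := IsLocalization.isNoetherianRing p.primeCompl _ inferInstance
  have : IsDomain (MvPolynomial (Fin (n + 1)) K ⧸ I) := Ideal.Quotient.isDomain I
  have hinj : Function.Injective (algebraMap (MvPolynomial (Fin (n + 1)) K ⧸ I) A) :=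
    IsLocalization.injective A p.primeCompl_le_nonZeroDivisors
  have : IsDomain A := IsLocalization.isDomain_of_le_nonZeroDivisors _ p.primeCompl_le_nonZeroDivisors
  have hic : IsIntegrallyClosed A ∧ ∀ P : Ideal A, P ≠ ⊥ → P.IsPrime → P = IsLocalRing.maximalIdeal A :=
    ((tfae_of_isNoetherianRing_of_isLocalRing_of_isDomain A).out 4 3).1 h1
  have hic := hic.1
  have hinj' : Function.Injective ((algebraMap A (FractionRing A)).comp (algebraMap (MvPolynomial (Fin (n + 1)) K ⧸ I) A)) :=
    (IsFractionRing.injective A (FractionRing A)).comp hinj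
  let ψ : L →+* (FractionRing A) := IsFractionRing.lift hinj'
  have hψ : ∀ r : (MvPolynomial (Fin (n + 1)) K ⧸ I), ψ (algebraMap _ L r) = algebraMap A (FractionRing A) (algebraMap _ A r) := fun r =>
    IsFractionRing.lift_algebraMap hinj' r
  have hint : IsIntegral A (ψ η) := by
    obtain ⟨q, hq, hq0⟩ := hη
    refine ⟨q.map (algebraMap _ A), hq.map _, ?_⟩
    rw [Polynomial.eval₂_map]
    have := congrArg ψ hq0
    rw [Polynomial.hom_eval₂, map_zero] at this
    rw [← this]
    congr 1
    exact RingHom.ext fun r => (hψ r).symm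
  obtain ⟨α, hα⟩ := IsIntegrallyClosed.isIntegral_iff.1 hint
  obtain ⟨⟨t, s⟩, hts⟩ := IsLocalization.surj p.primeCompl α
  obtain ⟨t, rfl⟩ := Ideal.Quotient.mk_surjective t
  obtain ⟨s, hs⟩ := s
  obtain ⟨s, rfl⟩ := Ideal.Quotient.mk_surjective s
  refine ⟨s, t, hs, ψ.injective ?_⟩
  rw [map_mul, hψ, hψ, ← hα, ← map_mul, ← hts, mul_comm]

lemma local_int [I.IsPrime] {L : Type*} [Field L] [Algebra (MvPolynomial (Fin (n + 1)) K ⧸ I) L]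
    [IsFractionRing (MvPolynomial (Fin (n + 1)) K ⧸ I) L]
    (hI : IsHomog I) (x : Fin (n+1) → K) (hx0 : x ≠ 0)
    (hx : ∀ f ∈ I, eval x f = 0) (hr : jacobianRank I x = n - 1) (η : L)
    (hη : IsIntegral (MvPolynomial (Fin (n + 1)) K ⧸ I) η) :
    ∃ s t : MvPolynomial (Fin (n + 1)) K, phiX x s ≠ 0 ∧
      algebraMap _ L (Ideal.Quotient.mk I s) * η = algebraMap _ L (Ideal.Quotient.mk I t) :=
  local_int_aux hI x hx0 hx hr (Localization.AtPrime (RingHom.ker (phiXq hI x hx))) η hη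
end


section A5
variable {K : Type*} [Field K] {n : ℕ} {I : Ideal (MvPolynomial (Fin (n + 1)) K)}
  {F : Set (Finset (Fin (n + 1)))} {w : Fin (n + 1) → ℕ}

def stdSet (F : Set (Finset (Fin (n + 1)))) (k : ℕ) : Set (Fin (n + 1) →₀ ℕ) :=
  {u | u.support ∈ F ∧ u.degree = k}

def edgeF (F : Set (Finset (Fin (n + 1)))) : Set (Finset (Fin (n + 1))) := {s | s ∈ F ∧ s.card = 2}

lemma stdSet_finite (F : Set (Finset (Fin (n + 1)))) (k : ℕ) : (stdSet F k).Finite :=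
  (Finsupp.finite_of_degree_eq k).subset (fun _ hu => hu.2)

noncomputable def pairMon (a b : Fin (n+1)) (i j : ℕ) : Fin (n+1) →₀ ℕ :=
  Finsupp.single a i + Finsupp.single b j

lemma pairMon_degree (a b : Fin (n+1)) (i j : ℕ) : (pairMon a b i j).degree = i + j := by
  simp [pairMon]

lemma pairMon_weight (a b : Fin (n+1)) (i j : ℕ) :
    Finsupp.weight w (pairMon a b i j) = i * w a + j * w b := by
  simp [pairMon, Finsupp.weight_single]

lemma pairMon_support (a b : Fin (n+1)) (i j : ℕ) : (pairMon a b i j).support ⊆ {a, b} := by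
  intro x hx
  rw [Finsupp.mem_support_iff] at hx
  simp only [pairMon, Finsupp.add_apply, Finsupp.single_apply] at hx
  simp only [Finset.mem_insert, Finset.mem_singleton]
  by_contra h
  push Not at h
  simp [h.1.symm, h.2.symm] at hx

lemma pairMon_of_support (a b : Fin (n+1)) (hab : a ≠ b) (u : Fin (n+1) →₀ ℕ) (hu : u.support ⊆ {a, b}) :
    u = pairMon a b (u a) (u b) := by
  ext x
  simp only [pairMon, Finsupp.add_apply, Finsupp.single_apply]
  by_cases h1 : a = x
  · subst h1; simp [hab.symm]
  · by_cases h2 : b = x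
    · subst h2; simp [hab]
    · simp only [h1, h2, if_false, add_zero]
      by_contra h3
      have := hu (Finsupp.mem_support_iff.2 h3)
      simp only [Finset.mem_insert, Finset.mem_singleton] at this
      rcases this with h | h
      · exact h1 h.symm
      · exact h2 h.symm

lemma pairMon_inj (a b : Fin (n+1)) (hab : a ≠ b) (i j i' j') (h : pairMon a b i j = pairMon a b i' j') :
    i = i' ∧ j = j' := by
  have h1 := DFunLike.congr_fun h a
  have h2 := DFunLike.congr_fun h b
  simp [pairMon, Finsupp.single_apply, hab, hab.symm] at h1 h2
  exact ⟨h1, h2⟩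

lemma pairMon_support_eq (a b : Fin (n+1)) (hab : a ≠ b) (i j : ℕ) (hi : i ≠ 0) (hj : j ≠ 0) :
    (pairMon a b i j).support = {a, b} := by
  apply le_antisymm (pairMon_support a b i j)
  intro x hx
  rw [Finsupp.mem_support_iff]
  simp only [Finset.mem_insert, Finset.mem_singleton] at hx
  rcases hx with rfl | rfl <;> simp [pairMon, hab, hab.symm, hi, hj]

lemma edge_choice (F : Set (Finset (Fin (n + 1)))) : ∃ p q : Finset (Fin (n+1)) → Fin (n+1),
    ∀ s ∈ edgeF F, p s ≠ q s ∧ s = {p s, q s} := by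
  have : ∀ s ∈ edgeF F, ∃ p q, p ≠ q ∧ s = {p, q} := by
    intro s hs
    exact Finset.card_eq_two.1 hs.2
  choose! p q h using this
  exact ⟨p, q, h⟩

lemma std_lower (F : Set (Finset (Fin (n + 1)))) (k : ℕ) :
    (edgeF F).ncard * (k - 1) ≤ (stdSet F k).ncard := by
  classical
  obtain ⟨p, q, h⟩ := edge_choice F
  have hf : ((edgeF F) ×ˢ (Finset.range (k-1) : Set ℕ)).ncard = (edgeF F).ncard * (k-1) := by
    rw [Set.ncard_prod, Set.ncard_coe_finset, Finset.card_range]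
  rw [← hf]
  apply Set.ncard_le_ncard_of_injOn
    (fun x : Finset (Fin (n+1)) × ℕ => pairMon (p x.1) (q x.1) (x.2+1) (k-1-x.2)) _ _ (stdSet_finite F k)
  · rintro ⟨s, j⟩ ⟨hs, hj⟩
    simp only [Finset.coe_range, Set.mem_Iio] at hj
    constructor
    · have := pairMon_support_eq (p s) (q s) (h s hs).1 (j+1) (k-1-j) (by omega) (by omega)
      simp only [this, ← (h s hs).2]
      exact hs.1
    · simp only [pairMon_degree]; omega
  · rintro ⟨s, j⟩ ⟨hs, hj⟩ ⟨s', j'⟩ ⟨hs', hj'⟩ he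
    simp only [Finset.coe_range, Set.mem_Iio] at hj hj' hs hs' he
    have h1 := pairMon_support_eq (p s) (q s) (h s hs).1 (j+1) (k-1-j) (by omega) (by omega)
    have h2 := pairMon_support_eq (p s') (q s') (h s' hs').1 (j'+1) (k-1-j') (by omega) (by omega)
    rw [he, h2, ← (h s hs).2, ← (h s' hs').2] at h1
    subst h1
    have := pairMon_inj _ _ (h s' hs).1 _ _ _ _ he
    simp only [Prod.mk.injEq, true_and]; omega

lemma std_upper (hG : Good I F w) (k : ℕ) (hk : 1 ≤ k) :
    (stdSet F k).ncard ≤ (n + 1) + (edgeF F).ncard * (k - 1) := by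
  classical
  obtain ⟨p, q, h⟩ := edge_choice F
  have hf : ((edgeF F) ×ˢ (Finset.range (k-1) : Set ℕ)).ncard = (edgeF F).ncard * (k-1) := by
    rw [Set.ncard_prod, Set.ncard_coe_finset, Finset.card_range]
  rw [← hf]
  have hfin : ((edgeF F) ×ˢ (Finset.range (k-1) : Set ℕ)).Finite :=
    (Set.toFinite _).prod (Finset.finite_toSet _)
  have hsub : stdSet F k ⊆ (fun i : Fin (n+1) => Finsupp.single i k) '' Set.univ ∪
    (fun x : Finset (Fin (n+1)) × ℕ => pairMon (p x.1) (q x.1) (x.2+1) (k-1-x.2)) ''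
      ((edgeF F) ×ˢ (Finset.range (k-1) : Set ℕ)) := by
    rintro u ⟨hu, hd⟩
    have hc := hG.card2 _ hu
    have hne : u.support.card ≠ 0 := by
      intro h0
      rw [Finset.card_eq_zero, Finsupp.support_eq_empty] at h0
      subst h0
      simp at hd; omega
    have : u.support.card = 1 ∨ u.support.card = 2 := by omega
    rcases this with h1 | h1
    · left
      obtain ⟨i, hi⟩ := Finset.card_eq_one.1 h1
      refine ⟨i, trivial, ?_⟩
      have : u = Finsupp.single i (u i) := by
        rw [Finsupp.support_eq_singleton] at hi
        exact hi.2
      rw [this, Finsupp.degree_single] at hd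
      simp only
      rw [← hd, ← this]
    · right
      have he : u.support ∈ edgeF F := ⟨hu, h1⟩
      obtain ⟨hpq, hs⟩ := h _ he
      have h2 := pairMon_of_support _ _ hpq u hs.le
      have h3 : u (p u.support) ≠ 0 := by
        rw [← Finsupp.mem_support_iff]; exact hs.ge (by simp)
      have h4 : u (q u.support) ≠ 0 := by
        rw [← Finsupp.mem_support_iff]; exact hs.ge (by simp)
      have h5 : u (p u.support) + u (q u.support) = k := by
        rw [← hd]; nth_rw 5 [h2]; rw [pairMon_degree]
      refine ⟨(u.support, u (p u.support) - 1), ⟨he, ?_⟩, ?_⟩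
      · simp only [Finset.coe_range, Set.mem_Iio]; omega
      · simp only
        nth_rw 7 [h2]
        congr 1 <;> omega
  refine (Set.ncard_le_ncard hsub ((Set.toFinite _).union (hfin.image _))).trans ?_
  refine (Set.ncard_union_le _ _).trans ?_
  gcongr
  · refine (Set.ncard_image_le (Set.toFinite _)).trans ?_
    simp [Set.ncard_univ]
  · exact Set.ncard_image_le hfin

lemma finrank_deg (hG : Good I F w) {M : Type*} [AddCommGroup M] [Module K M]
    (ψ : MvPolynomial (Fin (n+1)) K →ₗ[K] M) (k : ℕ)
    (hψ : ∀ P : MvPolynomial (Fin (n+1)) K, P.IsHomogeneous k → (ψ P = 0 ↔ P ∈ I)) :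
    Module.finrank K (Submodule.map ψ (homogeneousSubmodule (Fin (n+1)) K k)) = (stdSet F k).ncard ∧
    Module.Finite K (Submodule.map ψ (homogeneousSubmodule (Fin (n+1)) K k)) := by
  classical
  have : Fintype (stdSet F k) := (stdSet_finite F k).fintype
  let v : stdSet F k → M := fun u => ψ (monomial u.1 1)
  have hhom : ∀ P ∈ restrictSupport K (stdSet F k), P.IsHomogeneous k := by
    intro P hP u hu
    rw [mem_restrictSupport_iff] at hP
    have := (hP (mem_support_iff.2 hu)).2
    rw [← this, Finsupp.degree_eq_weight_one]; rfl
  have hli : LinearIndependent K v := by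
    rw [Fintype.linearIndependent_iff]
    intro g hg u
    have h1 : ψ (∑ u, g u • monomial u.1 1) = 0 := by
      rw [map_sum, ← hg]; simp [v]
    have h2 : ∑ u, g u • monomial u.1 (1:K) ∈ restrictSupport K (stdSet F k) := by
      apply Submodule.sum_mem
      intro u _
      apply Submodule.smul_mem
      rw [monomial_mem_restrictSupport]
      exact Or.inl u.2
    rw [hψ _ (hhom _ h2)] at h1
    have h3 := hG.indep _ h1 (restrictSupport_mono _ (fun u hu => hu.1) h2)
    have h4 := congrArg (coeff u.1) h3
    simpa [coeff_sum, coeff_monomial, Subtype.val_inj] using h4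
  have hsp : Submodule.map ψ (homogeneousSubmodule (Fin (n+1)) K k) = Submodule.span K (Set.range v) := by
    apply le_antisymm
    · rintro _ ⟨P, hP, rfl⟩
      obtain ⟨G, hG1, hG2⟩ := hG.red {u | u.degree = k} (by intros; simp_all) P (by
        rw [mem_restrictSupport_iff]
        intro u hu
        have := hP (mem_support_iff.1 hu)
        rw [Set.mem_ofPred_eq, ← this, Finsupp.degree_eq_weight_one]; rfl)
      have hG1' : G ∈ restrictSupport K (stdSet F k) := restrictSupport_mono _ (t := stdSet F k) (fun u (hu : _ ∧ _) => ⟨hu.2, hu.1⟩) hG1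
      have : ψ P = ψ G := by
        rw [← sub_eq_zero, ← map_sub, hψ _ ?_]
        · exact hG2
        · exact (homogeneousSubmodule (Fin (n+1)) K k).sub_mem hP (hhom _ hG1')
      rw [this, G.as_sum, map_sum]
      apply Submodule.sum_mem
      intro u hu
      rw [mem_restrictSupport_iff] at hG1'
      have : monomial u (coeff u G) = coeff u G • monomial u (1:K) := by simp [smul_monomial]
      rw [this, map_smul]
      exact Submodule.smul_mem _ _ (Submodule.subset_span ⟨⟨u, hG1' hu⟩, rfl⟩)
    · rw [Submodule.span_le]
      rintro _ ⟨u, rfl⟩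
      refine ⟨monomial u.1 1, hhom _ ?_, rfl⟩
      rw [monomial_mem_restrictSupport]
      exact Or.inl u.2
  rw [hsp, finrank_span_eq_card hli, ← Nat.card_coe_set_eq, Nat.card_eq_fintype_card]
  exact ⟨rfl, Module.Finite.span_of_finite K (Set.finite_range v)⟩
end A5


lemma trans_indep {R A : Type*} [CommRing R] [CommRing A] [Algebra R A] {x : A} (hx : Transcendental R x)
    (N : ℕ) : LinearIndependent R (fun i : Fin N => x ^ (i:ℕ)) := by
  rw [Fintype.linearIndependent_iff]
  intro g hg i
  have h1 : Polynomial.aeval x (∑ i : Fin N, Polynomial.monomial (i:ℕ) (g i)) = 0 := by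
    rw [map_sum, ← hg]
    simp [Polynomial.aeval_monomial, Algebra.smul_def]
  have h2 := congrArg (fun p => Polynomial.coeff p i) (transcendental_iff.1 hx _ h1)
  simpa [Polynomial.finsetSum_coeff, Polynomial.coeff_monomial, Fin.val_inj] using h2

section A6
variable {K : Type*} [Field K] {n : ℕ} {I : Ideal (MvPolynomial (Fin (n + 1)) K)}
  {F : Set (Finset (Fin (n + 1)))} {w : Fin (n + 1) → ℕ} {L : Type*} [Field L] [Algebra K L]
  {π : MvPolynomial (Fin (n + 1)) K →ₐ[K] L}

lemma x_ne (hG : Good I F w) (hπ : ∀ P, π P = 0 ↔ P ∈ I) (l : Fin (n+1)) : π (X l) ≠ 0 := by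
  intro h
  rw [hπ] at h
  have := hG.indep _ h (by
    rw [X, monomial_mem_restrictSupport]
    left
    apply hG.down _ _ (hG.vert l)
    exact Finsupp.support_single_subset)
  exact X_ne_zero _ this

noncomputable def homg (l : Fin (n+1)) (d : ℕ) (p : Polynomial K) : MvPolynomial (Fin (n+1)) K :=
  ∑ i ∈ Finset.range (d+1), monomial (pairMon l (Fin.last n) i (d - i)) (p.coeff i)

lemma homg_coeff (l : Fin (n+1)) (hl : l ≠ Fin.last n) (d : ℕ) (p : Polynomial K) (i : ℕ) (hi : i ≤ d) :
    coeff (pairMon l (Fin.last n) i (d - i)) (homg l d p) = p.coeff i := by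
  classical
  rw [homg, coeff_sum, Finset.sum_eq_single i]
  · simp
  · intro j _ hj
    rw [coeff_monomial, if_neg]
    intro h
    exact hj (pairMon_inj _ _ hl _ _ _ _ h).1
  · intro h
    simp at h; omega

lemma homg_mem (l : Fin (n+1)) (d : ℕ) (p : Polynomial K) :
    homg l d p ∈ restrictSupport K {u | u.support ⊆ {l, Fin.last n} ∧ u.degree = d} := by
  apply Submodule.sum_mem
  intro i hi
  rw [monomial_mem_restrictSupport]
  left
  refine ⟨pairMon_support _ _ _ _, ?_⟩
  rw [pairMon_degree]
  simp at hi; omega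

lemma pairMon_eq (a b : Fin (n+1)) (i j : ℕ) (c : K) :
    monomial (pairMon a b i j) c = C c * (X a ^ i * X b ^ j) := by
  rw [X_pow_eq_monomial, X_pow_eq_monomial, monomial_mul, C_mul_monomial]; simp [pairMon]

lemma homg_pi (hG : Good I F w) (hπ : ∀ P, π P = 0 ↔ P ∈ I)
    (l : Fin (n+1)) (d : ℕ) (p : Polynomial K) (hp : p.natDegree ≤ d) :
    π (homg l d p) = π (X (Fin.last n)) ^ d * Polynomial.aeval (π (X l) / π (X (Fin.last n))) p := by
  rw [Polynomial.aeval_eq_sum_range' (show p.natDegree < d + 1 by omega), homg, map_sum, Finset.mul_sum]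
  apply Finset.sum_congr rfl
  intro i hi
  have hi : i ≤ d := by simp at hi; omega
  have hz := x_ne hG hπ (Fin.last n)
  rw [pairMon_eq, Algebra.smul_def, div_pow]
  simp only [map_mul, map_pow, algHom_C]
  have : π (X (Fin.last n)) ^ d = π (X (Fin.last n)) ^ i * π (X (Fin.last n)) ^ (d-i) := by
    rw [← pow_add]; congr 1; omega
  rw [this]
  field_simp

lemma f_trans (hG : Good I F w) (hπ : ∀ P, π P = 0 ↔ P ∈ I)
    (l : Fin (n+1)) (hl : l ≠ Fin.last n) (he : {l, Fin.last n} ∈ F) :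
    Transcendental K (π (X l) / π (X (Fin.last n))) := by
  rw [transcendental_iff]
  intro p hp
  have h1 := homg_pi hG hπ l _ p le_rfl
  rw [hp, mul_zero, hπ] at h1
  have h2 := hG.indep _ h1 (restrictSupport_mono _ (fun u hu => hG.down _ _ he hu.1) (homg_mem l _ p))
  ext i
  by_cases hi : i ≤ p.natDegree
  · rw [← homg_coeff l hl _ p i hi, h2]; simp
  · rw [Polynomial.coeff_eq_zero_of_natDegree_lt (by omega)]; simp

lemma alg_lemma (hG : Good I F w) (hπ : ∀ P, π P = 0 ↔ P ∈ I)
    (l : Fin (n+1)) (hl : l ≠ Fin.last n) (he : {l, Fin.last n} ∈ F) (a : MvPolynomial (Fin (n+1)) K) (e : ℕ)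
    (ha : a.IsHomogeneous e) :
    IsAlgebraic (Algebra.adjoin K {π (X l) / π (X (Fin.last n))}) (π a / π (X (Fin.last n)) ^ e) := by
  have hz := x_ne hG hπ (Fin.last n)
  set z := π (X (Fin.last n)) with hzdef
  set f := π (X l) / z with hf
  by_contra hcon
  set h := π a / z ^ e with hh
  have h1 : Transcendental (Algebra.adjoin K {f}) h := hcon
  have h2 : Transcendental K (⟨f, Algebra.self_mem_adjoin_singleton K f⟩ : Algebra.adjoin K {f}) := by
    have := f_trans hG hπ l hl he
    rw [transcendental_iff] at this ⊢
    intro p hp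
    apply this
    have := congrArg Subtype.val hp
    rw [Polynomial.aeval_subalgebra_coe] at this
    simpa using this
  have key : ∀ N : ℕ, 1 ≤ N → (N+1)*(N+1) ≤ (n + 1) + (edgeF F).ncard * ((e+1)*N - 1) := by
    intro N hN
    have h3 := linearIndependent_smul (trans_indep h2 (N+1)) (trans_indep h1 (N+1))
    have h4 := h3.map' (LinearMap.mulLeft K (z ^ ((e+1)*N))) (by
      rw [LinearMap.ker_eq_bot]
      exact mul_right_injective₀ (pow_ne_zero _ hz))
    obtain ⟨h5, h6⟩ := finrank_deg hG π.toLinearMap ((e+1)*N) (fun P _ => hπ P)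
    have h7 : ∀ p : Fin (N+1) × Fin (N+1), (LinearMap.mulLeft K (z ^ ((e+1)*N)) ∘ fun p : Fin (N+1) × Fin (N+1) =>
        ((⟨f, Algebra.self_mem_adjoin_singleton K f⟩ : Algebra.adjoin K {f}) ^ (p.1:ℕ)) • h ^ (p.2:ℕ)) p ∈
        (Submodule.map π.toLinearMap (homogeneousSubmodule (Fin (n+1)) K ((e+1)*N))) := by
      rintro ⟨i, j⟩
      obtain ⟨i, hi⟩ := i
      obtain ⟨j, hj⟩ := j
      refine ⟨X l ^ i * a ^ j * X (Fin.last n) ^ ((N - i) + e * (N - j)), ?_, ?_⟩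
      · have : (e + 1) * N = 1 * i + e * j + 1 * ((N - i) + e * (N - j)) := by
          have h0 : e * N = e * j + e * (N - j) := by rw [← Nat.mul_add]; congr 1; omega
          rw [Nat.add_mul, h0]; omega
        rw [this]
        exact (((isHomogeneous_X _ _).pow i).mul (ha.pow j)).mul ((isHomogeneous_X _ _).pow _)
      · simp only [Function.comp, LinearMap.mulLeft_apply, Subalgebra.smul_def]
        simp only [AlgHom.toLinearMap_apply, map_mul, map_pow, hf, hh, ← hzdef]
        have : z ^ ((e+1)*N) = z ^ i * (z ^ e) ^ j * z ^ ((N - i) + e * (N - j)) := by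
          rw [← pow_mul, ← pow_add, ← pow_add]
          congr 1
          have h0 : e * N = e * j + e * (N - j) := by rw [← Nat.mul_add]; congr 1; omega
          rw [Nat.add_mul, h0]; omega
        rw [this]
        simp only [SubmonoidClass.mk_pow, smul_eq_mul, div_pow]
        field_simp
    have h8 : LinearIndependent K (fun p => (⟨_, h7 p⟩ :
      (Submodule.map π.toLinearMap (homogeneousSubmodule (Fin (n+1)) K ((e+1)*N))))) :=
      LinearIndependent.of_comp (Submodule.subtype _) h4
    have h9 := h8.fintype_card_le_finrank
    rw [h5] at h9
    have h10 := std_upper hG ((e+1)*N) (Nat.mul_pos (by omega) hN)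
    simp only [Fintype.card_prod, Fintype.card_fin] at h9
    omega
  have := key (n + 1 + (edgeF F).ncard * (e+1)) (by omega)
  set E := (edgeF F).ncard
  have h2 : E * ((e + 1) * (n + 1 + E * (e + 1)) - 1) ≤ E * ((e + 1) * (n + 1 + E * (e + 1))) :=
    Nat.mul_le_mul_left _ (Nat.sub_le _ _)
  rw [← Nat.mul_assoc] at h2
  generalize E * (e + 1) = A at *
  nlinarith

end A6


section A7
variable {K : Type*} [Field K] {n : ℕ} {I : Ideal (MvPolynomial (Fin (n + 1)) K)}
  {F : Set (Finset (Fin (n + 1)))} {w : Fin (n + 1) → ℕ} {L : Type*} [Field L] [Algebra K L]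
  {π : MvPolynomial (Fin (n + 1)) K →ₐ[K] L}

/-- The subalgebra of elements becoming polynomial after multiplication with a power of `z`. -/
def dehomSub (π : MvPolynomial (Fin (n + 1)) K →ₐ[K] L) : Subalgebra K L where
  carrier := {ξ | ∃ M P, π (X (Fin.last n)) ^ M * ξ = π P}
  mul_mem' := by
    rintro a b ⟨M, P, h⟩ ⟨M', P', h'⟩
    refine ⟨M + M', P * P', ?_⟩
    rw [map_mul, ← h, ← h', pow_add]; ring
  add_mem' := by
    rintro a b ⟨M, P, h⟩ ⟨M', P', h'⟩
    refine ⟨M + M', P * X (Fin.last n) ^ M' + P' * X (Fin.last n) ^ M, ?_⟩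
    rw [map_add, map_mul, map_mul, ← h, ← h', pow_add, map_pow, map_pow]; ring
  algebraMap_mem' := by
    intro r
    exact ⟨0, C r, by simp [algHom_C]⟩

lemma pure_mult (hG : Good I F w) (hπ : ∀ P, π P = 0 ↔ P ∈ I)
    (l : Fin (n+1)) (hl : l ≠ Fin.last n) (he : {l, Fin.last n} ∈ F) (a : MvPolynomial (Fin (n+1)) K) (e : ℕ)
    (ha : a.IsHomogeneous e) (haI : a ∉ I) : ∃ M g, ∃ p : Polynomial K, p ≠ 0 ∧ p.natDegree ≤ M ∧
      a * g - homg l M p ∈ I := by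
  have hz := x_ne hG hπ (Fin.last n)
  have h1 := alg_lemma hG hπ l hl he a e ha
  have ha0 : π a ≠ 0 := by rwa [Ne, hπ]
  have hh : π a / π (X (Fin.last n)) ^ e ≠ 0 := div_ne_zero ha0 (pow_ne_zero _ hz)
  obtain ⟨q, hq, hq0⟩ := h1.exists_nonzero_coeff_and_aeval_eq_zero (mem_nonZeroDivisors_of_ne_zero hh)
  have hhm : π a / π (X (Fin.last n)) ^ e ∈ dehomSub π := ⟨e, a, by field_simp⟩
  have hfm : Algebra.adjoin K {π (X l) / π (X (Fin.last n))} ≤ dehomSub π := by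
    rw [Algebra.adjoin_le_iff, Set.singleton_subset_iff]
    exact ⟨1, X l, by field_simp⟩
  set h := π a / π (X (Fin.last n)) ^ e with hhd
  have h2 : Polynomial.aeval h q.divX ∈ dehomSub π := by
    rw [Polynomial.aeval_eq_sum_range]
    apply Subalgebra.sum_mem
    intro i _
    rw [Subalgebra.smul_def, smul_eq_mul]
    exact Subalgebra.mul_mem _ (hfm (q.divX.coeff i).2) (Subalgebra.pow_mem _ hhm _)
  obtain ⟨M, P, hP⟩ := h2
  have h3 := (Algebra.adjoin_singleton_eq_range_aeval K (π (X l) / π (X (Fin.last n)))).le (q.coeff 0).2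
  obtain ⟨p, hp⟩ := h3
  have hp : Polynomial.aeval (π (X l) / π (X (Fin.last n))) p = (q.coeff 0 : L) := hp
  rw [← Polynomial.divX_mul_X_add q] at hq0
  simp only [map_add, map_mul, Polynomial.aeval_X, Polynomial.aeval_C] at hq0
  have hq0 : (Polynomial.aeval h) q.divX * h + (q.coeff 0 : L) = 0 := hq0
  refine ⟨M + e + p.natDegree, - P * X (Fin.last n) ^ p.natDegree, p, ?_, by omega, ?_⟩
  · rintro rfl
    apply hq
    apply Subtype.ext
    rw [← hp]; simp
  · rw [← hπ, map_sub, homg_pi hG hπ l _ p (by omega), hp]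
    have hha : h * π (X (Fin.last n)) ^ e = π a := by rw [hhd]; field_simp
    simp only [map_mul, map_neg, map_pow, ← hP, ← hha, pow_add]
    linear_combination (-(π (X (Fin.last n)) ^ M * π (X (Fin.last n)) ^ e * π (X (Fin.last n)) ^ p.natDegree)) * hq0

lemma lemS_step (hG : Good I F w)
    (l : Fin (n+1)) (hl : l ≠ Fin.last n) (D θ : ℕ) (P : MvPolynomial (Fin (n+1)) K)
    (hP : P ∈ restrictSupport K {u : Fin (n+1) →₀ ℕ | u.support ∈ F ∧ u.degree = D ∧ Finsupp.weight w u ≤ θ ∧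
      ¬ (u.support ⊆ {l, Fin.last n} ∧ Finsupp.weight w u = θ)}) :
    ∃ H ∈ restrictSupport K {u : Fin (n+1) →₀ ℕ | u.support ∈ F ∧ u.degree = D + 2 ∧
      Finsupp.weight w u < θ + w l}, P * (X l * X (Fin.last n)) - H ∈ I := by
  have h1 : (X l * X (Fin.last n) : MvPolynomial (Fin (n+1)) K) ∈ restrictSupport K {pairMon l (Fin.last n) 1 1} := by
    have := pairMon_eq l (Fin.last n) 1 1 (1:K)
    simp only [pow_one, C_1, one_mul] at this
    rw [← this, monomial_mem_restrictSupport]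
    simp
  have h2 := Submodule.mul_mem_mul hP h1
  rw [← restrictSupport_add] at h2
  refine reduce_of_monomials I _ _ ?_ _ h2
  rintro _ ⟨u, ⟨hu1, hu2, hu3, hu4⟩, _, rfl, rfl⟩
  have hw : Finsupp.weight w (u + pairMon l (Fin.last n) 1 1) = Finsupp.weight w u + w l := by
    rw [map_add, pairMon_weight, hG.last]; simp
  have hd : Finsupp.degree (u + pairMon l (Fin.last n) 1 1) = D + 2 := by
    rw [map_add, pairMon_degree, hu2]
  by_cases hf : (u + pairMon l (Fin.last n) 1 1).support ∈ F
  · refine ⟨monomial (u + pairMon l (Fin.last n) 1 1) 1, ?_, by simp⟩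
    rw [monomial_mem_restrictSupport]
    left
    refine ⟨hf, hd, ?_⟩
    rw [hw]
    have h3 : ({l, Fin.last n} : Finset (Fin (n+1))) ⊆ (u + pairMon l (Fin.last n) 1 1).support := by
      intro x hx
      rw [← pairMon_support_eq l (Fin.last n) hl 1 1 (by simp) (by simp), Finsupp.mem_support_iff] at hx
      rw [Finsupp.mem_support_iff, Finsupp.add_apply]; omega
    have h4 := Finset.eq_of_subset_of_card_le h3 (by rw [Finset.card_pair hl]; exact hG.card2 _ hf)
    have h5 : u.support ⊆ {l, Fin.last n} := by
      rw [h4]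
      intro x hx
      rw [Finsupp.mem_support_iff] at hx
      rw [Finsupp.mem_support_iff, Finsupp.add_apply]; omega
    have : Finsupp.weight w u ≠ θ := fun h => hu4 ⟨h5, h⟩
    omega
  · obtain ⟨G, hG1, hG2⟩ := hG.nf _ hf
    refine ⟨G, restrictSupport_mono _ ?_ hG1, hG2⟩
    rintro u' ⟨h1, h2, h3⟩
    exact ⟨h1, h2.trans hd, by omega⟩

lemma Good.wpos (hG : Good I F w) (l : Fin (n+1)) (hl : l ≠ Fin.last n) : 0 < w l := by
  rw [← hG.last]
  exact hG.anti (lt_of_le_of_ne (Fin.le_last l) hl)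

theorem lemS (hG : Good I F w) (hπ : ∀ P, π P = 0 ↔ P ∈ I)
    (l : Fin (n+1)) (hl : l ≠ Fin.last n) (he : {l, Fin.last n} ∈ F) (a : MvPolynomial (Fin (n+1)) K) (k : ℕ)
    (ha : a.IsHomogeneous k) (haI : a ∉ I) : ∃ (N i : ℕ) (κ : K), κ ≠ 0 ∧ i ≤ k + 2 * N ∧
    ∃ H ∈ restrictSupport K {u : Fin (n+1) →₀ ℕ | u.degree = k + 2 * N ∧ Finsupp.weight w u < i * w l},
    a * (X l * X (Fin.last n)) ^ N - (monomial (pairMon l (Fin.last n) i (k + 2 * N - i)) κ + H) ∈ I := by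
  by_contra hcon
  have hc := hG.wpos l hl
  obtain ⟨c, hc⟩ : ∃ c, w l = c + 1 := ⟨w l - 1, by omega⟩
  obtain ⟨θ0, hθ0⟩ : ∃ θ0, ∀ u ∈ a.support, Finsupp.weight w u ≤ θ0 :=
    ⟨a.support.sup (Finsupp.weight w), fun u hu => Finset.le_sup (f := Finsupp.weight w) hu⟩
  have key : ∀ N, ∃ G ∈ restrictSupport K {u : Fin (n+1) →₀ ℕ | u.support ∈ F ∧ u.degree = k + 2 * N ∧
      Finsupp.weight w u ≤ θ0 + N * c}, a * (X l * X (Fin.last n)) ^ N - G ∈ I := by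
    intro N
    induction N with
    | zero =>
      obtain ⟨G, hG1, hG2⟩ := hG.red {u | u.degree = k ∧ Finsupp.weight w u ≤ θ0} (by
        rintro u ⟨h1, h2⟩ u' h3 h4
        exact ⟨h3.trans h1, by omega⟩) a (by
        rw [mem_restrictSupport_iff]
        intro u hu
        refine ⟨?_, hθ0 u hu⟩
        have := ha (mem_support_iff.1 hu)
        rw [← this, Finsupp.degree_eq_weight_one]; rfl)
      refine ⟨G, restrictSupport_mono _ ?_ hG1, by simpa using hG2⟩
      rintro u ⟨⟨h1, h2⟩, h3⟩
      exact ⟨h3, by simpa using h1, by simpa using h2⟩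
    | succ N ih =>
      obtain ⟨G, hG1, hG2⟩ := ih
      rw [mem_restrictSupport_iff] at hG1
      by_cases hu0 : ∃ u0 ∈ G.support, u0.support ⊆ {l, Fin.last n} ∧ Finsupp.weight w u0 = θ0 + N * c
      · exfalso
        obtain ⟨u0, h1, h2, h3⟩ := hu0
        obtain ⟨i, j, rfl⟩ : ∃ i j, u0 = pairMon l (Fin.last n) i j :=
          ⟨_, _, pairMon_of_support _ _ hl u0 h2⟩
        have hij : i + j = k + 2 * N := by
          rw [← (hG1 h1).2.1, pairMon_degree]
        have hwt : i * w l = θ0 + N * c := by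
          rw [← h3, pairMon_weight, hG.last]; simp
        obtain ⟨H, hH1, hH2⟩ := lemS_step hG l hl (k + 2 * N) (θ0 + N * c)
            (G - monomial (pairMon l (Fin.last n) i j) (coeff (pairMon l (Fin.last n) i j) G)) (by
          rw [mem_restrictSupport_iff]
          intro u hu
          simp only [Finset.mem_coe, mem_support_iff, coeff_sub, coeff_monomial] at hu
          have hne : pairMon l (Fin.last n) i j ≠ u := by
            rintro rfl
            simp at hu
          rw [if_neg hne, sub_zero, ← mem_support_iff] at hu
          refine ⟨(hG1 hu).1, (hG1 hu).2.1, (hG1 hu).2.2, ?_⟩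
          rintro ⟨h5, h6⟩
          apply hne
          have h7 := pairMon_of_support _ _ hl u h5
          rw [h7] at h6 ⊢
          have h8 := (hG1 hu).2.1
          rw [h7, pairMon_degree] at h8
          rw [pairMon_weight, hG.last] at h6
          have : i = u l := Nat.eq_of_mul_eq_mul_right (show 0 < w l by omega) (by omega)
          rw [this]; congr 1; omega)
        apply hcon
        refine ⟨N + 1, i + 1, coeff (pairMon l (Fin.last n) i j) G, mem_support_iff.1 h1, by omega, H, ?_, ?_⟩
        · refine restrictSupport_mono _ ?_ hH1
          rintro u ⟨_, h5, h6⟩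
          refine ⟨by omega, ?_⟩
          rw [Nat.succ_mul]; omega
        · have e1 : monomial (pairMon l (Fin.last n) (i + 1) (k + 2 * (N + 1) - (i + 1)))
              (coeff (pairMon l (Fin.last n) i j) G) = monomial (pairMon l (Fin.last n) i j)
              (coeff (pairMon l (Fin.last n) i j) G) * (X l * X (Fin.last n)) := by
            have : k + 2 * (N + 1) - (i + 1) = j + 1 := by omega
            rw [this, pairMon_eq, pairMon_eq, pow_succ, pow_succ]; ring
          rw [e1]
          have := I.add_mem (I.mul_mem_right (X l * X (Fin.last n)) hG2) hH2
          convert this using 1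
          rw [pow_succ]; ring
      · push Not at hu0
        obtain ⟨H, hH1, hH2⟩ := lemS_step hG l hl (k + 2 * N) (θ0 + N * c) G (by
          rw [mem_restrictSupport_iff]
          intro u hu
          exact ⟨(hG1 hu).1, (hG1 hu).2.1, (hG1 hu).2.2, fun h => hu0 u hu h.1 h.2⟩)
        refine ⟨H, ?_, ?_⟩
        · refine restrictSupport_mono _ ?_ hH1
          rintro u ⟨h4, h5, h6⟩
          refine ⟨h4, by omega, ?_⟩
          rw [Nat.succ_mul]; omega
        · have := I.add_mem (I.mul_mem_right (X l * X (Fin.last n)) hG2) hH2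
          convert this using 1
          rw [pow_succ]; ring
  obtain ⟨M, g, p, hp0, hpM, hg⟩ := pure_mult hG hπ l hl he a k ha haI
  obtain ⟨W, hW⟩ : ∃ W, ∀ u ∈ g.support, Finsupp.weight w u ≤ W :=
    ⟨g.support.sup (Finsupp.weight w), fun u hu => Finset.le_sup (f := Finsupp.weight w) hu⟩
  set N := θ0 + W + 1 with hN
  obtain ⟨G, hG1, hG2⟩ := key N
  have h1 : g * G ∈ restrictSupport K {u | Finsupp.weight w u ≤ W + (θ0 + N * c)} := by
    have := Submodule.mul_mem_mul (show g ∈ restrictSupport K {u | Finsupp.weight w u ≤ W} from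
      (mem_restrictSupport_iff K).2 hW) hG1
    rw [← restrictSupport_add] at this
    refine restrictSupport_mono _ ?_ this
    rintro _ ⟨u, hu, v, ⟨_, _, hv⟩, rfl⟩
    have hu : Finsupp.weight w u ≤ W := hu
    change Finsupp.weight w (u + v) ≤ _
    rw [map_add]; omega
  obtain ⟨G', hG3, hG4⟩ := hG.red _ (by
    intro u hu u' _ h
    have hu : Finsupp.weight w u ≤ W + (θ0 + N * c) := hu
    change Finsupp.weight w u' ≤ W + (θ0 + N * c)
    omega) _ h1
  have h2 : homg l M p * (X l * X (Fin.last n)) ^ N ∈ restrictSupport K {u : Fin (n+1) →₀ ℕ | u.support ∈ F ∧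
      N * w l ≤ Finsupp.weight w u} := by
    have e1 : ((X l * X (Fin.last n)) ^ N : MvPolynomial (Fin (n+1)) K) =
        monomial (pairMon l (Fin.last n) N N) 1 := by
      rw [pairMon_eq, mul_pow]; simp
    have h3 : ((X l * X (Fin.last n)) ^ N : MvPolynomial (Fin (n+1)) K) ∈
        restrictSupport K {pairMon l (Fin.last n) N N} := by
      rw [e1, monomial_mem_restrictSupport]; simp
    have := Submodule.mul_mem_mul (homg_mem l M p) h3
    rw [← restrictSupport_add] at this
    refine restrictSupport_mono _ ?_ this
    rintro _ ⟨u, hu, _, rfl, rfl⟩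
    refine ⟨hG.down _ _ he ?_, ?_⟩
    · refine Finsupp.support_add.trans ?_
      exact Finset.union_subset hu.1 (pairMon_support _ _ _ _)
    · change _ ≤ Finsupp.weight w (u + _)
      rw [map_add, pairMon_weight, hG.last]; omega
  have h3 : homg l M p * (X l * X (Fin.last n)) ^ N - G' = 0 := by
    apply hG.indep
    · have h5 := I.mul_mem_right ((X l * X (Fin.last n)) ^ N) hg
      have h6 := I.mul_mem_left g hG2
      have h7 := I.sub_mem (I.add_mem h6 hG4) h5
      convert h7 using 1
      ring
    · exact Submodule.sub_mem _ (restrictSupport_mono _ (fun u hu => hu.1) h2)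
        (restrictSupport_mono _ (fun u hu => hu.2) hG3)
  have h4 : homg l M p * (X l * X (Fin.last n)) ^ N ≠ 0 := by
    apply mul_ne_zero
    · intro h
      apply hp0
      ext i
      by_cases hi : i ≤ M
      · rw [← homg_coeff l hl M p i hi, h]; simp
      · rw [Polynomial.coeff_eq_zero_of_natDegree_lt (by omega)]; simp
    · exact pow_ne_zero _ (mul_ne_zero (X_ne_zero _) (X_ne_zero _))
  obtain ⟨u, hu⟩ := Finset.nonempty_of_ne_empty (mt support_eq_empty.1 h4)
  have h5 := ((mem_restrictSupport_iff K).1 h2 hu).2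
  rw [sub_eq_zero.1 h3] at hu
  have h6 : Finsupp.weight w u ≤ W + (θ0 + N * c) := ((mem_restrictSupport_iff K).1 hG3 hu).1
  rw [hc, Nat.mul_succ] at h5
  omega

end A7


lemma exists_best {ι Γ : Type*} [LinearOrderedCommGroupWithZero Γ] (φ : ι → Γ) (c : ι → ℕ)
    (s : Finset ι) (hs : s.Nonempty) (hc : ∀ i ∈ s, c i ≠ 0) :
    ∃ l ∈ s, ∀ m ∈ s, φ m ^ c l ≤ φ l ^ c m := by
  classical
  induction hs using Finset.Nonempty.cons_induction with
  | singleton a => exact ⟨a, by simp, by simp⟩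
  | cons a s ha hs ih =>
    obtain ⟨l, hl, h⟩ := ih (fun i hi => hc i (Finset.mem_cons_of_mem hi))
    by_cases h1 : φ a ^ c l ≤ φ l ^ c a
    · refine ⟨l, Finset.mem_cons_of_mem hl, ?_⟩
      intro m hm
      rcases Finset.mem_cons.1 hm with rfl | hm
      · exact h1
      · exact h m hm
    · refine ⟨a, Finset.mem_cons_self _ _, ?_⟩
      intro m hm
      rcases Finset.mem_cons.1 hm with rfl | hm
      · rfl
      · push Not at h1
        have hcl := hc l (Finset.mem_cons_of_mem hl)
        rw [← pow_le_pow_iff_left₀ zero_le zero_le hcl]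
        calc (φ m ^ c a) ^ c l = (φ m ^ c l) ^ c a := by rw [← pow_mul, ← pow_mul, mul_comm]
          _ ≤ (φ l ^ c m) ^ c a := pow_le_pow_left₀ zero_le (h m hm) _
          _ = (φ l ^ c a) ^ c m := by rw [← pow_mul, ← pow_mul, mul_comm]
          _ ≤ (φ a ^ c l) ^ c m := pow_le_pow_left₀ zero_le h1.le _
          _ = (φ a ^ c m) ^ c l := by rw [← pow_mul, ← pow_mul, mul_comm]

section A8
variable {K : Type*} [Field K] {n : ℕ} {I : Ideal (MvPolynomial (Fin (n + 1)) K)}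
  {F : Set (Finset (Fin (n + 1)))} {w : Fin (n + 1) → ℕ} {L : Type*} [Field L] [Algebra K L]
  {π : MvPolynomial (Fin (n + 1)) K →ₐ[K] L}
  {Γ : Type*} [LinearOrderedCommGroupWithZero Γ]

lemma val_bound (v : Valuation L Γ) (hv : ∀ c : K, v (algebraMap K L c) ≤ 1) (x0 : L) (hx0 : x0 ≠ 0)
    (β : ℕ) (hβ : β ≠ 0) (T ψ : Γ) (hψ : 1 < ψ)
    (hφ : ∀ m, v (π (X m) / x0) ^ β * T ≤ ψ ^ w m) (k θ : ℕ) (P : MvPolynomial (Fin (n+1)) K)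
    (hP : P ∈ restrictSupport K {u : Fin (n+1) →₀ ℕ | u.degree = k ∧ Finsupp.weight w u < θ}) :
    v (π P / x0 ^ k) ^ β * T ^ k < ψ ^ θ := by
  have hψ0 : 0 < ψ := lt_trans zero_lt_one hψ
  have mon : ∀ u : Fin (n+1) →₀ ℕ, v (π (monomial u 1) / x0 ^ u.degree) ^ β * T ^ u.degree
      ≤ ψ ^ Finsupp.weight w u := by
    intro u
    induction u using Finsupp.induction_linear with
    | zero => simp
    | add f g hf hg =>
      have e : (monomial (f + g) (1:K)) = monomial f 1 * monomial g 1 := by simp [monomial_mul]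
      rw [e, map_mul, map_add, map_add, pow_add, pow_add, pow_add, mul_div_mul_comm, map_mul, mul_pow]
      calc _ = (v (π (monomial f 1) / x0 ^ f.degree) ^ β * T ^ f.degree) *
          (v (π (monomial g 1) / x0 ^ g.degree) ^ β * T ^ g.degree) := by
            rw [mul_mul_mul_comm]
        _ ≤ _ := mul_le_mul' hf hg
    | single m i =>
      rw [Finsupp.degree_single, Finsupp.weight_single, ← X_pow_eq_monomial, map_pow, ← div_pow, map_pow,
        smul_eq_mul, mul_comm i, pow_mul, ← pow_mul, mul_comm i, pow_mul, ← mul_pow]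
      exact pow_le_pow_left₀ zero_le (hφ m) _
  rw [mem_restrictSupport_iff] at hP
  have : ∀ s : Finset (Fin (n+1) →₀ ℕ), s ⊆ P.support →
      v (π (∑ u ∈ s, monomial u (coeff u P)) / x0 ^ k) ^ β * T ^ k < ψ ^ θ := by
    intro s
    induction s using Finset.induction_on with
    | empty => intro _; simp [hβ]; exact pow_pos hψ0 _
    | insert u s hus ih =>
      intro hs
      rw [Finset.sum_insert hus, map_add, add_div]
      rcases v.map_add' (π (monomial u (coeff u P)) / x0 ^ k)
        (π (∑ u ∈ s, monomial u (coeff u P)) / x0 ^ k) with h | h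
      · refine lt_of_le_of_lt (mul_le_mul_left (pow_le_pow_left₀ zero_le h _) _) ?_
        obtain ⟨h1, h2⟩ := hP (hs (Finset.mem_insert_self u s))
        have e : monomial u (coeff u P) = C (coeff u P) * monomial u 1 := by simp [C_mul_monomial]
        have h3 := mon u
        rw [h1] at h3
        rw [e, map_mul, algHom_C, mul_div_assoc, map_mul, mul_pow]
        calc _ ≤ 1 * v (π (monomial u 1) / x0 ^ k) ^ β * T ^ k := by
              gcongr
              exact pow_le_one' (hv _) _
          _ ≤ ψ ^ Finsupp.weight w u := by rwa [one_mul]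
          _ < ψ ^ θ := pow_lt_pow_right₀ hψ h2
      · exact lt_of_le_of_lt (mul_le_mul_left (pow_le_pow_left₀ zero_le h _) _)
          (ih (fun x hx => hs (Finset.mem_insert_of_mem hx)))
  have h := this P.support subset_rfl
  rwa [← P.as_sum] at h

/-- The leading form, seen by valuations. -/
lemma lead_val (hG : Good I F w) (hπ : ∀ P, π P = 0 ↔ P ∈ I) (v : Valuation L Γ)
    (hv : ∀ c : K, v (algebraMap K L c) ≤ 1)
    (l : Fin (n+1)) (hl : l ≠ Fin.last n) (hf : 1 < v (π (X l) / π (X (Fin.last n))))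
    (hφ : ∀ m, v (π (X m) / π (X (Fin.last n))) ^ w l ≤ v (π (X l) / π (X (Fin.last n))) ^ w m)
    (a : MvPolynomial (Fin (n+1)) K) (k N i : ℕ) (κ : K) (hi : i ≤ k + 2 * N)
    (H : MvPolynomial (Fin (n+1)) K)
    (hH : H ∈ restrictSupport K {u : Fin (n+1) →₀ ℕ | u.degree = k + 2 * N ∧ Finsupp.weight w u < i * w l})
    (h : a * (X l * X (Fin.last n)) ^ N - (monomial (pairMon l (Fin.last n) i (k + 2 * N - i)) κ + H) ∈ I) :
    v (π a / π (X (Fin.last n)) ^ k * (π (X l) / π (X (Fin.last n))) ^ N -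
      algebraMap K L κ * (π (X l) / π (X (Fin.last n))) ^ i) < v (π (X l) / π (X (Fin.last n))) ^ i := by
  have hz := x_ne hG hπ (Fin.last n)
  have hw := hG.wpos l hl
  have h1 := val_bound v hv _ hz (w l) hw.ne' 1 _ hf (by simpa using hφ) _ _ H hH
  rw [one_pow, mul_one, pow_mul, pow_lt_pow_iff_left₀ zero_le zero_le hw.ne'] at h1
  convert h1 using 2
  rw [← hπ, map_sub, map_add, pairMon_eq] at h
  simp only [map_mul, map_pow, algHom_C] at h
  generalize π (X (Fin.last n)) = z at *
  generalize π (X l) = x at *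
  generalize π a = a at *
  generalize algebraMap K L κ = κ at *
  obtain ⟨j, hj⟩ : ∃ j, k + 2 * N = i + j := ⟨k + 2 * N - i, by omega⟩
  rw [hj, Nat.add_sub_cancel_left] at h
  have e1 : z ^ (k + 2 * N) = z ^ k * z ^ N * z ^ N := by rw [← pow_add, ← pow_add]; congr 1; omega
  have e2 : π H = a * (x * z) ^ N - κ * (x ^ i * z ^ j) := by linear_combination -h
  have e3 : a * (x * z) ^ N / z ^ (k + 2 * N) = a / z ^ k * (x / z) ^ N := by
    rw [e1, div_pow, mul_pow]; field_simp
  have e4 : κ * (x ^ i * z ^ j) / z ^ (k + 2 * N) = κ * (x / z) ^ i := by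
    rw [hj, pow_add, div_pow]; field_simp
  rw [e2, sub_div, e3, e4]

lemma val_of_lead (v : Valuation L Γ) (hv : ∀ c : K, v (algebraMap K L c) ≤ 1) (κ : K) (hκ : κ ≠ 0)
    (g f : L) (h : v (g - algebraMap K L κ * f) < v f) : v g = v f := by
  have h1 : v (algebraMap K L κ) = 1 := by
    apply le_antisymm (hv κ)
    have := hv κ⁻¹
    rw [map_inv₀, map_inv₀] at this
    have h0 : v (algebraMap K L κ) ≠ 0 := by simpa using hκ
    exact (inv_le_one₀ (zero_lt_iff.2 h0)).1 this
  have h2 : v (algebraMap K L κ * f) = v f := by rw [map_mul, h1, one_mul]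
  have := Valuation.map_add_eq_of_lt_right v (x := g - algebraMap K L κ * f) (y := algebraMap K L κ * f) (by rwa [h2])
  rwa [sub_add_cancel, h2] at this

lemma edge_val (hG : Good I F w) (hπ : ∀ P, π P = 0 ↔ P ∈ I) (v : Valuation L Γ)
    (hv : ∀ c : K, v (algebraMap K L c) ≤ 1)
    (l1 : Fin (n+1)) (hl1 : l1 ≠ Fin.last n) (hmax : ∀ m, m ≠ Fin.last n → m ≤ l1)
    (hf : 1 < v (π (X l1) / π (X (Fin.last n)))) :
    ∀ m, v (π (X m) / π (X (Fin.last n))) ^ w l1 ≤ v (π (X l1) / π (X (Fin.last n))) ^ w m := by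
  classical
  have hz := x_ne hG hπ (Fin.last n)
  obtain ⟨l, hl, hbest⟩ := exists_best (fun m => v (π (X m) / π (X (Fin.last n)))) w
    (Finset.univ.filter (· ≠ Fin.last n)) ⟨l1, by simp [hl1]⟩ (by
      intro i hi
      exact (hG.wpos i (by simpa using hi)).ne')
  have hl : l ≠ Fin.last n := by simpa using hl
  have hφ : ∀ m, v (π (X m) / π (X (Fin.last n))) ^ w l ≤ v (π (X l) / π (X (Fin.last n))) ^ w m := by
    intro m
    by_cases hm : m = Fin.last n
    · subst hm
      rw [div_self hz, hG.last]; simp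
    · exact hbest m (by simpa using hm)
  have hwl := hG.wpos l hl
  have hwl1 := hG.wpos l1 hl1
  have hfl : 1 < v (π (X l) / π (X (Fin.last n))) := by
    have h1 := hφ l1
    have h2 := one_lt_pow₀ hf hwl.ne'
    by_contra h3
    push Not at h3
    have := pow_le_one₀ (n := w l1) zero_le h3
    exact absurd (h2.trans_le (h1.trans this)) (lt_irrefl _)
  suffices l = l1 by subst this; exact hφ
  have he : ({l, Fin.last n} : Finset (Fin (n+1))) ∈ F := by
    by_contra he
    obtain ⟨G, hG1, hG2⟩ := hG.nf (pairMon l (Fin.last n) 1 1) (by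
      rwa [pairMon_support_eq l _ hl 1 1 (by simp) (by simp)])
    have hb := val_bound v hv _ hz (w l) hwl.ne' 1 _ hfl (by simpa using hφ) 2 (w l) G
      (restrictSupport_mono _ (by
        rintro u ⟨h1, h2, h3⟩
        rw [pairMon_degree] at h2
        rw [pairMon_weight, hG.last] at h3
        exact ⟨h2, by omega⟩) hG1)
    rw [← hπ, map_sub, pairMon_eq, sub_eq_zero] at hG2
    rw [← hG2] at hb
    simp only [C_1, one_mul, pow_one, map_mul, one_pow, mul_one] at hb
    have e : π (X l) * π (X (Fin.last n)) / π (X (Fin.last n)) ^ 2 = π (X l) / π (X (Fin.last n)) := by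
      field_simp
    rw [e] at hb
    exact lt_irrefl _ hb
  have hXI : (X l1 : MvPolynomial (Fin (n+1)) K) ∉ I := by
    rw [← hπ]; exact x_ne hG hπ l1
  obtain ⟨N, i, κ, hκ, hi, H, hH, h⟩ := lemS hG hπ l hl he (X l1) 1 (isHomogeneous_X _ _) hXI
  have h1 := lead_val hG hπ v hv l hl hfl hφ _ 1 N i κ hi H hH h
  rw [← map_pow v] at h1
  have h2 := val_of_lead v hv κ hκ _ _ h1
  rw [pow_one, map_mul, map_pow, map_pow] at h2
  have hNi : N < i := by
    by_contra hc
    push Not at hc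
    have h3 : v (π (X l) / π (X (Fin.last n))) ^ i ≤ v (π (X l) / π (X (Fin.last n))) ^ N :=
      pow_le_pow_right₀ hfl.le hc
    rw [← h2] at h3
    have h4 : 0 < v (π (X l) / π (X (Fin.last n))) ^ N := pow_pos (zero_lt_one.trans hfl) _
    have h5 := (mul_le_iff_le_one_left h4).1 h3
    exact absurd (hf.trans_le h5) (lt_irrefl _)
  have h3 : v (π (X l) / π (X (Fin.last n))) ≤ v (π (X l1) / π (X (Fin.last n))) := by
    have h4 : 0 < v (π (X l) / π (X (Fin.last n))) ^ N := pow_pos (zero_lt_one.trans hfl) _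
    rw [← mul_le_mul_iff_left₀ h4, h2, ← pow_succ']
    exact pow_le_pow_right₀ hfl.le hNi
  have h4 : w l ≤ w l1 := by
    have h5 := (hφ l1).trans (pow_le_pow_left₀ zero_le h3 _)
    exact (pow_le_pow_iff_right₀ hf).1 h5
  exact le_antisymm (hmax l hl) (hG.anti.le_iff_ge.1 h4)

end A8


lemma integral_of_val {A L : Type*} [CommRing A] [Field L] [Algebra A L] (ξ : L)
    (h : ∀ O : ValuationSubring L, (∀ a, algebraMap A L a ∈ O) → ξ ∈ O) : IsIntegral A ξ := by
  have h1 : ξ ∈ (⨅ V : {V : ValuationSubring L // Set.range (algebraMap A L) ⊆ V.toSubring}, V.1.toSubring) := by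
    rw [Subring.mem_iInf]
    rintro ⟨O, hO⟩
    exact h O (fun a => hO ⟨a, rfl⟩)
  rw [iInf_valuationSubring_superset] at h1
  have h2 : IsIntegral (Subring.closure (Set.range (algebraMap A L))) ξ := h1
  let φ : A →+* Subring.closure (Set.range (algebraMap A L)) :=
    (algebraMap A L).codRestrict _ (fun a => Subring.subset_closure ⟨a, rfl⟩)
  letI := φ.toAlgebra
  haveI : IsScalarTower A (Subring.closure (Set.range (algebraMap A L))) L :=
    IsScalarTower.of_algebraMap_eq (fun a => rfl)
  haveI : Algebra.IsIntegral A (Subring.closure (Set.range (algebraMap A L))) := by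
    constructor
    rintro ⟨t, ht⟩
    have : Subring.closure (Set.range (algebraMap A L)) ≤ (algebraMap A L).range := by
      rw [Subring.closure_le]; rintro _ ⟨a, rfl⟩; exact ⟨a, rfl⟩
    obtain ⟨a, ha⟩ := this ht
    have e : (⟨t, ht⟩ : Subring.closure (Set.range (algebraMap A L))) = algebraMap A _ a := Subtype.ext ha.symm
    rw [e]
    exact isIntegral_algebraMap
  exact isIntegral_trans ξ h2

lemma mem_of_integral {A L : Type*} [CommRing A] [Field L] [Algebra A L] (ξ : L) (hξ : IsIntegral A ξ)
    (O : ValuationSubring L) (hO : ∀ a, algebraMap A L a ∈ O) : ξ ∈ O := by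
  let φ : A →+* O := (algebraMap A L).codRestrict O.toSubring hO
  obtain ⟨p, hp, h0⟩ := hξ
  have : IsIntegral O ξ := by
    refine ⟨p.map φ, hp.map φ, ?_⟩
    rw [Polynomial.eval₂_map]
    exact h0
  obtain ⟨y, rfl⟩ := IsIntegrallyClosed.isIntegral_iff.1 this
  exact y.2

section A9
variable {K : Type*} [Field K] {n : ℕ} {I : Ideal (MvPolynomial (Fin (n + 1)) K)}
  {F : Set (Finset (Fin (n + 1)))} {w : Fin (n + 1) → ℕ} {L : Type*} [Field L] [Algebra K L]
  {π : MvPolynomial (Fin (n + 1)) K →ₐ[K] L}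

lemma edge_last (hG : Good I F w) (hπ : ∀ P, π P = 0 ↔ P ∈ I)
    (l1 : Fin (n+1)) (hl1 : l1 ≠ Fin.last n) (hmax : ∀ m, m ≠ Fin.last n → m ≤ l1) :
    ({l1, Fin.last n} : Finset (Fin (n+1))) ∈ F := by
  classical
  by_contra he
  have hz := x_ne hG hπ (Fin.last n)
  obtain ⟨G, hG1, hG2⟩ := hG.nf (pairMon l1 (Fin.last n) 1 1) (by
    rwa [pairMon_support_eq l1 _ hl1 1 1 (by simp) (by simp)])
  have hsub : G ∈ restrictSupport K {Finsupp.single (Fin.last n) 2} := by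
    refine restrictSupport_mono _ ?_ hG1
    rintro u ⟨_, h2, h3⟩
    rw [pairMon_degree] at h2
    rw [pairMon_weight, hG.last] at h3
    have h4 : ∀ m, m ≠ Fin.last n → u m = 0 := by
      intro m hm
      by_contra hne
      have h5 : u m • w m ≤ ∑ i, u i • w i :=
        Finset.single_le_sum (f := fun i => u i • w i) (fun _ _ => Nat.zero_le _) (Finset.mem_univ m)
      rw [← Finsupp.weight_eq_sum, smul_eq_mul] at h5
      have h6 : w l1 ≤ w m := hG.anti.antitone (hmax m hm)
      have h7 : 1 * w m ≤ u m * w m := Nat.mul_le_mul_right _ (by omega)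
      omega
    have h5 : u = Finsupp.single (Fin.last n) (u (Fin.last n)) := by
      ext m
      by_cases hm : m = Fin.last n
      · subst hm; simp
      · rw [h4 m hm, Finsupp.single_eq_of_ne hm]
    rw [h5, Finsupp.degree_single] at h2
    rw [Set.mem_singleton_iff, h5, h2]
  have hGe : G = monomial (Finsupp.single (Fin.last n) 2) (coeff (Finsupp.single (Fin.last n) 2) G) := by
    ext u
    rw [coeff_monomial]
    split_ifs with h
    · rw [h]
    · by_contra hne
      rw [mem_restrictSupport_iff] at hsub
      exact h (hsub (mem_support_iff.2 hne)).symm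
  set c := coeff (Finsupp.single (Fin.last n) 2) G
  have h1 : X l1 - C c * X (Fin.last n) ∈ I := by
    rw [← hπ] at hG2 ⊢
    rw [hGe, pairMon_eq] at hG2
    have e : monomial (Finsupp.single (Fin.last n) 2) c = C c * X (Fin.last n) ^ 2 := by
      rw [X_pow_eq_monomial, C_mul_monomial, mul_one]
    rw [e] at hG2
    have : π (X (Fin.last n)) * π (X l1 - C c * X (Fin.last n)) = 0 := by
      rw [← hG2, ← map_mul]; congr 1; simp only [C_1, pow_one]; ring
    exact (mul_eq_zero.1 this).resolve_left hz
  have h2 := hG.indep _ h1 (by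
    apply Submodule.sub_mem
    · rw [X, monomial_mem_restrictSupport]
      left
      exact hG.down _ _ (hG.vert l1) Finsupp.support_single_subset
    · rw [C_mul_X_eq_monomial, monomial_mem_restrictSupport]
      left
      exact hG.down _ _ (hG.vert (Fin.last n)) Finsupp.support_single_subset)
  have h3 := congrArg (coeff (Finsupp.single l1 1)) h2
  rw [C_mul_X_eq_monomial, X, coeff_sub, coeff_monomial, coeff_monomial, if_pos rfl, if_neg, coeff_zero] at h3
  · simp at h3
  · intro h
    exact hl1 (Finsupp.single_left_injective one_ne_zero h).symm

lemma lead_all (hG : Good I F w) (hπ : ∀ P, π P = 0 ↔ P ∈ I)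
    (l1 : Fin (n+1)) (hl1 : l1 ≠ Fin.last n) (hmax : ∀ m, m ≠ Fin.last n → m ≤ l1) (f : L)
    (hf : f = π (X l1) / π (X (Fin.last n))) : ∀ (a : MvPolynomial (Fin (n+1)) K) (k : ℕ), a.IsHomogeneous k → a ∉ I → ∃ (N i : ℕ) (κ : K), κ ≠ 0 ∧
      ∀ O : ValuationSubring L, (∀ c : K, algebraMap K L c ∈ O) → f ∉ O →
      O.valuation (π a / π (X (Fin.last n)) ^ k * f ^ N - algebraMap K L κ * f ^ i) < O.valuation f ^ i := by
    have he := edge_last hG hπ l1 hl1 hmax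
    intro a k ha haI
    obtain ⟨N, i, κ, hκ, hi, H, hH, h⟩ := lemS hG hπ l1 hl1 he a k ha haI
    refine ⟨N, i, κ, hκ, ?_⟩
    intro O hO hfO
    have hv : ∀ c : K, O.valuation (algebraMap K L c) ≤ 1 := fun c => (O.valuation_le_one_iff _).2 (hO c)
    have hf1 : 1 < O.valuation f := by
      rw [← not_le, O.valuation_le_one_iff]; exact hfO
    rw [hf] at hf1 ⊢
    exact lead_val hG hπ O.valuation hv l1 hl1 hf1 (edge_val hG hπ O.valuation hv l1 hl1 hmax hf1) a k N i κ hi H hH h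

lemma five_c [IsAlgClosed K] (hG : Good I F w) (hπ : ∀ P, π P = 0 ↔ P ∈ I)
    (l1 : Fin (n+1)) (hl1 : l1 ≠ Fin.last n) (hmax : ∀ m, m ≠ Fin.last n → m ≤ l1) (f : L)
    (hf : f = π (X l1) / π (X (Fin.last n))) (j : ℕ) : ∀ (a : MvPolynomial (Fin (n+1)) K) (k : ℕ)
    (_ : a.IsHomogeneous k)
    (_ : IsIntegral (Algebra.adjoin K {f}) (π a / π (X (Fin.last n)) ^ k))
    (_ : ∀ O : ValuationSubring L, (∀ c : K, algebraMap K L c ∈ O) → f ∉ O →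
      O.valuation (π a / π (X (Fin.last n)) ^ k) < O.valuation f ^ j),
    π a / π (X (Fin.last n)) ^ k ∈ Algebra.adjoin K {f} := by
  have hz := x_ne hG hπ (Fin.last n)
  have he := edge_last hG hπ l1 hl1 hmax
  have base : ∀ ξ : L, IsIntegral (Algebra.adjoin K {f}) ξ → (∀ O : ValuationSubring L, (∀ c : K, algebraMap K L c ∈ O) → f ∉ O →
      ξ ∈ O) → ξ ∈ Algebra.adjoin K {f} := by
    intro ξ hξ h
    have h1 : IsIntegral K ξ := by
      apply integral_of_val
      intro O hO
      by_cases hfO : f ∈ O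
      · apply mem_of_integral ξ hξ O
        rintro ⟨a, ha⟩
        change a ∈ O
        refine Algebra.adjoin_induction (p := fun x _ => x ∈ O) ?_ hO (fun x y _ _ hx hy => O.add_mem _ _ hx hy)
          (fun x y _ _ hx hy => O.mul_mem _ _ hx hy) ha
        rintro x rfl
        exact hfO
      · exact h O hO hfO
    have h2 := h1.mem_range_algebraMap_of_minpoly_splits (K := K) (by
      exact IsAlgClosed.splits _)
    obtain ⟨c, rfl⟩ := h2
    exact Subalgebra.algebraMap_mem _ c
  have lead := lead_all hG hπ l1 hl1 hmax f hf
  induction j with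
  | zero =>
    intro a k ha hint hval
    apply base _ hint
    intro O hO hfO
    have := hval O hO hfO
    rw [pow_zero] at this
    exact (O.valuation_le_one_iff _).1 this.le
  | succ j ih =>
    intro a k ha hint hval
    by_cases haI : a ∈ I
    · rw [(hπ a).2 haI, zero_div]; exact Subalgebra.zero_mem _
    obtain ⟨N, i, κ, hκ, hlead⟩ := lead a k ha haI
    by_cases hex : ∃ O : ValuationSubring L, (∀ c : K, algebraMap K L c ∈ O) ∧ f ∉ O
    swap
    · apply base _ hint
      intro O hO hfO
      exact absurd ⟨O, hO, hfO⟩ hex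
    have heq : ∀ O : ValuationSubring L, (∀ c : K, algebraMap K L c ∈ O) → f ∉ O →
        1 < O.valuation f ∧
        O.valuation (π a / π (X (Fin.last n)) ^ k) * O.valuation f ^ N = O.valuation f ^ i := by
      intro O hO hfO
      have hv : ∀ c : K, O.valuation (algebraMap K L c) ≤ 1 := fun c => (O.valuation_le_one_iff _).2 (hO c)
      have hf1 : 1 < O.valuation f := by
        rw [← not_le, O.valuation_le_one_iff]; exact hfO
      have := hlead O hO hfO
      rw [← map_pow O.valuation] at this
      have := val_of_lead O.valuation hv κ hκ _ _ this
      rw [map_mul, map_pow, map_pow] at this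
      exact ⟨hf1, this⟩
    have hij : i ≤ N + j := by
      obtain ⟨O, hO, hfO⟩ := hex
      obtain ⟨h1, h2⟩ := heq O hO hfO
      have h3 := hval O hO hfO
      have h4 : 0 < O.valuation f ^ N := pow_pos (zero_lt_one.trans h1) _
      rw [← mul_lt_mul_iff_left₀ h4, h2, ← pow_add, pow_lt_pow_iff_right₀ h1] at h3
      omega
    rcases lt_or_eq_of_le hij with hlt | hEq
    · apply ih a k ha hint
      intro O hO hfO
      obtain ⟨h1, h2⟩ := heq O hO hfO
      have h4 : 0 < O.valuation f ^ N := pow_pos (zero_lt_one.trans h1) _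
      rw [← mul_lt_mul_iff_left₀ h4, h2, ← pow_add, pow_lt_pow_iff_right₀ h1]
      omega
    · have hfm : f ∈ Algebra.adjoin K {f} := Algebra.self_mem_adjoin_singleton K f
      have hκf : algebraMap K L κ * f ^ j ∈ Algebra.adjoin K {f} :=
        Subalgebra.mul_mem _ (Subalgebra.algebraMap_mem _ _) (Subalgebra.pow_mem _ hfm _)
      have e : π (a * X (Fin.last n) ^ j - C κ * X l1 ^ j * X (Fin.last n) ^ k) / π (X (Fin.last n)) ^ (k + j) =
          π a / π (X (Fin.last n)) ^ k - algebraMap K L κ * f ^ j := by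
        simp only [map_sub, map_mul, map_pow, algHom_C, hf, pow_add, div_pow]
        field_simp
      have := ih (a * X (Fin.last n) ^ j - C κ * X l1 ^ j * X (Fin.last n) ^ k) (k + j) (by
        apply IsHomogeneous.sub
        · have := ha.mul ((isHomogeneous_X K (Fin.last n)).pow j)
          rwa [one_mul] at this
        · have := ((isHomogeneous_C (Fin (n+1)) κ).mul ((isHomogeneous_X K l1).pow j)).mul
            ((isHomogeneous_X K (Fin.last n)).pow k)
          rwa [show 0 + 1 * j + 1 * k = k + j by omega] at this) (by
        rw [e]
        exact hint.sub (isIntegral_algebraMap (x := (⟨_, hκf⟩ : Algebra.adjoin K {f})))) (by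
        intro O hO hfO
        rw [e]
        obtain ⟨h1, h2⟩ := heq O hO hfO
        have h4 : 0 < O.valuation f ^ N := pow_pos (zero_lt_one.trans h1) _
        rw [← mul_lt_mul_iff_left₀ h4, ← pow_add, ← map_pow O.valuation f N, ← map_mul]
        have := hlead O hO hfO
        convert this using 1
        · congr 1
          rw [hEq, pow_add]; ring
        · rw [hEq, add_comm])
      rw [e] at this
      have h9 := Subalgebra.add_mem _ this hκf
      rwa [sub_add_cancel] at h9

lemma rat_lemma [IsAlgClosed K] (hG : Good I F w) (hπ : ∀ P, π P = 0 ↔ P ∈ I)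
    (l1 : Fin (n+1)) (hl1 : l1 ≠ Fin.last n) (hmax : ∀ m, m ≠ Fin.last n → m ≤ l1) (f : L)
    (hf : f = π (X l1) / π (X (Fin.last n))) (l : Fin (n+1)) : ∃ c p : Polynomial K, c ≠ 0 ∧
    Polynomial.aeval f c * (π (X l) / π (X (Fin.last n))) = Polynomial.aeval f p := by
  have hz := x_ne hG hπ (Fin.last n)
  have he := edge_last hG hπ l1 hl1 hmax
  have h1 := alg_lemma hG hπ l1 hl1 he (X l) 1 (isHomogeneous_X _ _)
  rw [pow_one, ← hf] at h1
  obtain ⟨⟨y, hy⟩, hy0, hint⟩ := h1.exists_integral_multiple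
  obtain ⟨c, hc⟩ := (Algebra.adjoin_singleton_eq_range_aeval K f).le hy
  have hc : Polynomial.aeval f c = y := hc
  rw [Subalgebra.smul_def, smul_eq_mul] at hint
  have hint : IsIntegral (Algebra.adjoin K {f}) (y * (π (X l) / π (X (Fin.last n)))) := hint
  set M := c.natDegree
  have hhom : (homg l1 M c * X l : MvPolynomial (Fin (n+1)) K).IsHomogeneous (M + 1) := by
    refine IsHomogeneous.mul ?_ (isHomogeneous_X _ _)
    intro u hu
    have := ((mem_restrictSupport_iff K).1 (homg_mem l1 M c) (mem_support_iff.2 hu)).2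
    rw [← this, Finsupp.degree_eq_weight_one]; rfl
  have e : π (homg l1 M c * X l) / π (X (Fin.last n)) ^ (M + 1) = y * (π (X l) / π (X (Fin.last n))) := by
    rw [map_mul, homg_pi hG hπ l1 M c le_rfl, ← hf, hc, pow_succ]; field_simp
  have hex : ∃ j : ℕ, ∀ O : ValuationSubring L, (∀ c : K, algebraMap K L c ∈ O) → f ∉ O →
      O.valuation (y * (π (X l) / π (X (Fin.last n)))) < O.valuation f ^ j := by
    rw [← e]
    by_cases haI : (homg l1 M c * X l : MvPolynomial (Fin (n+1)) K) ∈ I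
    · refine ⟨0, fun O _ _ => ?_⟩
      rw [(hπ _).2 haI, zero_div, map_zero, pow_zero]
      exact zero_lt_one
    · obtain ⟨N, i, κ, hκ, hlead⟩ := lead_all hG hπ l1 hl1 hmax f hf _ _ hhom haI
      refine ⟨i + 1, fun O hO hfO => ?_⟩
      have hv : ∀ c : K, O.valuation (algebraMap K L c) ≤ 1 := fun c => (O.valuation_le_one_iff _).2 (hO c)
      have hf1 : 1 < O.valuation f := by
        rw [← not_le, O.valuation_le_one_iff]; exact hfO
      have := hlead O hO hfO
      rw [← map_pow O.valuation] at this
      have := val_of_lead O.valuation hv κ hκ _ _ this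
      rw [map_mul, map_pow, map_pow] at this
      have h4 : 0 < O.valuation f ^ N := pow_pos (zero_lt_one.trans hf1) _
      rw [← mul_lt_mul_iff_left₀ h4, this, ← pow_add, pow_lt_pow_iff_right₀ hf1]
      omega
  obtain ⟨j, hj⟩ := hex
  have h2 := five_c hG hπ l1 hl1 hmax f hf j (homg l1 M c * X l) (M+1) hhom (by rwa [e]) (by rwa [e])
  rw [e] at h2
  obtain ⟨p, hp⟩ := (Algebra.adjoin_singleton_eq_range_aeval K f).le h2
  refine ⟨c, p, ?_, ?_⟩
  · rintro rfl
    apply hy0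
    apply Subtype.ext
    change y = 0
    rw [← hc]; simp
  · rw [hc]; exact hp.symm
end A9


section A10
variable {K : Type*} [Field K] {n : ℕ} {I : Ideal (MvPolynomial (Fin (n + 1)) K)}
  {F : Set (Finset (Fin (n + 1)))} {w : Fin (n + 1) → ℕ} {L : Type*} [Field L] [Algebra K L]
  {π : MvPolynomial (Fin (n + 1)) K →ₐ[K] L}

def wtElt (w : Fin (n + 1) → ℕ) (π : MvPolynomial (Fin (n + 1)) K →ₐ[K] L) (j : Fin (n+1)) (t : ℕ) (y : L) : Prop :=
  ∃ (k : ℕ) (P : MvPolynomial (Fin (n + 1)) K), P ∈ restrictSupport K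
    {u : Fin (n+1) →₀ ℕ | u.degree = k ∧ Finsupp.weight w u + t ≤ k * w j} ∧ y = π P / π (X j) ^ k

lemma wtElt_mul {j : Fin (n+1)} {s t : ℕ} {x y : L}
    (hx : wtElt w π j s x) (hy : wtElt w π j t y) : wtElt w π j (s + t) (x * y) := by
  obtain ⟨k, P, hP, rfl⟩ := hx
  obtain ⟨k', P', hP', rfl⟩ := hy
  refine ⟨k + k', P * P', ?_, ?_⟩
  · have := Submodule.mul_mem_mul hP hP'
    rw [← restrictSupport_add] at this
    refine restrictSupport_mono _ ?_ this
    rintro _ ⟨u, ⟨h1, h2⟩, u', ⟨h3, h4⟩, rfl⟩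
    simp only [Set.mem_ofPred_eq, map_add, h1, h3, true_and]
    rw [add_mul]; omega
  · rw [map_mul, pow_add, mul_div_mul_comm]

lemma wtElt_const (j : Fin (n+1)) (c : K) : wtElt w π j 0 (algebraMap K L c) := by
  refine ⟨0, C c, ?_, by simp [algHom_C]⟩
  rw [C_apply, monomial_mem_restrictSupport]
  left; simp

lemma wtElt_one' {j : Fin (n+1)} (hj : π (X j) ≠ 0) (k : ℕ) :
    ∃ P ∈ restrictSupport K {u : Fin (n+1) →₀ ℕ | u.degree = k ∧ Finsupp.weight w u + 0 ≤ k * w j},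
    (1 : L) = π P / π (X j) ^ k := by
  refine ⟨X j ^ k, ?_, ?_⟩
  · rw [X_pow_eq_monomial, monomial_mem_restrictSupport]
    left; simp [Finsupp.weight_single]
  · rw [map_pow, div_self (pow_ne_zero _ hj)]

lemma wtElt_lift {j : Fin (n+1)} (hj : π (X j) ≠ 0) {t k : ℕ} {P : MvPolynomial (Fin (n + 1)) K} (m : ℕ)
    (hP : P ∈ restrictSupport K
    {u : Fin (n+1) →₀ ℕ | u.degree = k ∧ Finsupp.weight w u + t ≤ k * w j}) :
    ∃ Q ∈ restrictSupport K {u : Fin (n+1) →₀ ℕ | u.degree = k + m ∧ Finsupp.weight w u + t ≤ (k+m) * w j},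
    π P / π (X j) ^ k = π Q / π (X j) ^ (k + m) := by
  obtain ⟨Q, hQ, h1⟩ := wtElt_one' (w := w) hj m
  refine ⟨P * Q, ?_, ?_⟩
  · have := Submodule.mul_mem_mul hP hQ
    rw [← restrictSupport_add] at this
    refine restrictSupport_mono _ ?_ this
    rintro _ ⟨u, ⟨h1, h2⟩, u', ⟨h3, h4⟩, rfl⟩
    simp only [Set.mem_ofPred_eq, map_add, h1, h3, true_and]
    rw [add_mul]; omega
  · rw [map_mul, pow_add, mul_div_mul_comm, ← h1, mul_one]

lemma wtElt_add {j : Fin (n+1)} (hj : π (X j) ≠ 0) {t : ℕ} {x y : L}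
    (hx : wtElt w π j t x) (hy : wtElt w π j t y) : wtElt w π j t (x + y) := by
  obtain ⟨k, P, hP, rfl⟩ := hx
  obtain ⟨k', P', hP', rfl⟩ := hy
  obtain ⟨Q, hQ, e⟩ := wtElt_lift hj k' hP
  obtain ⟨Q', hQ', e'⟩ := wtElt_lift hj k hP'
  rw [add_comm k' k] at hQ' e'
  exact ⟨k + k', Q + Q', Submodule.add_mem _ hQ hQ', by rw [e, e', map_add, add_div]⟩

lemma wtElt_neg {j : Fin (n+1)} {t : ℕ} {x : L}
    (hx : wtElt w π j t x) : wtElt w π j t (-x) := by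
  obtain ⟨k, P, hP, rfl⟩ := hx
  exact ⟨k, -P, Submodule.neg_mem _ hP, by rw [map_neg, neg_div]⟩

lemma wtElt_not (hG : Good I F w) (hπ : ∀ P, π P = 0 ↔ P ∈ I) (j : Fin (n+1)) : ¬ wtElt w π j 1 1 := by
  rintro ⟨k, P, hP, h⟩
  have hj := x_ne hG hπ j
  obtain ⟨G, hG1, hG2⟩ := hG.red _ (by
    rintro u ⟨h1, h2⟩ u' h3 h4
    exact ⟨h3.trans h1, by omega⟩) P hP
  rw [eq_div_iff (pow_ne_zero _ hj), one_mul, ← map_pow, eq_comm, ← sub_eq_zero, ← map_sub, hπ] at h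
  have h5 : X j ^ k - G ∈ I := by
    have := I.sub_mem hG2 h
    rwa [sub_sub_sub_cancel_left] at this
  have h6 := hG.indep _ h5 (by
    apply Submodule.sub_mem
    · rw [X_pow_eq_monomial, monomial_mem_restrictSupport]
      left
      exact hG.down _ _ (hG.vert j) Finsupp.support_single_subset
    · exact restrictSupport_mono _ (fun u hu => hu.2) hG1)
  have h7 := congrArg (coeff (Finsupp.single j k)) h6
  rw [coeff_sub, X_pow_eq_monomial, coeff_monomial, if_pos rfl, coeff_zero, sub_eq_zero] at h7
  rw [mem_restrictSupport_iff] at hG1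
  have h8 := hG1 (mem_support_iff.2 (h7 ▸ one_ne_zero))
  have h9 := h8.1.2
  simp [Finsupp.weight_single] at h9

def wtB (w : Fin (n + 1) → ℕ) (π : MvPolynomial (Fin (n + 1)) K →ₐ[K] L) (j : Fin (n+1))
    (hj : π (X j) ≠ 0) : Subring L where
  carrier := {y | wtElt w π j 0 y}
  mul_mem' := by
    intro x y hx hy
    have := wtElt_mul (w := w) (π := π) (j := j) (s := 0) (t := 0) hx hy
    rwa [zero_add] at this
  one_mem' := by have := wtElt_const (w := w) (π := π) j 1; rwa [map_one] at this
  add_mem' := fun hx hy => wtElt_add hj hx hy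
  zero_mem' := by have := wtElt_const (w := w) (π := π) j 0; rwa [map_zero] at this
  neg_mem' := fun hx => wtElt_neg hx

lemma mem_wtB (w : Fin (n + 1) → ℕ) (π : MvPolynomial (Fin (n + 1)) K →ₐ[K] L) (j : Fin (n+1))
    (hj : π (X j) ≠ 0) (y : L) : y ∈ wtB w π j hj ↔ wtElt w π j 0 y := Iff.rfl

def wtA (w : Fin (n + 1) → ℕ) (π : MvPolynomial (Fin (n + 1)) K →ₐ[K] L) (j : Fin (n+1))
    (hj : π (X j) ≠ 0) : Ideal (wtB w π j hj) where
  carrier := {y | wtElt w π j 1 (y : L)}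
  add_mem' := fun hx hy => wtElt_add hj hx hy
  zero_mem' := ⟨0, 0, Submodule.zero_mem _, by rw [map_zero, zero_div]; rfl⟩
  smul_mem' := by
    intro c x hx
    have := wtElt_mul ((mem_wtB w π j hj _).1 c.2) hx
    rwa [zero_add] at this

lemma mem_wtA (w : Fin (n + 1) → ℕ) (π : MvPolynomial (Fin (n + 1)) K →ₐ[K] L) (j : Fin (n+1))
    (hj : π (X j) ≠ 0) (y : wtB w π j hj) : y ∈ wtA w π j hj ↔ wtElt w π j 1 (y : L) := Iff.rfl

lemma exists_valuation (hG : Good I F w) (hπ : ∀ P, π P = 0 ↔ P ∈ I) (j : Fin (n+1)) :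
    ∃ O : ValuationSubring L, (∀ y, wtElt w π j 0 y → O.valuation y ≤ 1) ∧
      (∀ y, wtElt w π j 1 y → O.valuation y < 1) := by
  have hj := x_ne hG hπ j
  obtain ⟨O, h1, h2⟩ := Ideal.image_subset_nonunits_valuationSubring (wtA w π j hj) (by
    rw [Ideal.ne_top_iff_one, mem_wtA]
    exact wtElt_not hG hπ j)
  refine ⟨O, ?_, ?_⟩
  · intro y hy
    exact (O.valuation_le_one_iff _).2 (h1 ((mem_wtB w π j hj y).2 hy))
  · intro y hy
    have h0 : wtElt w π j 0 y := by
      obtain ⟨k, P, hP, rfl⟩ := hy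
      refine ⟨k, P, restrictSupport_mono _ ?_ hP, rfl⟩
      rintro u ⟨h1, h2⟩
      exact ⟨h1, by omega⟩
    have h3 : y ∈ O.nonunits := h2 ⟨(⟨y, (mem_wtB w π j hj y).2 h0⟩ : wtB w π j hj),
      (mem_wtA w π j hj _).2 hy, rfl⟩
    exact (O.mem_nonunits_iff).1 h3

lemma exists_neighbor (hG : Good I F w) (hπ : ∀ P, π P = 0 ↔ P ∈ I) (j : Fin (n+1)) (hjl : j ≠ Fin.last n) :
    ∃ l, j < l ∧ ({j, l} : Finset (Fin (n+1))) ∈ F := by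
  classical
  have hj := x_ne hG hπ j
  obtain ⟨O, hO0, hO1⟩ := exists_valuation hG hπ j
  set v := O.valuation
  have hv : ∀ c : K, v (algebraMap K L c) ≤ 1 := fun c => hO0 _ (wtElt_const j c)
  have hpos : ∀ m, 0 < v (π (X m) / π (X j)) := fun m =>
    (Valuation.pos_iff v).2 (div_ne_zero (x_ne hG hπ m) hj)
  have hlt : ∀ m, w m < w j → v (π (X m) / π (X j)) < 1 := by
    intro m hm
    apply hO1
    refine ⟨1, X m, ?_, by rw [pow_one]⟩
    rw [X, monomial_mem_restrictSupport]
    left; simp [Finsupp.weight_single]; omega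
  have hle : ∀ l l', w l < w j → w j < w l' →
      v (π (X l) / π (X j)) ^ (w l' - w j) * v (π (X l') / π (X j)) ^ (w j - w l) ≤ 1 := by
    intro l l' h1 h2
    have := hO0 (π (monomial (pairMon l l' (w l' - w j) (w j - w l)) 1) / π (X j) ^ (w l' - w l)) ⟨w l' - w l, _, by
      rw [monomial_mem_restrictSupport]
      left
      refine ⟨?_, ?_⟩
      · rw [pairMon_degree]; omega
      · rw [pairMon_weight]
        obtain ⟨a, ha⟩ := Nat.exists_eq_add_of_lt h1
        obtain ⟨b, hb⟩ := Nat.exists_eq_add_of_lt h2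
        rw [show w l' - w j = b + 1 by omega, show w j - w l = a + 1 by omega, show w l' - w l = a + b + 2 by omega,
          hb, ha]
        nlinarith, rfl⟩
    rw [pairMon_eq, C_1, one_mul, map_mul, map_pow, map_pow, show w l' - w l = (w l' - w j) + (w j - w l) by omega,
      pow_add, mul_div_mul_comm, ← div_pow, ← div_pow, map_mul, map_pow, map_pow] at this
    exact this
  obtain ⟨l, hl, hbest⟩ := exists_best (fun m => v (π (X m) / π (X j))) (fun m => w j - w m)
    (Finset.univ.filter (fun m => w m < w j)) ⟨Fin.last n, by
      simp only [Finset.mem_filter, Finset.mem_univ, true_and]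
      rw [hG.last]; exact hG.wpos j hjl⟩ (by
      intro i hi
      simp only [Finset.mem_filter, Finset.mem_univ, true_and] at hi
      omega)
  simp only [Finset.mem_filter, Finset.mem_univ, true_and] at hl hbest
  refine ⟨l, not_le.1 (fun h => absurd (hG.anti.antitone h) (not_le.2 hl)), ?_⟩
  by_contra hne
  set q := v (π (X l) / π (X j)) with hq
  have hq0 : 0 < q := hpos l
  have hq1 : q < 1 := hlt l hl
  have hqn : q ≠ 0 := hq0.ne'
  have hψ : 1 < q⁻¹ := (one_lt_inv₀ hq0).2 hq1
  have hcan : ∀ a b, q ^ a * q⁻¹ ^ (a + b) = q⁻¹ ^ b := by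
    intro a b
    rw [pow_add, ← mul_assoc, ← mul_pow, mul_inv_cancel₀ hqn, one_pow, one_mul]
  have hφ : ∀ m, v (π (X m) / π (X j)) ^ (w j - w l) * q⁻¹ ^ w j ≤ q⁻¹ ^ w m := by
    intro m
    rcases lt_trichotomy (w m) (w j) with h | h | h
    · refine (mul_le_mul_left (hbest m h) _).trans_eq ?_
      have := hcan (w j - w m) (w m)
      rwa [Nat.sub_add_cancel h.le] at this
    · have := hG.anti.injective h
      subst this
      rw [div_self hj, map_one, one_pow, one_mul]
    · have h1 := hle l m hl h
      rw [← hq] at h1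
      have h2 := mul_le_mul_left h1 (q⁻¹ ^ w m)
      rw [one_mul] at h2
      refine le_trans (le_of_eq ?_) h2
      have := hcan (w m - w j) (w j)
      rw [Nat.sub_add_cancel h.le] at this
      rw [← this, mul_left_comm, mul_assoc]
  have hjne : j ≠ l := by rintro rfl; omega
  obtain ⟨G, hG1, hG2⟩ := hG.nf (pairMon j l 1 1) (by
    rwa [pairMon_support_eq j l hjne 1 1 (by simp) (by simp)])
  have := val_bound v hv (π (X j)) hj (w j - w l) (by omega) (q⁻¹ ^ w j) q⁻¹ hψ hφ 2 (w j + w l) G (by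
    refine restrictSupport_mono _ ?_ hG1
    rintro u ⟨_, h2, h3⟩
    rw [pairMon_degree] at h2
    rw [pairMon_weight] at h3
    exact ⟨h2, by omega⟩)
  have e : π G = π (X j) * π (X l) := by
    rw [← hπ, map_sub, sub_eq_zero, pairMon_eq] at hG2
    rw [← hG2]; simp
  rw [e, pow_two, mul_div_mul_left _ _ hj, ← hq, ← pow_mul] at this
  have h3 := hcan (w j - w l) (w j + w l)
  rw [show w j - w l + (w j + w l) = w j * 2 by omega] at h3
  rw [h3] at this
  exact lt_irrefl _ this
end A10


section A11
variable {K : Type*} [Field K] {n : ℕ}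

noncomputable def RR (g : Fin (n+1) → Polynomial K) (k : ℕ) : Submodule K (Polynomial K) :=
  Submodule.map (aeval g).toLinearMap (homogeneousSubmodule (Fin (n+1)) K k)

lemma mem_RR (g : Fin (n+1) → Polynomial K) (k : ℕ) (p : Polynomial K) :
    p ∈ RR g k ↔ ∃ t : MvPolynomial (Fin (n+1)) K, t.IsHomogeneous k ∧ aeval g t = p := by
  simp only [RR, Submodule.mem_map, mem_homogeneousSubmodule]; rfl

lemma RR_mul (g : Fin (n+1) → Polynomial K) {k l : ℕ} {p q : Polynomial K} (hp : p ∈ RR g k) (hq : q ∈ RR g l) :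
    p * q ∈ RR g (k + l) := by
  rw [mem_RR] at *
  obtain ⟨t, ht, rfl⟩ := hp
  obtain ⟨s, hs, rfl⟩ := hq
  exact ⟨t * s, ht.mul hs, map_mul _ _ _⟩

lemma RR_self (g : Fin (n+1) → Polynomial K) (i : Fin (n+1)) : g i ∈ RR g 1 := by
  rw [mem_RR]; exact ⟨X i, isHomogeneous_X _ _, by simp⟩

lemma RR_pow (g : Fin (n+1) → Polynomial K) (i : Fin (n+1)) (k : ℕ) : g i ^ k ∈ RR g k := by
  rw [mem_RR]; exact ⟨X i ^ k, by simpa using (isHomogeneous_X K i).pow k, by simp⟩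

lemma uniform_N (g : Fin (n+1) → Polynomial K) (d : ℕ)
    (habs : ∀ p : Polynomial K, p.natDegree ≤ d → ∀ i, ∃ N, g i ^ N * p ∈ RR g (N + 1)) :
    ∃ N0, ∀ i, ∀ e ≤ d, ∀ N ≥ N0, g i ^ N * Polynomial.X ^ e ∈ RR g (N + 1) := by
  classical
  have : ∀ i : Fin (n+1), ∀ e : Fin (d+1), ∃ N, g i ^ N * Polynomial.X ^ (e:ℕ) ∈ RR g (N+1) := by
    intro i e
    apply habs
    rw [Polynomial.natDegree_X_pow]; omega
  choose N hN using this
  refine ⟨Finset.univ.sup (fun i => Finset.univ.sup (N i)), ?_⟩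
  intro i e he M hM
  have h1 : N i ⟨e, by omega⟩ ≤ M :=
    ((Finset.le_sup (f := N i) (Finset.mem_univ (⟨e, by omega⟩ : Fin (d+1)))).trans
    (Finset.le_sup (f := fun i => Finset.univ.sup (N i)) (Finset.mem_univ i))).trans hM
  obtain ⟨c, hc⟩ := Nat.exists_eq_add_of_le h1
  rw [hc]
  have := RR_mul g (RR_pow g i c) (hN i ⟨e, by omega⟩)
  rw [← mul_assoc, ← pow_add] at this
  rw [add_comm _ c]
  rwa [add_assoc]

lemma mul_T1 (g : Fin (n+1) → Polynomial K) (d : ℕ)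
    (habs : ∀ p : Polynomial K, p.natDegree ≤ d → ∀ i, ∃ N, g i ^ N * p ∈ RR g (N + 1)) :
    ∃ M0, ∀ M ≥ M0, ∀ q ∈ RR g M, ∀ e ≤ d, q * Polynomial.X ^ e ∈ RR g (M + 1) := by
  classical
  obtain ⟨N0, hN0⟩ := uniform_N g d habs
  refine ⟨(n + 1) * N0, ?_⟩
  intro M hM q hq e he
  rw [mem_RR] at hq
  obtain ⟨t, ht, rfl⟩ := hq
  rw [as_sum t, map_sum, Finset.sum_mul]
  apply Submodule.sum_mem
  intro u hu
  have hdeg : u.degree = M := by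
    have := ht (mem_support_iff.1 hu)
    rw [← this, Finsupp.degree_eq_weight_one]; rfl
  have hex : ∃ i, N0 ≤ u i := by
    by_contra hcon
    push Not at hcon
    have h1 : u.degree = ∑ i, u i := Finsupp.degree_eq_sum u
    have h2 : ∑ i, u i < ∑ i : Fin (n+1), N0 := Finset.sum_lt_sum_of_nonempty ⟨0, Finset.mem_univ _⟩ (fun i _ => hcon i)
    simp at h2
    omega
  obtain ⟨i, hi⟩ := hex
  have e1 : monomial u (coeff u t) = monomial (u - Finsupp.single i N0) (coeff u t) * X i ^ N0 := by
    rw [X_pow_eq_monomial, monomial_mul, mul_one, tsub_add_cancel_of_le]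
    simpa using hi
  rw [e1, map_mul, map_pow, aeval_X, mul_assoc]
  have h3 : aeval g (monomial (u - Finsupp.single i N0) (coeff u t)) ∈ RR g (M - N0) := by
    rw [mem_RR]
    refine ⟨_, ?_, rfl⟩
    apply isHomogeneous_monomial
    have : (u - Finsupp.single i N0).degree + (Finsupp.single i N0).degree = u.degree := by
      rw [← map_add, tsub_add_cancel_of_le]; simpa using hi
    rw [Finsupp.degree_single] at this
    omega
  have h4 := RR_mul g h3 (hN0 i e he N0 le_rfl)
  have h5 : N0 ≤ M := le_trans (by nlinarith) hM
  rwa [show M - N0 + (N0 + 1) = M + 1 by omega] at h4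

lemma mul_Tk (g : Fin (n+1) → Polynomial K) (d M0 : ℕ)
    (h : ∀ M ≥ M0, ∀ q ∈ RR g M, ∀ e ≤ d, q * Polynomial.X ^ e ∈ RR g (M + 1)) (k : ℕ) :
    ∀ M ≥ M0, ∀ q ∈ RR g M, ∀ e ≤ k * d, q * Polynomial.X ^ e ∈ RR g (M + k) := by
  induction k with
  | zero =>
    intro M hM q hq e he
    have : e = 0 := by omega
    subst this
    simpa using hq
  | succ k ih =>
    intro M hM q hq e he
    have h1 : ∃ e1 e2, e = e1 + e2 ∧ e1 ≤ d ∧ e2 ≤ k * d := by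
      rw [add_mul] at he
      refine ⟨min e d, e - min e d, ?_, ?_, ?_⟩ <;> omega
    obtain ⟨e1, e2, rfl, he1, he2⟩ := h1
    have := ih (M + 1) (by omega) _ (h M hM q hq e1 he1) e2 he2
    rw [pow_add, ← mul_assoc]
    rwa [show M + (k+1) = M + 1 + k by omega]

lemma T_sub (g b : Fin (n+1) → Polynomial K) (hb : ∑ l, b l * g l = 1) (d : ℕ) (hd1 : 1 ≤ d)
    (m : Fin (n+1)) (hm : (g m).natDegree = d) (hm0 : g m ≠ 0) :
    ∃ j0, ∀ j ≥ j0, ∀ p : Polynomial K, p.natDegree ≤ (j+1) * d →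
      ∃ q : Fin (n+1) → Polynomial K, (∀ i, (q i).natDegree ≤ j * d) ∧ p = ∑ i, q i * g i := by
  classical
  set B := Finset.univ.sup (fun l => (b l).natDegree)
  refine ⟨B + 1, ?_⟩
  intro j hj p hp
  have hB : ∀ l, (b l).natDegree ≤ B := fun l => Finset.le_sup (f := fun l => (b l).natDegree) (Finset.mem_univ l)
  have hjd : B + d ≤ j * d := by nlinarith
  have hr : (p % g m).natDegree ≤ d := by
    have : (g m).natDegree ≠ 0 := by rw [hm]; omega
    have := Polynomial.natDegree_mod_lt p this
    omega
  have hu : (p / g m).natDegree ≤ j * d := by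
    by_cases hu0 : p / g m = 0
    · rw [hu0]; simp
    have h1 := Polynomial.natDegree_mul hm0 hu0
    have h2 : g m * (p / g m) = p - p % g m := eq_sub_of_add_eq (EuclideanDomain.div_add_mod p (g m))
    have h3 := Polynomial.natDegree_sub_le p (p % g m)
    rw [← h2, h1] at h3
    have h4 : max p.natDegree (p % g m).natDegree ≤ (j + 1) * d := max_le hp (by nlinarith)
    rw [add_mul] at h4; omega
  refine ⟨fun i => (if i = m then p / g m else 0) + (p % g m) * b i, ?_, ?_⟩
  · intro i
    apply Polynomial.natDegree_add_le_of_degree_le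
    · split_ifs
      · exact hu
      · simp
    · refine Polynomial.natDegree_mul_le.trans ?_
      have := hB i
      omega
  · simp only [add_mul, Finset.sum_add_distrib, ite_mul, zero_mul, Finset.sum_ite_eq', Finset.mem_univ, if_true, mul_assoc]
    rw [← Finset.mul_sum, hb, mul_one, mul_comm]
    exact (EuclideanDomain.div_add_mod p (g m)).symm

lemma count_lemma (g b : Fin (n+1) → Polynomial K) (hb : ∑ l, b l * g l = 1) (d : ℕ) (hd1 : 1 ≤ d)
    (m : Fin (n+1)) (hm : (g m).natDegree = d) (hm0 : g m ≠ 0)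
    (habs : ∀ p : Polynomial K, p.natDegree ≤ d → ∀ i, ∃ N, g i ^ N * p ∈ RR g (N + 1)) :
    ∃ k ≥ 1, ∀ p : Polynomial K, p.natDegree ≤ k * d → p ∈ RR g k := by
  obtain ⟨M0, hM0⟩ := mul_T1 g d habs
  obtain ⟨j0, hj0⟩ := T_sub g b hb d hd1 m hm hm0
  have main : ∀ r (p q : Polynomial K) (s : ℕ), p.natDegree ≤ (j0 + r) * d → q ∈ RR g s → s + r ≥ M0 →
      q * p ∈ RR g (s + r + j0) := by
    intro r
    induction r with
    | zero =>
      intro p q s hp hq hs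
      rw [Polynomial.as_sum_range_C_mul_X_pow p, Finset.mul_sum]
      apply Submodule.sum_mem
      intro e he
      rw [mul_left_comm, ← Polynomial.smul_eq_C_mul]
      apply Submodule.smul_mem
      rw [add_zero] at hp
      exact mul_Tk g d M0 hM0 j0 s hs q hq e (by have := Finset.mem_range.1 he; omega)
    | succ r ih =>
      intro p q s hp hq hs
      obtain ⟨c, hc, rfl⟩ := hj0 (j0 + r) (by omega) p hp
      rw [Finset.mul_sum]
      apply Submodule.sum_mem
      intro i _
      rw [mul_comm (c i), ← mul_assoc]
      have := ih (c i) (q * g i) (s + 1) (hc i) (RR_mul g hq (RR_self g i)) (by omega)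
      rwa [show s + (r + 1) = s + 1 + r by omega]
  have h1 : (1 : Polynomial K) ∈ RR g 0 := by
    rw [mem_RR]; exact ⟨1, isHomogeneous_one _ _, map_one _⟩
  refine ⟨0 + (M0 + 1) + j0, by omega, ?_⟩
  intro p hp
  have := main (M0 + 1) p 1 0 (by rwa [show 0 + (M0 + 1) + j0 = j0 + (M0 + 1) by omega] at hp) h1 (by omega)
  rwa [one_mul] at this
end A11


section A12
variable {K : Type*} [Field K] {n : ℕ} {I : Ideal (MvPolynomial (Fin (n + 1)) K)}
  {F : Set (Finset (Fin (n + 1)))} {w : Fin (n + 1) → ℕ} {L : Type*} [Field L] [Algebra K L]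
  {π : MvPolynomial (Fin (n + 1)) K →ₐ[K] L}

lemma exists_param [IsAlgClosed K] (hG : Good I F w) (hπ : ∀ P, π P = 0 ↔ P ∈ I)
    (l1 : Fin (n+1)) (hl1 : l1 ≠ Fin.last n) (hmax : ∀ m, m ≠ Fin.last n → m ≤ l1) (f : L)
    (hf : f = π (X l1) / π (X (Fin.last n))) : ∃ (g b : Fin (n+1) → Polynomial K) (Z : L), Z ≠ 0 ∧
    ∑ l, b l * g l = 1 ∧ ∀ l, π (X l) = Polynomial.aeval f (g l) * Z := by
  classical
  have hz := x_ne hG hπ (Fin.last n)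
  have he := edge_last hG hπ l1 hl1 hmax
  have hft : Transcendental K f := hf ▸ f_trans hG hπ l1 hl1 he
  rw [transcendental_iff] at hft
  have := rat_lemma hG hπ l1 hl1 hmax f hf
  choose c p hc0 hcp using this
  let q : Fin (n+1) → Polynomial K := fun l => p l * ∏ m ∈ Finset.univ.erase l, c m
  let D : Polynomial K := ∏ m, c m
  have hD0 : D ≠ 0 := Finset.prod_ne_zero_iff.2 (fun m _ => hc0 m)
  have hDf : Polynomial.aeval f D ≠ 0 := fun h => hD0 (hft _ h)
  have hDl : ∀ l, D = c l * ∏ m ∈ Finset.univ.erase l, c m := fun l =>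
    (Finset.mul_prod_erase _ _ (Finset.mem_univ l)).symm
  have hq : ∀ l, Polynomial.aeval f D * π (X l) = Polynomial.aeval f (q l) * π (X (Fin.last n)) := by
    intro l
    have := hcp l
    simp only [q]
    rw [hDl l, map_mul, map_mul, ← this]
    field_simp
  obtain ⟨h, hh⟩ := (IsPrincipalIdealRing.principal (Ideal.span (Set.range q))).principal
  have hh : Ideal.span (Set.range q) = Ideal.span {h} := hh
  have hdvd : ∀ l, ∃ g, q l = h * g := by
    intro l
    have : q l ∈ Ideal.span {h} := hh ▸ Ideal.subset_span ⟨l, rfl⟩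
    exact Ideal.mem_span_singleton.1 this
  choose g hg using hdvd
  have hh0 : h ≠ 0 := by
    rintro rfl
    have h1 := hq (Fin.last n)
    rw [hg, zero_mul, map_zero, zero_mul] at h1
    exact mul_ne_zero hDf hz h1
  have hmem : h ∈ Ideal.span (Set.range q) := hh ▸ Ideal.mem_span_singleton_self h
  obtain ⟨b, hb⟩ := (Ideal.mem_span_range_iff_exists_fun).1 hmem
  refine ⟨g, b, Polynomial.aeval f h * π (X (Fin.last n)) / Polynomial.aeval f D, ?_, ?_, ?_⟩
  · exact div_ne_zero (mul_ne_zero (fun h' => hh0 (hft _ h')) hz) hDf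
  · apply mul_left_cancel₀ hh0
    rw [mul_one, Finset.mul_sum]
    conv_rhs => rw [← hb]
    apply Finset.sum_congr rfl
    intro l _
    rw [hg]; ring
  · intro l
    have := hq l
    rw [hg, map_mul] at this
    field_simp
    rw [mul_comm, this]; ring

variable {Γ : Type*} [LinearOrderedCommGroupWithZero Γ]

lemma poly_val_le (v : Valuation L Γ) (hv : ∀ c : K, v (algebraMap K L c) ≤ 1) (f : L) (hf : 1 < v f)
    (p : Polynomial K) (d : ℕ) (hp : p.natDegree ≤ d) : v (Polynomial.aeval f p) ≤ v f ^ d := by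
  rw [Polynomial.aeval_eq_sum_range]
  apply Valuation.map_sum_le
  intro i hi
  rw [Algebra.smul_def, map_mul, map_pow]
  have h1 : v f ^ i ≤ v f ^ d := pow_le_pow_right₀ hf.le (by have := Finset.mem_range.1 hi; omega)
  calc _ ≤ 1 * v f ^ d := mul_le_mul' (hv _) h1
    _ = _ := one_mul _

lemma poly_val_eq (v : Valuation L Γ) (hv : ∀ c : K, v (algebraMap K L c) ≤ 1) (f : L) (hf : 1 < v f)
    (p : Polynomial K) (hp : p ≠ 0) : v (Polynomial.aeval f p) = v f ^ p.natDegree := by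
  rw [← map_pow]
  apply val_of_lead v hv p.leadingCoeff (Polynomial.leadingCoeff_ne_zero.2 hp)
  have e : Polynomial.aeval f p - algebraMap K L p.leadingCoeff * f ^ p.natDegree =
      Polynomial.aeval f p.eraseLead := by
    have h := congrArg (Polynomial.aeval f) (Polynomial.eraseLead_add_C_mul_X_pow p)
    rw [map_add, map_mul, map_pow, Polynomial.aeval_C, Polynomial.aeval_X] at h
    rw [← h, add_sub_cancel_right]
  rw [e, map_pow]
  rcases Polynomial.eraseLead_natDegree_lt_or_eraseLead_eq_zero p with h | h
  · exact (poly_val_le v hv f hf _ _ le_rfl).trans_lt (pow_lt_pow_right₀ hf h)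
  · rw [h, map_zero, map_zero]; exact pow_pos (zero_lt_one.trans hf) _

lemma eta_integral [Algebra (MvPolynomial (Fin (n + 1)) K ⧸ I) L]
    (hπa : ∀ P, algebraMap (MvPolynomial (Fin (n + 1)) K ⧸ I) L (Ideal.Quotient.mk I P) = π P)
    (f : L) (g b : Fin (n+1) → Polynomial K) (Z : L)
    (hb : ∑ l, b l * g l = 1) (hx : ∀ l, π (X l) = Polynomial.aeval f (g l) * Z) (d : ℕ)
    (m : Fin (n+1)) (hm : (g m).natDegree = d) (hm0 : g m ≠ 0) (p : Polynomial K) (hp : p.natDegree ≤ d) :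
    IsIntegral (MvPolynomial (Fin (n + 1)) K ⧸ I) (Polynomial.aeval f p * Z) := by
  apply integral_of_val
  intro O hO
  have hO' : ∀ P, π P ∈ O := fun P => hπa P ▸ hO _
  have hK : ∀ c : K, algebraMap K L c ∈ O := fun c => by
    have := hO' (C c)
    rwa [algHom_C] at this
  have hv : ∀ c : K, O.valuation (algebraMap K L c) ≤ 1 := fun c => (O.valuation_le_one_iff _).2 (hK c)
  by_cases hfO : f ∈ O
  · have hpol : ∀ q : Polynomial K, Polynomial.aeval f q ∈ O := by
      intro q
      rw [Polynomial.aeval_eq_sum_range]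
      apply O.toSubring.sum_mem
      intro i _
      rw [Algebra.smul_def]
      exact O.mul_mem _ _ (hK _) (pow_mem hfO i)
    apply O.mul_mem _ _ (hpol p)
    have e : Z = ∑ l, Polynomial.aeval f (b l) * π (X l) := by
      have := congrArg (Polynomial.aeval f) hb
      rw [map_sum, map_one] at this
      simp only [hx, ← mul_assoc, ← map_mul]
      rw [← Finset.sum_mul, this, one_mul]
    rw [e]
    apply O.toSubring.sum_mem
    intro i _
    exact O.mul_mem _ _ (hpol _) (hO' _)
  · have hf1 : 1 < O.valuation f := by
      rw [← not_le, O.valuation_le_one_iff]; exact hfO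
    have h1 := poly_val_eq O.valuation hv f hf1 (g m) hm0
    have h2 := poly_val_le O.valuation hv f hf1 p d hp
    have h3 := (O.valuation_le_one_iff _).2 (hO' (X m))
    rw [hx, map_mul, h1, hm] at h3
    rw [← O.valuation_le_one_iff, map_mul]
    exact (mul_le_mul_left h2 _).trans h3

lemma pi_homog (f : L) (g : Fin (n+1) → Polynomial K) (Z : L)
    (hx : ∀ l, π (X l) = Polynomial.aeval f (g l) * Z) (P : MvPolynomial (Fin (n + 1)) K) (k : ℕ)
    (hP : P.IsHomogeneous k) : π P = Polynomial.aeval f (aeval g P) * Z ^ k := by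
  rw [as_sum P, map_sum, map_sum, map_sum, Finset.sum_mul]
  apply Finset.sum_congr rfl
  intro u hu
  have hdeg : ∑ i, u i = k := by
    have := hP (mem_support_iff.1 hu)
    rw [← this, ← Finsupp.degree_eq_sum, Finsupp.degree_eq_weight_one]; rfl
  rw [monomial_eq, map_mul, map_mul, map_mul, algHom_C, algHom_C, Polynomial.algebraMap_eq, Polynomial.aeval_C, mul_assoc]
  congr 1
  rw [Finsupp.prod_fintype _ _ (by simp), map_prod, map_prod, map_prod, ← hdeg, ← Finset.prod_pow_eq_pow_sum,
    ← Finset.prod_mul_distrib]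
  apply Finset.prod_congr rfl
  intro i _
  simp only [map_pow, aeval_X, hx, mul_pow]

lemma habs_lemma [IsAlgClosed K] [I.IsPrime] [Algebra (MvPolynomial (Fin (n + 1)) K ⧸ I) L]
    [IsFractionRing (MvPolynomial (Fin (n + 1)) K ⧸ I) L]
    (hπa : ∀ P, algebraMap (MvPolynomial (Fin (n + 1)) K ⧸ I) L (Ideal.Quotient.mk I P) = π P)
    (hG : Good I F w) (hπ : ∀ P, π P = 0 ↔ P ∈ I)
    (hsmooth : ∀ x ∈ projZeros I, jacobianRank I x = n - 1)
    (l1 : Fin (n+1)) (f : L) (hft : Transcendental K f)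
    (hf : f = π (X l1) / π (X (Fin.last n))) (g b : Fin (n+1) → Polynomial K) (Z : L) (hZ : Z ≠ 0)
    (hb : ∑ l, b l * g l = 1) (hx : ∀ l, π (X l) = Polynomial.aeval f (g l) * Z) (d : ℕ)
    (hd : ∀ l, (g l).natDegree ≤ d)
    (m : Fin (n+1)) (hm : (g m).natDegree = d) (hm0 : g m ≠ 0) (p : Polynomial K) (hp : p.natDegree ≤ d)
    (i : Fin (n+1)) : ∃ N, g i ^ N * p ∈ RR g (N + 1) := by
  have hz := x_ne hG hπ (Fin.last n)
  set η := Polynomial.aeval f p * Z with hη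
  have hint := eta_integral hπa f g b Z hb hx d m hm hm0 p hp
  have homg_hom : ∀ q : Polynomial K, (homg l1 d q).IsHomogeneous d := by
    intro q u hu
    have := ((mem_restrictSupport_iff K).1 (homg_mem l1 d q) (mem_support_iff.2 hu)).2
    rw [← this, Finsupp.degree_eq_weight_one]; rfl
  set B := homg l1 d (g (Fin.last n)) with hB
  obtain ⟨A, hA⟩ : ∃ A, A = homg l1 d p * X (Fin.last n) := ⟨_, rfl⟩
  have hBh : B.IsHomogeneous d := homg_hom _
  have hAh : A.IsHomogeneous (d + 1) := hA ▸ (homg_hom _).mul (isHomogeneous_X _ _)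
  have hBπ : π B = π (X (Fin.last n)) ^ d * Polynomial.aeval f (g (Fin.last n)) := by
    rw [hB, homg_pi hG hπ l1 d _ (hd _), ← hf]
  have hBA : π B * η = π A := by
    rw [hBπ, hA, map_mul, homg_pi hG hπ l1 d _ hp, ← hf, hx (Fin.last n), hη]; ring
  have hB0 : π B ≠ 0 := by
    rw [hBπ]
    refine mul_ne_zero (pow_ne_zero _ hz) ?_
    intro h
    rw [hx, h, zero_mul] at hz
    exact hz rfl
  have hcomp : ∀ s t, π s * η = π t → ∀ e, π (homogeneousComponent e s) * η = π (homogeneousComponent (e+1) t) := by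
    intro s t hst e
    have h1 : s * A - t * B ∈ I := by
      rw [← hπ, map_sub, map_mul, map_mul, ← hBA, ← hst]; ring
    have h2 := hG.hom _ h1 (e + (d + 1))
    rw [map_sub, hc_mul hAh, show e + (d+1) = (e + 1) + d by omega, hc_mul hBh, ← hπ, map_sub, map_mul, map_mul, ← hBA,
      sub_eq_zero] at h2
    apply mul_right_cancel₀ hB0
    rw [← h2]; ring
  let D : Ideal (MvPolynomial (Fin (n + 1)) K) :=
    { carrier := {s | ∃ t, π s * η = π t}
      add_mem' := by
        rintro a b ⟨t, ht⟩ ⟨t', ht'⟩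
        exact ⟨t + t', by rw [map_add, map_add, add_mul, ht, ht']⟩
      zero_mem' := ⟨0, by simp⟩
      smul_mem' := by
        rintro c a ⟨t, ht⟩
        exact ⟨c * t, by rw [smul_eq_mul, map_mul, map_mul, mul_assoc, ht]⟩ }
  have hDmem : ∀ s, s ∈ D ↔ ∃ t, π s * η = π t := fun s => Iff.rfl
  have hrad : X i ∈ D.radical := by
    rw [← vanishingIdeal_zeroLocus_eq_radical (K := K), mem_vanishingIdeal_iff]
    intro x hxD
    rw [mem_zeroLocus_iff] at hxD
    have hx0 : x = 0 := by
      by_contra hx0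
      have hxI : ∀ f ∈ I, eval x f = 0 := by
        intro f hf
        have := hxD f ((hDmem f).2 ⟨0, by rw [(hπ f).2 hf]; simp⟩)
        rwa [aeval_eq_eval] at this
      obtain ⟨s, t, hs, hst⟩ := local_int hG.hom x hx0 hxI (hsmooth x ⟨hx0, hxI⟩) η hint
      rw [hπa, hπa] at hst
      obtain ⟨e, he⟩ := exists_comp_ne x s hs
      have := hxD (homogeneousComponent e s) ((hDmem _).2 ⟨_, hcomp s t hst e⟩)
      rw [aeval_eq_eval] at this
      exact he this
    rw [hx0]; simp
  obtain ⟨N, hN⟩ := hrad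
  obtain ⟨t, ht⟩ := (hDmem _).1 hN
  have h1 := hcomp _ _ ht N
  have hXN : (X i ^ N : MvPolynomial (Fin (n+1)) K).IsHomogeneous N := by
    simpa using (isHomogeneous_X K i).pow N
  rw [homogeneousComponent_of_mem hXN, if_pos rfl,
    pi_homog f g Z hx _ _ (homogeneousComponent_isHomogeneous (N+1) t), pi_homog f g Z hx _ _ hXN, hη] at h1
  refine ⟨N, ?_⟩
  rw [mem_RR]
  refine ⟨_, homogeneousComponent_isHomogeneous (N+1) t, ?_⟩
  rw [map_pow, aeval_X] at h1
  rw [← sub_eq_zero]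
  apply (transcendental_iff.1 hft)
  rw [map_sub, sub_eq_zero]
  apply mul_right_cancel₀ (pow_ne_zero (N+1) hZ)
  rw [← h1, map_mul]; ring

lemma edge_count [IsAlgClosed K] [I.IsPrime] [Algebra (MvPolynomial (Fin (n + 1)) K ⧸ I) L]
    [IsFractionRing (MvPolynomial (Fin (n + 1)) K ⧸ I) L]
    (hπa : ∀ P, algebraMap (MvPolynomial (Fin (n + 1)) K ⧸ I) L (Ideal.Quotient.mk I P) = π P)
    (hG : Good I F w) (hπ : ∀ P, π P = 0 ↔ P ∈ I)
    (hsmooth : ∀ x ∈ projZeros I, jacobianRank I x = n - 1)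
    (l1 : Fin (n+1)) (hl1 : l1 ≠ Fin.last n) (hmax : ∀ m, m ≠ Fin.last n → m ≤ l1) :
    (edgeF F).ncard + 1 ≤ n + 1 := by
  classical
  have he := edge_last hG hπ l1 hl1 hmax
  have hft := f_trans hG hπ l1 hl1 he
  obtain ⟨f, hf⟩ : ∃ f, f = π (X l1) / π (X (Fin.last n)) := ⟨_, rfl⟩
  rw [← hf] at hft
  obtain ⟨g, b, Z, hZ, hb, hx⟩ := exists_param hG hπ l1 hl1 hmax f hf
  obtain ⟨m, -, hmm⟩ := Finset.exists_max_image Finset.univ (fun l => (g l).degree) ⟨0, Finset.mem_univ _⟩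
  have hm0 : g m ≠ 0 := by
    intro h
    have h1 : ∀ l, g l = 0 := by
      intro l
      have := hmm l (Finset.mem_univ l)
      rw [h, Polynomial.degree_zero, le_bot_iff, Polynomial.degree_eq_bot] at this
      exact this
    simp [h1] at hb
  obtain ⟨d, hm⟩ : ∃ d, (g m).natDegree = d := ⟨_, rfl⟩
  have hd : ∀ l, (g l).natDegree ≤ d := fun l => hm ▸ Polynomial.natDegree_le_natDegree (hmm l (Finset.mem_univ l))
  have hψ : ∀ (k : ℕ) (P : MvPolynomial (Fin (n+1)) K), P.IsHomogeneous k →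
      ((aeval g).toLinearMap P = 0 ↔ P ∈ I) := by
    intro k P hP
    rw [← hπ, pi_homog f g Z hx P k hP, AlgHom.toLinearMap_apply]
    constructor
    · intro h; rw [h, map_zero, zero_mul]
    · intro h
      exact transcendental_iff.1 hft _ ((mul_eq_zero.1 h).resolve_right (pow_ne_zero _ hZ))
  have hfr : ∀ k, Module.finrank K (RR g k) = (stdSet F k).ncard ∧ Module.Finite K (RR g k) := fun k =>
    finrank_deg hG (aeval g).toLinearMap k (hψ k)
  have hTfin : ∀ N, Module.finrank K (Polynomial.degreeLT K N) = N := by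
    intro N
    rw [(Polynomial.degreeLTEquiv K N).finrank_eq]; simp
  have hTf : ∀ N, Module.Finite K (Polynomial.degreeLT K N) := fun N =>
    Module.Finite.equiv (Polynomial.degreeLTEquiv K N).symm
  have hRT : ∀ k, RR g k ≤ Polynomial.degreeLT K (k * d + 1) := by
    intro k q hq
    rw [mem_RR] at hq
    obtain ⟨t, ht, rfl⟩ := hq
    rw [as_sum t, map_sum]
    apply Submodule.sum_mem
    intro u hu
    have hdeg : ∑ i, u i = k := by
      have := ht (mem_support_iff.1 hu)
      rw [← this, ← Finsupp.degree_eq_sum, Finsupp.degree_eq_weight_one]; rfl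
    rw [Polynomial.mem_degreeLT]
    refine lt_of_le_of_lt Polynomial.degree_le_natDegree ?_
    rw [Nat.cast_lt, Nat.lt_succ_iff]
    rw [monomial_eq, map_mul, algHom_C, Polynomial.algebraMap_eq, Finsupp.prod_fintype _ _ (by simp), map_prod]
    refine (Polynomial.natDegree_C_mul_le _ _).trans ?_
    refine (Polynomial.natDegree_prod_le _ _).trans ?_
    rw [← hdeg, Finset.sum_mul]
    apply Finset.sum_le_sum
    intro i _
    simp only [map_pow, aeval_X]
    exact Polynomial.natDegree_pow_le.trans (Nat.mul_le_mul_left _ (hd i))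
  set E := (edgeF F).ncard with hE
  have hEd : E ≤ d := by
    have h1 := std_lower F (d + 3)
    rw [← (hfr (d+3)).1, ← hE] at h1
    haveI := hTf ((d+3) * d + 1)
    have h2 := Submodule.finrank_mono (hRT (d+3))
    rw [hTfin] at h2
    by_contra hcon
    push Not at hcon
    have h3 : (d+1) * (d + 3 - 1) ≤ E * (d + 3 - 1) := Nat.mul_le_mul_right _ hcon
    have h4 : d + 3 - 1 = d + 2 := by omega
    rw [h4] at h1 h3
    nlinarith
  have hE1 : 1 ≤ E := by
    rw [hE, Nat.one_le_iff_ne_zero, Ne, Set.ncard_eq_zero (Set.toFinite _), ← Ne, ← Set.nonempty_iff_ne_empty]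
    exact ⟨_, he, Finset.card_pair hl1⟩
  obtain ⟨k, hk1, hk⟩ := count_lemma g b hb d (hE1.trans hEd) m hm hm0
    (fun p hp i => habs_lemma hπa hG hπ hsmooth l1 f hft hf g b Z hZ hb hx d hd m hm hm0 p hp i)
  have hTR : Polynomial.degreeLT K (k * d + 1) ≤ RR g k := by
    intro p hp
    apply hk
    rw [Polynomial.mem_degreeLT] at hp
    rw [Polynomial.natDegree_le_iff_degree_le]
    exact Order.lt_succ_iff.1 (by exact_mod_cast hp)
  haveI := (hfr k).2
  have h1 := Submodule.finrank_mono hTR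
  rw [hTfin, (hfr k).1] at h1
  have h2 := std_upper hG k hk1
  rw [← hE] at h2
  obtain ⟨j, rfl⟩ := Nat.exists_eq_add_of_le hk1
  rw [show 1 + j - 1 = j by omega] at h2
  have h3 : j * E ≤ j * d := Nat.mul_le_mul_left _ hEd
  rw [add_mul, one_mul] at h1
  rw [mul_comm E j] at h2
  omega
end A12


lemma graph_adj {n : ℕ} (Δ : SComplex n) (i j : Fin (n+1)) :
    Δ.graph.Adj i j ↔ i ≠ j ∧ ({i, j} : Finset (Fin (n+1))) ∈ Δ.faces := by
  rw [SComplex.graph, SimpleGraph.fromRel_adj, Finset.pair_comm j i, or_self]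

lemma edge_card_le {n : ℕ} (Δ : SComplex n) : Nat.card Δ.graph.edgeSet ≤ (edgeF Δ.faces).ncard := by
  classical
  rw [Nat.card_coe_set_eq]
  refine Set.ncard_le_ncard_of_injOn Sym2.toFinset ?_ ?_ (Set.toFinite _)
  · intro e he
    induction e with
    | h i j =>
      rw [SimpleGraph.mem_edgeSet, graph_adj] at he
      have e : s(i, j).toFinset = {i, j} := by ext; simp
      rw [e]
      exact ⟨he.2, Finset.card_pair he.1⟩
  · intro e _ e' _ h
    apply Sym2.ext
    intro x
    rw [← Sym2.mem_toFinset, h, Sym2.mem_toFinset]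

/-- Let `K` be an algebraically closed field, `<` a monomial order with
`X_0 > ⋯ > X_n`, and `I` a homogeneous ideal whose initial ideal is the Stanley–Reisner ideal
of a graph `Δ` on `{0, …, n}` having every `i` as a vertex.  If `X = V(I) ⊆ ℙⁿ` is a connected
projective curve (the coordinate ring `S/I` has Krull dimension `2`) which is nonsingular
(every point of `X` is a nonsingular point, i.e. the Jacobian criterion rank `n - 1` holds),
then `Δ` is a tree. -/
theorem tree_of_smooth_connected_curve {K : Type*} [Field K] [IsAlgClosed K] {n : ℕ}
    (m : MonomialOrder (Fin (n + 1))) (hm : m.Descending)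
    (Δ : SComplex n) (hgraph : Δ.IsGraph)
    (hvert : ∀ i : Fin (n + 1), ({i} : Finset (Fin (n + 1))) ∈ Δ.faces)
    (I : Ideal (MvPolynomial (Fin (n + 1)) K)) (hI : IsHomog I)
    (hin : initialIdeal m I = Δ.srIdeal K)
    (hcurve : ringKrullDim (MvPolynomial (Fin (n + 1)) K ⧸ I) = 2)
    (hconn : IsConnectedProjVariety I)
    (hsmooth : ∀ x ∈ projZeros I, jacobianRank I x = n - 1) :
    Δ.graph.IsTree := by
  obtain ⟨w, hG⟩ := exists_good hin hm hgraph hvert hI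
  have hrad := radical_of_good hG hin
  have hprime : I.IsPrime := prime_of_smooth hI hrad hconn hsmooth
  let π : MvPolynomial (Fin (n + 1)) K →ₐ[K] FractionRing (MvPolynomial (Fin (n + 1)) K ⧸ I) :=
    (IsScalarTower.toAlgHom K (MvPolynomial (Fin (n + 1)) K ⧸ I) _).comp (Ideal.Quotient.mkₐ K I)
  have hπa : ∀ P, algebraMap (MvPolynomial (Fin (n + 1)) K ⧸ I)
    (FractionRing (MvPolynomial (Fin (n + 1)) K ⧸ I)) (Ideal.Quotient.mk I P) = π P := fun P => rfl
  have hπ : ∀ P, π P = 0 ↔ P ∈ I := by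
    intro P
    rw [← hπa, FaithfulSMul.algebraMap_eq_zero_iff, Ideal.Quotient.eq_zero_iff_mem]
  have hn : 1 ≤ n := by
    obtain ⟨s, _, hs⟩ := hgraph.2
    have := Finset.card_le_univ s
    rw [Fintype.card_fin] at this
    omega
  have hcount : (edgeF Δ.faces).ncard + 1 ≤ n + 1 := by
    refine edge_count hπa hG hπ hsmooth ⟨n - 1, by omega⟩ ?_ ?_
    · intro h
      have := congrArg Fin.val h
      simp at this
      omega
    · intro j hj
      rw [Fin.le_def]
      have h1 := j.2
      have h2 : (j : ℕ) ≠ n := fun h => hj (Fin.ext h)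
      simp only
      omega
  have hreach : ∀ (k : ℕ) (j : Fin (n+1)), n - (j : ℕ) = k → Δ.graph.Reachable j (Fin.last n) := by
    intro k
    induction k using Nat.strong_induction_on with
    | _ k ih =>
      intro j hj
      by_cases hjl : j = Fin.last n
      · rw [hjl]
      · obtain ⟨l, hl, he⟩ := exists_neighbor hG hπ j hjl
        have h1 : (j : ℕ) < l := hl
        have h2 := l.2
        refine SimpleGraph.Reachable.trans ?_ (ih (n - (l : ℕ)) (by omega) l rfl)
        exact SimpleGraph.Adj.reachable ((graph_adj Δ j l).2 ⟨hl.ne, he⟩)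
  have hc : Δ.graph.Connected := by
    haveI : Nonempty (Fin (n+1)) := ⟨0⟩
    refine ⟨fun u v => (hreach _ u rfl).trans (hreach _ v rfl).symm⟩
  rw [SimpleGraph.isTree_iff_connected_and_card]
  refine ⟨hc, le_antisymm ?_ hc.card_vert_le_card_edgeSet_add_one⟩
  rw [Nat.card_eq_fintype_card (α := Fin (n+1)), Fintype.card_fin]
  have := edge_card_le Δ
  omega
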